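/- arXiv:1009.2944 — 2 statements merged into one kernel-verified Lean document; each statement's English description precedes it below -/
import Mathlib

section
/- There exist infinitely many positive integers n such that P⁺(g(n)) > log g(n). -/
/-- Landau's function: the maximal order of a permutation of the symmetric group on `n` letters. -/
noncomputable def landau (n : ℕ) : ℕ :=
  Finset.univ.sup fun σ : Equiv.Perm (Fin n) => orderOf σ

/-- The largest prime factor of `m` (0 if `m` has no prime factor). -/
def maxPrimeFac (m : ℕ) : ℕ := m.primeFactors.sup id


open Filter Topology Set Asymptotics

open scoped ComplexOrder in
lemma propagate {H : ℂ → ℂ} {U : Set ℂ} (hU : IsOpen U) (hH : DifferentiableOn ℂ H U)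
    {a b : ℝ} (hab : a ≤ b) (hseg : ∀ t ∈ Icc a b, (t : ℂ) ∈ U)
    (h0 : ∀ n, 0 ≤ iteratedDeriv n H a) : ∀ n, 0 ≤ iteratedDeriv n H b := by
  have hd : ∀ n, DifferentiableOn ℂ (iteratedDeriv n H) U := by
    intro n
    induction n with
    | zero => simpa using hH
    | succ n ih =>
      rw [iteratedDeriv_succ]
      exact ih.deriv hU
  have hadd : ∀ m n, iteratedDeriv m (iteratedDeriv n H) = iteratedDeriv (m + n) H := by
    intro m n
    induction m with
    | zero => simp
    | succ m ih => rw [iteratedDeriv_succ, ih, show m + 1 + n = (m + n) + 1 by ring,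
        iteratedDeriv_succ]
  have key : Icc a b ⊆ {t : ℝ | ∀ n, 0 ≤ iteratedDeriv n H (t : ℂ)} := by
    apply IsClosed.Icc_subset_of_forall_exists_gt
    · have : {t : ℝ | ∀ n, 0 ≤ iteratedDeriv n H (t : ℂ)} ∩ Icc a b =
        ⋂ n, (Icc a b ∩ (fun t : ℝ => iteratedDeriv n H (t : ℂ)) ⁻¹' (Ici 0)) := by
        ext t
        simp only [mem_inter_iff, mem_iInter, mem_preimage, mem_Ici, mem_ofPred_eq]
        constructor
        · rintro ⟨h1, h2⟩ n; exact ⟨h2, h1 n⟩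
        · intro h; exact ⟨fun n => (h n).2, (h 0).1⟩
      rw [this]
      refine isClosed_iInter fun n => ?_
      refine ContinuousOn.preimage_isClosed_of_isClosed ?_ isClosed_Icc isClosed_Ici
      exact (hd n).continuousOn.comp Complex.continuous_ofReal.continuousOn (fun t ht => hseg t ht)
    · exact h0
    · rintro x ⟨hx, hx2⟩ y hy
      obtain ⟨r, hr, hball⟩ := Metric.isOpen_iff.mp hU x (hseg x ⟨hx2.1, hx2.2.le⟩)
      have hy' : x < y := hy
      refine ⟨min y (x + r / 2), ?_, ?_, min_le_left _ _⟩
      · intro n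
        refine DifferentiableOn.nonneg_of_iteratedDeriv_nonneg ((hd n).mono hball) (fun m => ?_)
          (z := ((min y (x + r / 2) : ℝ) : ℂ)) ?_ ?_
        · rw [hadd]; exact hx _
        · exact_mod_cast le_min hy'.le (by linarith)
        · rw [Metric.mem_ball, Complex.dist_eq, ← Complex.ofReal_sub, Complex.norm_real,
            Real.norm_eq_abs, abs_lt]
          have h1 := min_le_right y (x + r / 2)
          have h2 : x ≤ min y (x + r / 2) := le_min hy'.le (by linarith)
          constructor <;> linarith
      · exact lt_min hy' (by linarith)
  exact key ⟨hab, le_rfl⟩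

structure GoodFn (f : ℝ → ℝ) : Prop where
  loc : MeasureTheory.LocallyIntegrableOn f (Ioi 0) MeasureTheory.volume
  zero : ∀ t, t ≤ 1 → f t = 0
  nonneg : ∀ t, 0 ≤ f t
  growth : ∀ ε : ℝ, 0 < ε → f =O[atTop] (fun t : ℝ => t ^ (1 + ε))

lemma GoodFn.mul_log {f : ℝ → ℝ} (hf : GoodFn f) : GoodFn (fun t => Real.log t * f t) where
  loc := by
    have : ContinuousOn Real.log (Ioi 0) :=
      Real.continuousOn_log.mono (fun x hx => (ne_of_gt hx : x ≠ 0))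
    exact hf.loc.continuousOn_mul this (isOpen_Ioi.isLocallyClosed)
  zero := fun t ht => by simp [hf.zero t ht]
  nonneg := fun t => by
    rcases le_total t 1 with h | h
    · simp [hf.zero t h]
    · exact mul_nonneg (Real.log_nonneg h) (hf.nonneg t)
  growth := fun ε hε => by
    have h1 : Real.log =O[atTop] (fun t : ℝ => t ^ (ε / 2)) :=
      (isLittleO_log_rpow_atTop (by positivity)).isBigO
    have h2 := h1.mul (hf.growth (ε / 2) (by positivity))
    refine h2.congr' EventuallyEq.rfl ?_
    filter_upwards [eventually_gt_atTop 0] with t ht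
    rw [← Real.rpow_add ht]; congr 1; ring

lemma GoodFn.hasDerivAt {f : ℝ → ℝ} (hf : GoodFn f) {w : ℂ} (hw : w.re < -1) :
    MellinConvergent (fun t => (f t : ℂ)) w ∧
    HasDerivAt (mellin (fun t => (f t : ℂ))) (mellin (fun t => ((Real.log t * f t : ℝ) : ℂ)) w) w := by
  have hloc : MeasureTheory.LocallyIntegrableOn (fun t => (f t : ℂ)) (Ioi 0) MeasureTheory.volume := by
    intro x hx
    obtain ⟨u, hu, hu2⟩ := hf.loc x hx
    exact ⟨u, hu, hu2.ofReal⟩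
  have htop : (fun t => (f t : ℂ)) =O[atTop] (fun t : ℝ => t ^ (-((w.re - 1) / 2))) := by
    have := hf.growth ((-1 - w.re) / 2) (by linarith)
    rw [← isBigO_norm_left] at this ⊢
    refine (this.congr_left fun t => by simp).congr_right fun t => ?_
    congr 1; ring
  have hbot : (fun t => (f t : ℂ)) =O[𝓝[>] 0] (fun t : ℝ => t ^ (-(w.re - 1))) := by
    have : (fun t => (f t : ℂ)) =ᶠ[𝓝[>] 0] (fun _ => (0 : ℂ)) := by
      have : Iio (1 : ℝ) ∈ 𝓝[>] (0 : ℝ) := mem_nhdsWithin_of_mem_nhds (Iio_mem_nhds one_pos)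
      filter_upwards [this] with t ht
      simp [hf.zero t (le_of_lt ht)]
    exact this.trans_isBigO (isBigO_zero _ _)
  refine ⟨mellinConvergent_of_isBigO_rpow hloc htop (by linarith) hbot (by linarith), ?_⟩
  have := (mellin_hasDerivAt_of_isBigO_rpow (s := w) hloc htop (by linarith) hbot (by linarith)).2
  have e : (fun t : ℝ => ((Real.log t * f t : ℝ) : ℂ)) = fun t => Real.log t • (f t : ℂ) := by
    funext t; simp
  rw [e]; exact this

open scoped ComplexOrder in
lemma GoodFn.iteratedDeriv_nonneg (n : ℕ) : ∀ {f : ℝ → ℝ} (_ : GoodFn f) {w : ℝ} (_ : w < -1),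
    0 ≤ iteratedDeriv n (mellin (fun t => (f t : ℂ))) (w : ℂ) := by
  induction n with
  | zero =>
    intro f hf w hw
    rw [iteratedDeriv_zero, mellin]
    have : ∀ t ∈ Ioi (0 : ℝ), (t : ℂ) ^ ((w : ℂ) - 1) • (f t : ℂ) = ((t ^ (w - 1) * f t : ℝ) : ℂ) := by
      intro t ht
      rw [smul_eq_mul]; push_cast
      rw [Complex.ofReal_cpow (le_of_lt ht)]; push_cast; rfl
    rw [MeasureTheory.setIntegral_congr_fun measurableSet_Ioi this, integral_complex_ofReal]
    have : 0 ≤ ∫ t in Ioi (0 : ℝ), t ^ (w - 1) * f t :=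
      MeasureTheory.setIntegral_nonneg measurableSet_Ioi
        (fun t ht => mul_nonneg (Real.rpow_nonneg (le_of_lt ht) _) (hf.nonneg t))
    exact_mod_cast this
  | succ n ih =>
    intro f hf w hw
    rw [iteratedDeriv_succ']
    have : deriv (mellin (fun t => (f t : ℂ))) =ᶠ[𝓝 (w : ℂ)]
        mellin (fun t => ((Real.log t * f t : ℝ) : ℂ)) := by
      have : {z : ℂ | z.re < -1} ∈ 𝓝 (w : ℂ) :=
        (isOpen_lt Complex.continuous_re continuous_const).mem_nhds (by simpa using hw)
      filter_upwards [this] with z hz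
      exact (hf.hasDerivAt hz).2.deriv
    rw [this.iteratedDeriv_eq]
    exact ih hf.mul_log hw

noncomputable def pc (n : ℕ) : ℝ := if n.Prime then Real.log n else 0
noncomputable def qc (n : ℕ) : ℝ := if n.Prime then 0 else ArithmeticFunction.vonMangoldt n

lemma pc_nonneg (n : ℕ) : 0 ≤ pc n := by
  unfold pc; split_ifs
  · exact Real.log_natCast_nonneg n
  · exact le_rfl

lemma qc_nonneg (n : ℕ) : 0 ≤ qc n := by
  unfold qc; split_ifs
  · exact le_rfl
  · exact ArithmeticFunction.vonMangoldt_nonneg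

lemma vm_eq (n : ℕ) : ArithmeticFunction.vonMangoldt n = pc n + qc n := by
  unfold pc qc; split_ifs with h
  · simp [ArithmeticFunction.vonMangoldt_apply_prime h]
  · simp

lemma sum_pc (x : ℝ) : ∑ k ∈ Finset.Icc 1 ⌊x⌋₊, pc k = Chebyshev.theta x := by
  unfold pc Chebyshev.theta
  rw [← Finset.sum_filter]; rfl

lemma sum_qc (x : ℝ) : ∑ k ∈ Finset.Icc 1 ⌊x⌋₊, qc k = Chebyshev.psi x - Chebyshev.theta x := by
  rw [Chebyshev.psi_sub_theta_eq_sum_not_prime, Finset.sum_filter]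
  unfold qc
  refine Finset.sum_congr rfl fun n _ => ?_
  split_ifs <;> rfl

lemma pc_bigO : (fun n : ℕ => ∑ k ∈ Finset.Icc 1 n, pc k) =O[atTop] fun n => (n : ℝ) ^ (1 : ℝ) := by
  refine IsBigO.of_bound (Real.log 4) (Eventually.of_forall fun n => ?_)
  have := sum_pc n
  rw [Nat.floor_natCast] at this
  rw [this, Real.rpow_one, Real.norm_of_nonneg (Chebyshev.theta_nonneg _),
    Real.norm_of_nonneg (Nat.cast_nonneg n)]
  exact Chebyshev.theta_le_log4_mul_x (Nat.cast_nonneg n)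

lemma qc_bigO : (fun n : ℕ => ∑ k ∈ Finset.Icc 1 n, qc k) =O[atTop]
    fun n => (n : ℝ) ^ (1 / 2 : ℝ) := by
  have h := Chebyshev.isBigO_psi_sub_theta_sqrt.comp_tendsto (tendsto_natCast_atTop_atTop (R := ℝ))
  refine (h.congr_left fun n => ?_).congr_right fun n => ?_
  · have := sum_qc n
    rw [Nat.floor_natCast] at this
    simp [this]
  · simp [Real.sqrt_eq_rpow]

lemma pc_summable {s : ℂ} (hs : 1 < s.re) : LSeriesSummable (fun n => (pc n : ℂ)) s :=
  LSeriesSummable_of_sum_norm_bigO_and_nonneg pc_bigO pc_nonneg zero_le_one hs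

lemma qc_summable {s : ℂ} (hs : 1 / 2 < s.re) : LSeriesSummable (fun n => (qc n : ℂ)) s :=
  LSeriesSummable_of_sum_norm_bigO_and_nonneg qc_bigO qc_nonneg (by norm_num) hs

noncomputable def PP (s : ℂ) : ℂ := LSeries (fun n => (pc n : ℂ)) s
noncomputable def QQ (s : ℂ) : ℂ := LSeries (fun n => (qc n : ℂ)) s

lemma QQ_diff {s : ℂ} (hs : 1 / 2 < s.re) : DifferentiableAt ℂ QQ s := by
  have h : LSeries.abscissaOfAbsConv (fun n => (qc n : ℂ)) ≤ ((1 / 2 : ℝ) : EReal) :=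
    LSeries.abscissaOfAbsConv_le_of_forall_lt_LSeriesSummable fun y hy =>
      qc_summable (by simpa using hy)
  exact (LSeries_hasDerivAt (h.trans_lt (by exact_mod_cast hs))).differentiableAt

lemma zeta1_ne_zero {s : ℂ} (hs : 1 ≤ s.re) : riemannZeta₁ s ≠ 0 := by
  rcases eq_or_ne s 1 with rfl | h
  · simp
  · have h1 := riemannZeta_ne_zero_of_one_le_re hs
    rw [riemannZeta_eq_inv_sub_mul h] at h1
    exact right_ne_zero_of_mul h1

lemma PP_add_QQ {s : ℂ} (hs : 1 < s.re) :
    PP s + QQ s = 1 / (s - 1) - deriv riemannZeta₁ s / riemannZeta₁ s := by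
  have h1 : s ≠ 1 := by rintro rfl; simp at hs
  have h2 : s - 1 ≠ 0 := sub_ne_zero_of_ne h1
  have h3 := zeta1_ne_zero hs.le
  have h4 := ArithmeticFunction.LSeries_vonMangoldt_eq_deriv_riemannZeta_div hs
  have h5 : LSeries (fun n => ((ArithmeticFunction.vonMangoldt n : ℝ) : ℂ)) s = PP s + QQ s := by
    unfold PP QQ
    rw [← LSeries_add (pc_summable hs) (qc_summable (by linarith))]
    congr 1; funext n; rw [vm_eq]; simp
  rw [← h5, h4, riemannZeta_eq_inv_sub_mul h1, deriv_riemannZeta_eq_neg_inv_sub_sq_mul_add h1]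
  field_simp
  ring

lemma theta_good : GoodFn Chebyshev.theta where
  loc := Chebyshev.theta_mono.locallyIntegrable.locallyIntegrableOn _
  zero := fun t ht => Chebyshev.theta_eq_zero_of_le_one ht
  nonneg := Chebyshev.theta_nonneg
  growth := fun ε hε => by
    have h1 : Chebyshev.theta =O[atTop] (fun t : ℝ => t) := by
      refine IsBigO.of_bound (Real.log 4) ?_
      filter_upwards [eventually_ge_atTop 0] with t ht
      rw [Real.norm_of_nonneg (Chebyshev.theta_nonneg _), Real.norm_of_nonneg ht]
      exact Chebyshev.theta_le_log4_mul_x ht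
    refine h1.trans ?_
    refine IsBigO.of_bound 1 ?_
    filter_upwards [eventually_ge_atTop 1] with t ht
    rw [one_mul, Real.norm_of_nonneg (by linarith), Real.norm_of_nonneg (by positivity)]
    exact Real.self_le_rpow_of_one_le ht (by linarith)

noncomputable def ff (c K : ℝ) : ℝ → ℝ :=
  (Ioi 1).indicator (fun t => Chebyshev.theta t - t + c * t ^ (1 / 2 : ℝ) + K)

lemma ff_good {c K : ℝ} (h : ∀ t : ℝ, 1 ≤ t → 0 ≤ Chebyshev.theta t - t + c * t ^ (1 / 2 : ℝ) + K) :
    GoodFn (ff c K) where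
  loc := by
    apply MeasureTheory.LocallyIntegrable.locallyIntegrableOn
    apply MeasureTheory.LocallyIntegrable.indicator _ measurableSet_Ioi
    have : Continuous (fun t : ℝ => - t + c * t ^ (1 / 2 : ℝ) + K) := by
      have : Continuous (fun t : ℝ => t ^ (1 / 2 : ℝ)) := Real.continuous_rpow_const (by norm_num)
      fun_prop
    have h2 := Chebyshev.theta_mono.locallyIntegrable.add (this.locallyIntegrable
      (μ := MeasureTheory.volume))
    have e : (fun t => Chebyshev.theta t - t + c * t ^ (1 / 2 : ℝ) + K) =
        Chebyshev.theta + (fun t : ℝ => - t + c * t ^ (1 / 2 : ℝ) + K) := by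
      funext t; simp only [Pi.add_apply]; ring
    rw [e]; exact h2
  zero := fun t ht => by simp [ff, ht]
  nonneg := fun t => by
    unfold ff
    apply indicator_nonneg
    intro x hx; exact h x (le_of_lt hx)
  growth := fun ε hε => by
    have h0 := theta_good.growth ε hε
    have aux : ∀ a : ℝ, a ≤ 1 → (fun t : ℝ => t ^ a) =O[atTop] (fun t : ℝ => t ^ (1 + ε)) := by
      intro a ha
      refine IsBigO.of_bound 1 ?_
      filter_upwards [eventually_ge_atTop 1] with t ht
      rw [one_mul, Real.norm_of_nonneg (by positivity), Real.norm_of_nonneg (by positivity)]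
      exact Real.rpow_le_rpow_of_exponent_le ht (by linarith)
    have h1 : (fun t : ℝ => t) =O[atTop] (fun t : ℝ => t ^ (1 + ε)) := by simpa using aux 1 le_rfl
    have h2 := (aux (1 / 2) (by norm_num)).const_mul_left c
    have h3 : (fun t : ℝ => K) =O[atTop] (fun t : ℝ => t ^ (1 + ε)) := by
      simpa using (aux 0 (by norm_num)).const_mul_left K
    have h4 := ((h0.sub h1).add h2).add h3
    refine h4.congr' ?_ EventuallyEq.rfl
    filter_upwards [eventually_gt_atTop 1] with t ht
    simp [ff, ht]

lemma mellin_ff {c K : ℝ} {s : ℂ} (hs : 1 < s.re) :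
    mellin (fun t => (ff c K t : ℂ)) (-s) =
      PP s / s - 1 / (s - 1) + c / (s - 1 / 2) + K / s := by
  have hs0 : s ≠ 0 := by rintro rfl; simp at hs; linarith
  have hsub : Ioi (1 : ℝ) ⊆ Ioi 0 := Ioi_subset_Ioi zero_le_one
  have e1 : mellin (fun t => (ff c K t : ℂ)) (-s) =
      ∫ t in Ioi (1 : ℝ), ((Chebyshev.theta t : ℂ) * (t : ℂ) ^ (-(s + 1)) - (t : ℂ) ^ (-s)
        + c * (t : ℂ) ^ (-s - 1 / 2) + K * (t : ℂ) ^ (-s - 1)) := by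
    unfold mellin
    rw [← MeasureTheory.integral_indicator measurableSet_Ioi,
      ← MeasureTheory.integral_indicator measurableSet_Ioi]
    congr 1
    funext t
    by_cases ht : t ∈ Ioi (1 : ℝ)
    · rw [indicator_of_mem (hsub ht), indicator_of_mem ht]
      simp only [ff, indicator_of_mem ht]
      have ht0 : (0 : ℝ) < t := hsub ht
      have htc : (t : ℂ) ≠ 0 := by exact_mod_cast ht0.ne'
      have a1 : (t : ℂ) ^ (-s) = (t : ℂ) ^ (-s - 1) * t := by
        nth_rewrite 3 [← Complex.cpow_one (t : ℂ)]
        rw [← Complex.cpow_add _ _ htc]; congr 1; ring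
      have a2 : (t : ℂ) ^ (-s - 1 / 2) = (t : ℂ) ^ (-s - 1) * ((t ^ (1 / 2 : ℝ) : ℝ) : ℂ) := by
        rw [Complex.ofReal_cpow ht0.le, ← Complex.cpow_add _ _ htc]; congr 1; push_cast; ring
      rw [a1, a2, show -(s + 1) = -s - 1 by ring, smul_eq_mul]
      push_cast; ring
    · rw [indicator_of_notMem ht, indicator]; simp only [ff, indicator_of_notMem ht]; simp
  have i1 : MeasureTheory.IntegrableOn
      (fun t : ℝ => (Chebyshev.theta t : ℂ) * (t : ℂ) ^ (-(s + 1))) (Ioi 1) := by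
    have := (theta_good.hasDerivAt (w := -s) (by simpa using hs)).1
    unfold MellinConvergent at this
    refine (this.mono_set hsub).congr_fun (fun t _ => ?_) measurableSet_Ioi
    simp only [smul_eq_mul]
    rw [show -(s + 1) = -s - 1 by ring]; ring
  have i2 : MeasureTheory.IntegrableOn (fun t : ℝ => (t : ℂ) ^ (-s)) (Ioi 1) :=
    integrableOn_Ioi_cpow_of_lt (by simpa using hs) one_pos
  have r3 : (-s - 1 / 2).re < -1 := by
    have : (1 / 2 : ℂ) = ((1 / 2 : ℝ) : ℂ) := by push_cast; rfl
    rw [Complex.sub_re, Complex.neg_re, this, Complex.ofReal_re]; linarith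
  have r4 : (-s - 1).re < -1 := by simp; linarith
  have i3 : MeasureTheory.IntegrableOn (fun t : ℝ => c * (t : ℂ) ^ (-s - 1 / 2)) (Ioi 1) :=
    (integrableOn_Ioi_cpow_of_lt r3 one_pos).const_mul _
  have i4 : MeasureTheory.IntegrableOn (fun t : ℝ => K * (t : ℂ) ^ (-s - 1)) (Ioi 1) :=
    (integrableOn_Ioi_cpow_of_lt r4 one_pos).const_mul _
  have i12 : MeasureTheory.IntegrableOn (fun t : ℝ => (Chebyshev.theta t : ℂ) * (t : ℂ) ^ (-(s + 1))
      - (t : ℂ) ^ (-s)) (Ioi 1) := i1.sub i2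
  have i123 : MeasureTheory.IntegrableOn (fun t : ℝ => (Chebyshev.theta t : ℂ) * (t : ℂ) ^ (-(s + 1))
      - (t : ℂ) ^ (-s) + c * (t : ℂ) ^ (-s - 1 / 2)) (Ioi 1) := i12.add i3
  rw [e1, MeasureTheory.integral_add i123 i4,
    MeasureTheory.integral_add i12 i3, MeasureTheory.integral_sub i1 i2,
    MeasureTheory.integral_const_mul, MeasureTheory.integral_const_mul,
    integral_Ioi_cpow_of_lt r3 one_pos, integral_Ioi_cpow_of_lt r4 one_pos,
    integral_Ioi_cpow_of_lt (by simpa using hs) one_pos]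
  have hP : PP s = s * ∫ t in Ioi (1 : ℝ), (Chebyshev.theta t : ℂ) * (t : ℂ) ^ (-(s + 1)) := by
    unfold PP
    rw [LSeries_eq_mul_integral_of_nonneg pc zero_le_one hs pc_bigO pc_nonneg]
    congr 2; funext t
    rw [← sum_pc]; push_cast; rfl
  rw [hP, mul_div_cancel_left₀ _ hs0]
  have n1 : s - 1 ≠ 0 := by
    intro h; rw [sub_eq_zero] at h; rw [h] at hs; simp at hs
  have n2 : s - 1 / 2 ≠ 0 := by
    intro h; rw [sub_eq_zero] at h; rw [h] at hs; norm_num at hs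
  have n3 : -s + 1 ≠ 0 := by intro h; apply n1; linear_combination -h
  have n4 : -s - 1 / 2 + 1 ≠ 0 := by intro h; apply n2; linear_combination -h
  have n5 : -s - 1 + 1 ≠ 0 := by intro h; apply hs0; linear_combination -h
  simp only [Complex.ofReal_one, Complex.one_cpow]
  rw [show -s + 1 = -(s - 1) by ring, show -s - 1 / 2 + 1 = -(s - 1 / 2) by ring,
    show -s - 1 + 1 = - s by ring]
  simp only [neg_div_neg_eq]
  ring

noncomputable def FF (c K : ℝ) (s : ℂ) : ℂ :=
  (-(deriv riemannZeta₁ s / riemannZeta₁ s) - QQ s - 1 + K) / s + c / (s - 1 / 2)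

lemma mellin_ff_eq_FF {c K : ℝ} {s : ℂ} (hs : 1 < s.re) :
    mellin (fun t => (ff c K t : ℂ)) (-s) = FF c K s := by
  have hs0 : s ≠ 0 := by rintro rfl; simp at hs; linarith
  have n1 : s - 1 ≠ 0 := by
    intro h; rw [sub_eq_zero] at h; rw [h] at hs; simp at hs
  rw [mellin_ff hs, FF, show PP s = 1 / (s - 1) - deriv riemannZeta₁ s / riemannZeta₁ s - QQ s by
    rw [← PP_add_QQ hs]; ring]
  have : 1 / (s - 1) / s - 1 / (s - 1) = - 1 / s := by field_simp; ring
  linear_combination this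

lemma FF_diff {c K : ℝ} : DifferentiableOn ℂ (FF c K) {s | 1 / 2 < s.re ∧ riemannZeta₁ s ≠ 0} := by
  rintro s ⟨h1, h2⟩
  apply DifferentiableAt.differentiableWithinAt
  have hs0 : s ≠ 0 := by rintro rfl; simp at h1; linarith
  have n2 : s - 1 / 2 ≠ 0 := by
    intro h; rw [sub_eq_zero] at h; rw [h] at h1; norm_num at h1
  have := QQ_diff h1
  have d1 : DifferentiableAt ℂ riemannZeta₁ s := differentiable_riemannZeta₁ s
  have d2 : DifferentiableAt ℂ (deriv riemannZeta₁) s := differentiable_riemannZeta₁.deriv s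
  unfold FF
  fun_prop (disch := assumption)

open scoped ComplexOrder in
lemma FF_nonneg {c K : ℝ}
    (h : ∀ t : ℝ, 1 ≤ t → 0 ≤ Chebyshev.theta t - t + c * t ^ (1 / 2 : ℝ) + K)
    {β : ℝ} (hβ : 1 / 2 ≤ β) (hz : ∀ x : ℝ, β < x → riemannZeta₁ x ≠ 0) {x : ℝ} (hx : β < x) :
    0 ≤ FF c K x := by
  set U : Set ℂ := {w | 1 / 2 < (-w).re ∧ riemannZeta₁ (-w) ≠ 0} with hUdef
  have hU : IsOpen U := by
    apply IsOpen.inter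
    · exact isOpen_lt continuous_const (Complex.continuous_re.comp continuous_neg)
    · exact isOpen_ne.preimage (differentiable_riemannZeta₁.continuous.comp continuous_neg)
  have hd : DifferentiableOn ℂ (fun w => FF c K (-w)) U :=
    FF_diff.comp differentiable_neg.differentiableOn (fun w hw => hw)
  have key := propagate hU hd (a := min (-2) (-x)) (b := -x) (min_le_right _ _) ?_ ?_ 0
  · simpa using key
  · rintro t ⟨_, ht⟩
    refine ⟨?_, ?_⟩
    · simp only [Complex.neg_re, Complex.ofReal_re]; linarith
    · have := hz (-t) (by linarith)
      simpa using this
  · intro n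
    have hlt : min (-2) (-x) < -1 := (min_le_left _ _).trans_lt (by norm_num)
    have := (ff_good h).iteratedDeriv_nonneg n hlt
    rwa [Filter.EventuallyEq.iteratedDeriv_eq] at this
    have hm : {z : ℂ | z.re < -1} ∈ 𝓝 ((min (-2) (-x) : ℝ) : ℂ) :=
        (isOpen_lt Complex.continuous_re continuous_const).mem_nhds (by simp)
    filter_upwards [hm] with z hz
    have := mellin_ff_eq_FF (c := c) (K := K) (s := -z) (by
      have : z.re < -1 := hz
      rw [Complex.neg_re]; linarith)
    rwa [neg_neg] at this

lemma re_LSeries_real {f : ℕ → ℝ} {x : ℝ} (hs : LSeriesSummable (fun n => (f n : ℂ)) x) :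
    Summable (fun n : ℕ => if n = 0 then 0 else f n / (n : ℝ) ^ x) ∧
    (LSeries (fun n => (f n : ℂ)) x).re = ∑' n : ℕ, (if n = 0 then 0 else f n / (n : ℝ) ^ x) := by
  have e : ∀ n : ℕ, LSeries.term (fun n => (f n : ℂ)) x n =
      ((if n = 0 then 0 else f n / (n : ℝ) ^ x : ℝ) : ℂ) := by
    intro n
    rw [LSeries.term_def]
    split_ifs with h
    · simp
    · push_cast
      rw [Complex.ofReal_cpow (Nat.cast_nonneg n)]; simp
  unfold LSeriesSummable at hs
  unfold LSeries
  simp_rw [e]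
  rw [funext e] at hs
  refine ⟨Complex.summable_ofReal.mp hs, ?_⟩
  rw [← Complex.ofReal_tsum, Complex.ofReal_re]

lemma re_QQ_nonneg {x : ℝ} (hx : 1 / 2 < x) : 0 ≤ (QQ x).re := by
  unfold QQ
  rw [(re_LSeries_real (qc_summable (s := x) (by simpa using hx))).2]
  refine tsum_nonneg fun n => ?_
  split_ifs
  · exact le_rfl
  · exact div_nonneg (qc_nonneg n) (by positivity)

lemma pc_le_qc_sq (n : ℕ) : pc n ≤ qc (n ^ 2) := by
  by_cases h : n.Prime
  · have h2 : ¬ (n ^ 2).Prime := Nat.Prime.not_prime_pow le_rfl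
    simp [pc, qc, h, h2, ArithmeticFunction.vonMangoldt_apply_pow two_ne_zero,
      ArithmeticFunction.vonMangoldt_apply_prime h]
  · simp only [pc, h, if_false]; exact qc_nonneg _

lemma re_PP_le_re_QQ {x : ℝ} (hx : 1 / 2 < x) : (PP ((2 * x : ℝ) : ℂ)).re ≤ (QQ x).re := by
  unfold QQ PP
  obtain ⟨s1, e1⟩ := re_LSeries_real (qc_summable (s := x) (by simpa using hx))
  obtain ⟨s2, e2⟩ := re_LSeries_real (pc_summable (s := ((2 * x : ℝ) : ℂ)) (by
    rw [Complex.ofReal_re]; linarith))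
  rw [e1, e2]
  refine Summable.tsum_le_tsum_of_inj (fun n : ℕ => n ^ 2)
    (Nat.pow_left_injective two_ne_zero) ?_ ?_ s2 s1
  · intro n _
    split_ifs
    · exact le_rfl
    · exact div_nonneg (qc_nonneg n) (by positivity)
  · intro n
    rcases eq_or_ne n 0 with rfl | hn
    · simp
    · simp only [hn, if_false, pow_eq_zero_iff, ne_eq, OfNat.ofNat_ne_zero, not_false_eq_true]
      rw [Real.rpow_mul (Nat.cast_nonneg n)]
      push_cast
      rw [Real.rpow_two]
      exact div_le_div_of_nonneg_right (pc_le_qc_sq n) (by positivity)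

lemma logDeriv_limit {β : ℝ} (hz : ∀ x : ℝ, β < x → riemannZeta₁ x ≠ 0) :
    ∃ m : ℕ, (riemannZeta₁ β = 0 → 1 ≤ m) ∧
      Tendsto (fun x : ℝ => (x - β) * (deriv riemannZeta₁ (x : ℂ) / riemannZeta₁ x).re)
        (𝓝[>] β) (𝓝 m) := by
  have han : AnalyticAt ℂ riemannZeta₁ (β : ℂ) := differentiable_riemannZeta₁.analyticAt _
  have hcr : Tendsto (fun x : ℝ => (x : ℂ)) (𝓝[>] β) (𝓝 (β : ℂ)) :=
    (Complex.continuous_ofReal.tendsto β).mono_left nhdsWithin_le_nhds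
  have hne : ¬ ∀ᶠ z in 𝓝 (β : ℂ), riemannZeta₁ z = 0 := by
    intro h
    have h2 := hcr.eventually h
    obtain ⟨x, hx, hx2⟩ := (h2.and self_mem_nhdsWithin).exists
    exact hz x hx2 hx
  obtain ⟨m, g, hg, hg0, hev⟩ := han.exists_eventuallyEq_pow_smul_nonzero_iff.mpr hne
  refine ⟨m, ?_, ?_⟩
  · intro h0
    by_contra hm
    have hm : m = 0 := by omega
    have := hev.self_of_nhds
    simp [hm, h0] at this
    exact hg0 this.symm
  have hlim : Tendsto (fun z : ℂ => (m : ℂ) + (z - β) * (deriv g z / g z)) (𝓝 (β : ℂ)) (𝓝 m) := by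
    have hc : ContinuousAt (fun z : ℂ => (m : ℂ) + (z - β) * (deriv g z / g z)) β := by
      have := hg.continuousAt
      have := hg.deriv.continuousAt
      fun_prop (disch := assumption)
    have := hc.tendsto
    simpa using this
  have h3 := (Complex.continuous_re.tendsto _).comp (hlim.comp hcr)
  simp only [Complex.natCast_re] at h3
  refine h3.congr' ?_
  have hgev : ∀ᶠ z in 𝓝 (β : ℂ), g z ≠ 0 := hg.continuousAt.eventually_ne hg0
  have hdev : deriv riemannZeta₁ =ᶠ[𝓝 (β : ℂ)] deriv (fun z => (z - β) ^ m • g z) :=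
    (show riemannZeta₁ =ᶠ[𝓝 (β : ℂ)] fun z => (z - β) ^ m • g z from hev).deriv
  filter_upwards [hcr.eventually hev, hcr.eventually hgev, hcr.eventually hdev,
    hcr.eventually hg.eventually_analyticAt, self_mem_nhdsWithin] with x h1 h2 h3 h4 h5
  have hx : (x : ℂ) - β ≠ 0 := by
    rw [sub_ne_zero]; exact_mod_cast (ne_of_gt h5)
  have hd : deriv (fun z : ℂ => (z - β) ^ m • g z) x =
      m * (x - β) ^ (m - 1) * g x + (x - β) ^ m * deriv g x := by
    have a1 : HasDerivAt (fun z : ℂ => (z - β) ^ m) (m * ((x : ℂ) - β) ^ (m - 1)) x := by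
      have a0 : HasDerivAt (fun z : ℂ => z - β) 1 (x : ℂ) := (hasDerivAt_id (x : ℂ)).sub_const (β : ℂ)
      simpa using a0.fun_pow m
    exact (a1.mul h4.differentiableAt.hasDerivAt).deriv
  have key : (m : ℂ) + ((x : ℂ) - β) * (deriv g x / g x) =
      ((x - β : ℝ) : ℂ) * (deriv riemannZeta₁ (x : ℂ) / riemannZeta₁ x) := by
    rw [h3, hd, h1, smul_eq_mul]
    push_cast
    rcases Nat.eq_zero_or_pos m with rfl | hm
    · simp
    · obtain ⟨k, rfl⟩ := Nat.exists_eq_succ_of_ne_zero hm.ne'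
      simp only [Nat.succ_eq_add_one, Nat.add_sub_cancel]
      field_simp
      ring
  have := congrArg Complex.re key
  rw [Complex.re_ofReal_mul] at this
  exact this

open scoped ComplexOrder in
theorem theta_oscillation {c K : ℝ} (hc : c < 1) :
    ¬ (∀ t : ℝ, 1 ≤ t → 0 ≤ Chebyshev.theta t - t + c * t ^ (1 / 2 : ℝ) + K) := by
  intro h
  obtain ⟨β, hβ, hz, hβz⟩ : ∃ β : ℝ, 1 / 2 ≤ β ∧ (∀ x : ℝ, β < x → riemannZeta₁ x ≠ 0) ∧
      (β = 1 / 2 ∨ (1 / 2 < β ∧ riemannZeta₁ β = 0)) := by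
    set Z : Set ℝ := insert (1 / 2) (Icc (1 / 2) 1 ∩ (fun x : ℝ => riemannZeta₁ x) ⁻¹' {0}) with hZ
    have hZc : IsCompact Z := by
      apply IsCompact.insert
      apply isCompact_Icc.inter_right
      exact isClosed_singleton.preimage
        (differentiable_riemannZeta₁.continuous.comp Complex.continuous_ofReal)
    obtain ⟨β, hβ, hmax⟩ := hZc.exists_isGreatest ⟨1 / 2, by simp [hZ]⟩
    have hβ2 : 1 / 2 ≤ β := hmax (by simp [hZ])
    refine ⟨β, hβ2, ?_, ?_⟩
    · intro x hx hx0
      rcases le_or_gt x 1 with h1 | h1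
      · have := hmax (show x ∈ Z from Or.inr ⟨⟨by linarith, h1⟩, hx0⟩)
        linarith
      · exact zeta1_ne_zero (by simpa using h1.le) hx0
    · rcases eq_or_lt_of_le hβ2 with e | e
      · exact Or.inl e.symm
      · rcases hβ with hb | hb
        · exact Or.inl hb
        · exact Or.inr ⟨e, hb.2⟩
  obtain ⟨m, hm, hlim⟩ := logDeriv_limit hz
  set L : ℝ → ℝ := fun x => (deriv riemannZeta₁ (x : ℂ) / riemannZeta₁ x).re with hL
  have hre : ∀ x : ℝ, β < x → 0 ≤ (-(L x) - (QQ x).re - 1 + K) / x + c / (x - 1 / 2) := by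
    intro x hx
    have h1 := FF_nonneg h hβ hz hx
    have h2 := (Complex.le_def.mp h1).1
    have e1 : (FF c K x) = (-(deriv riemannZeta₁ (x : ℂ) / riemannZeta₁ x) - QQ x - 1 + K) / (x : ℝ)
      + ((c / (x - 1 / 2) : ℝ) : ℂ) := by unfold FF; push_cast; rfl
    rw [e1, Complex.add_re, Complex.div_ofReal_re, Complex.ofReal_re] at h2
    simpa using h2
  have hid : Tendsto (fun x : ℝ => x) (𝓝[>] β) (𝓝 β) := tendsto_id.mono_left nhdsWithin_le_nhds
  have hsub : Tendsto (fun x : ℝ => (x - β) * (K - 1)) (𝓝[>] β) (𝓝 0) := by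
    have := (hid.sub_const β).mul_const (K - 1)
    simpa using this
  rcases hβz with hb | ⟨hb, hb0⟩
  · subst hb
    set R : ℝ → ℝ := fun x => (deriv riemannZeta₁ ((2 * x : ℝ) : ℂ) / riemannZeta₁ ((2 * x : ℝ) : ℂ)
      + QQ ((2 * x : ℝ) : ℂ)).re with hR
    have hRc : ContinuousAt R (1 / 2) := by
      have q1 : ContinuousAt QQ 1 := (QQ_diff (by norm_num)).continuousAt
      have q2 : ContinuousAt (fun s => deriv riemannZeta₁ s / riemannZeta₁ s + QQ s) 1 :=
        ((differentiable_riemannZeta₁.deriv.continuous.continuousAt).div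
          (differentiable_riemannZeta₁.continuous.continuousAt) (by simp)).add q1
      have q3 : ContinuousAt (fun x : ℝ => ((2 * x : ℝ) : ℂ)) (1 / 2) := by fun_prop
      have q4 := ContinuousAt.comp (f := fun x : ℝ => ((2 * x : ℝ) : ℂ)) (x := (1 / 2 : ℝ))
        (g := fun s => deriv riemannZeta₁ s / riemannZeta₁ s + QQ s) (by simpa using q2) q3
      exact Complex.continuous_re.continuousAt.comp q4
    have hRl : Tendsto (fun x : ℝ => (x - 1 / 2) * R x) (𝓝[>] (1 / 2)) (𝓝 0) := by
      have := (hid.sub_const (1 / 2)).mul (hRc.tendsto.mono_left nhdsWithin_le_nhds)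
      simpa using this
    have hQ : ∀ x : ℝ, 1 / 2 < x → 1 / 2 - (x - 1 / 2) * R x ≤ (x - 1 / 2) * (QQ x).re := by
      intro x hx
      have h1 := re_PP_le_re_QQ hx
      have h2 := PP_add_QQ (s := ((2 * x : ℝ) : ℂ)) (by rw [Complex.ofReal_re]; linarith)
      have h3 : (PP ((2 * x : ℝ) : ℂ)).re = 1 / (2 * x - 1) - R x := by
        have h4 : PP ((2 * x : ℝ) : ℂ) = ((1 / (2 * x - 1) : ℝ) : ℂ) -
          (deriv riemannZeta₁ ((2 * x : ℝ) : ℂ) / riemannZeta₁ ((2 * x : ℝ) : ℂ)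
            + QQ ((2 * x : ℝ) : ℂ)) := by
          rw [eq_sub_iff_add_eq, ← add_assoc, add_right_comm, h2]; push_cast; ring
        rw [h4, Complex.sub_re, Complex.ofReal_re]
      have hp : 0 < x - 1 / 2 := by linarith
      have h5 := mul_le_mul_of_nonneg_left h1 hp.le
      rw [h3, mul_sub] at h5
      have h6 : (x - 1 / 2) * (1 / (2 * x - 1)) = 1 / 2 := by
        have : 2 * x - 1 ≠ 0 := by linarith
        rw [show x - 1 / 2 = (2 * x - 1) / 2 by ring]
        field_simp
      linarith
    have hfin : Tendsto (fun x : ℝ => (-((x - 1 / 2) * L x) - (1 / 2 - (x - 1 / 2) * R x) +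
        (x - 1 / 2) * (K - 1)) / x + c) (𝓝[>] (1 / 2)) (𝓝 ((-m - (1 / 2 - 0) + 0) / (1 / 2) + c)) :=
      ((((hlim.neg).sub (hRl.const_sub _)).add hsub).div hid (by norm_num)).add_const c
    have hge := ge_of_tendsto (b := (0 : ℝ)) hfin (by
      filter_upwards [self_mem_nhdsWithin] with x hx
      have hx : 1 / 2 < x := hx
      have hp : 0 < x - 1 / 2 := by linarith
      have hx0 : 0 < x := by linarith
      have h1 := mul_nonneg hp.le (hre x hx)
      have h2 : (x - 1 / 2) * ((-(L x) - (QQ x).re - 1 + K) / x + c / (x - 1 / 2)) =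
        (-((x - 1 / 2) * L x) - (x - 1 / 2) * (QQ x).re + (x - 1 / 2) * (K - 1)) / x + c := by
        have hc2 : (x - 1 / 2) * (c / (x - 1 / 2)) = c := mul_div_cancel₀ c hp.ne'
        rw [mul_add, hc2]; ring
      rw [h2] at h1
      refine h1.trans ?_
      gcongr
      exact hQ x hx)
    have hm0 : (0 : ℝ) ≤ m := Nat.cast_nonneg m
    linarith
  · have hfin : Tendsto (fun x : ℝ => (-((x - β) * L x) + (x - β) * (K - 1)) / x +
        (x - β) * (c / (x - 1 / 2))) (𝓝[>] β) (𝓝 ((-m + 0) / β + (β - β) * (c / (β - 1 / 2)))) :=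
      ((hlim.neg.add hsub).div hid (by linarith)).add ((hid.sub_const β).mul
        ((tendsto_const_nhds (x := c)).div (hid.sub_const (1 / 2)) (by linarith)))
    have hge := ge_of_tendsto (b := (0 : ℝ)) hfin (by
      filter_upwards [self_mem_nhdsWithin] with x hx
      have hx : β < x := hx
      have hp : 0 < x - β := by linarith
      have hx0 : 0 < x := by linarith
      have h1 := mul_nonneg hp.le (hre x hx)
      have h2 : (x - β) * ((-(L x) - (QQ x).re - 1 + K) / x + c / (x - 1 / 2)) =
        (-((x - β) * L x) - (x - β) * (QQ x).re + (x - β) * (K - 1)) / x +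
          (x - β) * (c / (x - 1 / 2)) := by
        ring
      rw [h2] at h1
      refine h1.trans ?_
      have := mul_nonneg hp.le (re_QQ_nonneg (x := x) (by linarith))
      gcongr
      linarith)
    have hm1 : (1 : ℝ) ≤ m := by exact_mod_cast hm hb0
    have : (0 : ℝ) < m / β := by positivity
    rw [sub_self, zero_mul, add_zero, add_zero, neg_div] at hge
    linarith

/-- Cost of the prime power `p ^ k`. -/
def hcost (p k : ℕ) : ℕ := if k = 0 then 0 else p ^ k

/-- The sum of the prime powers exactly dividing `M`. -/
noncomputable def ell (M : ℕ) : ℕ := M.factorization.sum hcost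

lemma hcost_zero (p : ℕ) : hcost p 0 = 0 := by simp [hcost]

lemma ell_eq (M : ℕ) : ell M = ∑ p ∈ M.primeFactors, p ^ M.factorization p := by
  unfold ell Finsupp.sum
  rw [Nat.support_factorization]
  refine Finset.sum_congr rfl fun p hp => ?_
  have : M.factorization p ≠ 0 := by
    rw [← Finsupp.mem_support_iff, Nat.support_factorization]; exact hp
  simp [hcost, this]

lemma sum_le_prod_aux {ι : Type*} (s : Finset ι) (f : ι → ℕ) (h : ∀ i ∈ s, 2 ≤ f i) :
    ∑ i ∈ s, f i ≤ ∏ i ∈ s, f i ∧ (s = ∅ ∨ 2 ≤ ∏ i ∈ s, f i) := by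
  classical
  induction s using Finset.induction_on with
  | empty => simp
  | insert a s ha ih =>
    have h2 := h a (Finset.mem_insert_self _ _)
    obtain ⟨h3, h4⟩ := ih (fun i hi => h i (Finset.mem_insert_of_mem hi))
    rw [Finset.sum_insert ha, Finset.prod_insert ha]
    rcases h4 with rfl | h4
    · simpa using h2
    · refine ⟨?_, Or.inr ?_⟩ <;> nlinarith

lemma ell_le {M : ℕ} (hM : M ≠ 0) : ell M ≤ M := by
  rw [ell_eq]
  refine (sum_le_prod_aux _ _ ?_).1.trans (Nat.prod_factorization_pow_eq_self hM).le
  intro p hp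
  have h1 : M.factorization p ≠ 0 := by
    rw [← Finsupp.mem_support_iff, Nat.support_factorization]; exact hp
  exact (Nat.prime_of_mem_primeFactors hp).two_le.trans (Nat.le_self_pow h1 p)

lemma ell_lcm {a b : ℕ} (ha : a ≠ 0) (hb : b ≠ 0) : ell (a.lcm b) ≤ ell a + ell b := by
  classical
  unfold ell
  set T := (a.lcm b).factorization.support ∪ a.factorization.support ∪ b.factorization.support
  rw [Finsupp.sum_of_support_subset (s := T) _ (by intro x; simp +contextual [T]) _ (fun i _ => hcost_zero i),
    Finsupp.sum_of_support_subset (s := T) (f := a.factorization) (by intro x; simp +contextual [T]) _ (fun i _ => hcost_zero i),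
    Finsupp.sum_of_support_subset (s := T) (f := b.factorization) (by intro x; simp +contextual [T]) _ (fun i _ => hcost_zero i),
    ← Finset.sum_add_distrib]
  refine Finset.sum_le_sum fun p _ => ?_
  rw [Nat.factorization_lcm ha hb, Finsupp.sup_apply]
  rcases le_total (a.factorization p) (b.factorization p) with h | h
  · rw [sup_of_le_right h]; omega
  · rw [sup_of_le_left h]; omega

lemma ell_multiset (s : Multiset ℕ) (hs : ∀ a ∈ s, a ≠ 0) : s.lcm ≠ 0 ∧ ell s.lcm ≤ s.sum := by
  induction s using Multiset.induction_on with
  | empty => simp [ell_eq]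
  | cons a s ih =>
    obtain ⟨h1, h2⟩ := ih (fun x hx => hs x (Multiset.mem_cons_of_mem hx))
    have ha := hs a (Multiset.mem_cons_self _ _)
    rw [Multiset.lcm_cons, Multiset.sum_cons]
    refine ⟨Nat.lcm_ne_zero ha h1, (ell_lcm ha h1).trans ?_⟩
    have := ell_le ha
    omega

lemma ell_orderOf {n : ℕ} (σ : Equiv.Perm (Fin n)) : ell (orderOf σ) ≤ n := by
  rw [← Equiv.Perm.lcm_cycleType]
  refine (ell_multiset _ ?_).2.trans ?_
  · intro a ha
    have := Equiv.Perm.two_le_of_mem_cycleType ha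
    omega
  · rw [Equiv.Perm.sum_cycleType]
    simpa using Finset.card_le_univ σ.support

lemma exists_perm {N n : ℕ} (hN : N ≠ 0) (h : ell N ≤ n) :
    ∃ σ : Equiv.Perm (Fin n), orderOf σ = N := by
  set m : Multiset ℕ := N.primeFactors.val.map (fun p => p ^ N.factorization p) with hm
  have hpos : ∀ p ∈ N.primeFactors, N.factorization p ≠ 0 := by
    intro p hp
    rw [← Finsupp.mem_support_iff, Nat.support_factorization]; exact hp
  obtain ⟨σ, hσ⟩ := (Equiv.Perm.exists_with_cycleType_iff (α := Fin n) (m := m)).mpr ⟨by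
    rw [Fintype.card_fin]
    refine le_trans (le_of_eq ?_) h
    rw [ell_eq]; rfl, by
    intro a ha
    obtain ⟨p, hp, rfl⟩ := Multiset.mem_map.mp ha
    exact (Nat.prime_of_mem_primeFactors hp).two_le.trans (Nat.le_self_pow (hpos p hp) p)⟩
  refine ⟨σ, ?_⟩
  rw [← Equiv.Perm.lcm_cycleType, hσ]
  change N.primeFactors.lcm (fun p => p ^ N.factorization p) = N
  apply Nat.dvd_antisymm
  · exact Finset.lcm_dvd fun p _ => Nat.ordProj_dvd N p
  · conv_lhs => rw [← Nat.prod_factorization_pow_eq_self hN]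
    refine Finset.prod_dvd_of_isRelPrime ?_ ?_
    · intro p hp r hr hpr
      refine Nat.coprime_iff_isRelPrime.mp ?_
      apply Nat.Coprime.pow
      exact (Nat.coprime_primes (Nat.prime_of_mem_primeFactors hp)
        (Nat.prime_of_mem_primeFactors hr)).mpr hpr
    · intro p hp
      exact Finset.dvd_lcm (f := fun p => p ^ N.factorization p) hp

/-- The penalized cost. -/
noncomputable def phi (ρ : ℝ) (p k : ℕ) : ℝ := hcost p k - ρ * (k * Real.log p)

lemma sum_phi {ρ : ℝ} {M : ℕ} (T : Finset ℕ) (hT : M.primeFactors ⊆ T) :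
    ∑ p ∈ T, phi ρ p (M.factorization p) = ell M - ρ * Real.log M := by
  rw [Real.log_nat_eq_sum_factorization]
  unfold ell
  rw [Finsupp.sum_of_support_subset (s := T) _ hT _ (fun i _ => hcost_zero i),
    Finsupp.sum_of_support_subset (s := T) _ hT _ (fun i _ => by simp), Finset.mul_sum]
  push_cast
  rw [← Finset.sum_sub_distrib]
  rfl

lemma landau_eq {ρ : ℝ} (hρ : 0 < ρ) {N : ℕ} (hN : N ≠ 0)
    (h : ∀ p k : ℕ, p.Prime → phi ρ p (N.factorization p) ≤ phi ρ p k) : landau (ell N) = N := by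
  classical
  unfold landau
  apply le_antisymm
  · refine Finset.sup_le fun σ _ => ?_
    have hM : 0 < orderOf σ := orderOf_pos σ
    have h1 := ell_orderOf σ
    set M := orderOf σ
    have h2 : ∑ p ∈ N.primeFactors ∪ M.primeFactors, phi ρ p (N.factorization p) ≤
        ∑ p ∈ N.primeFactors ∪ M.primeFactors, phi ρ p (M.factorization p) := by
      refine Finset.sum_le_sum fun p hp => h p _ ?_
      rcases Finset.mem_union.mp hp with hp | hp <;> exact Nat.prime_of_mem_primeFactors hp
    rw [sum_phi _ Finset.subset_union_left, sum_phi _ Finset.subset_union_right] at h2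
    have h3 : (ell M : ℝ) ≤ ell N := by exact_mod_cast h1
    have h4 : ρ * Real.log M ≤ ρ * Real.log N := by linarith
    have h5 := le_of_mul_le_mul_left h4 hρ
    have h6 := (Real.log_le_log_iff (by exact_mod_cast hM)
      (by exact_mod_cast Nat.pos_of_ne_zero hN)).mp h5
    exact_mod_cast h6
  · obtain ⟨σ, hσ⟩ := exists_perm hN le_rfl
    conv_lhs => rw [← hσ]
    exact Finset.le_sup (f := fun σ : Equiv.Perm (Fin (ell N)) => orderOf σ) (Finset.mem_univ σ)

lemma phi_zero (ρ : ℝ) (p : ℕ) : phi ρ p 0 = 0 := by simp [phi, hcost]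

lemma phi_pos (ρ : ℝ) (p : ℕ) {k : ℕ} (hk : k ≠ 0) :
    phi ρ p k = (p : ℝ) ^ k - ρ * (k * Real.log p) := by simp [phi, hcost, hk]

lemma exists_argmin (ρ : ℝ) {p : ℕ} (hp : p.Prime) : ∃ k, ∀ j, phi ρ p k ≤ phi ρ p j := by
  have hp1 : (1 : ℝ) < p := by exact_mod_cast hp.one_lt
  have ht := (tendsto_pow_const_div_const_pow_of_one_lt 1 hp1).const_mul (ρ * Real.log p)
  rw [mul_zero] at ht
  obtain ⟨K, hK⟩ := eventually_atTop.mp (ht.eventually (gt_mem_nhds zero_lt_one))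
  obtain ⟨k, hk, hmin⟩ := Finset.exists_min_image (Finset.range (K + 1)) (phi ρ p) ⟨0, by simp⟩
  refine ⟨k, fun j => ?_⟩
  rcases le_or_gt j K with h | h
  · exact hmin j (by simp; omega)
  · refine (hmin 0 (by simp)).trans ?_
    rw [phi_zero, phi_pos _ _ (by omega)]
    have h1 := hK j h.le
    have hpos : (0 : ℝ) < (p : ℝ) ^ j := by positivity
    rw [pow_one, ← mul_div_assoc, div_lt_one hpos] at h1
    nlinarith

lemma phi_nonneg_of_ge {q p : ℕ} (hq : 3 ≤ q) (hpq : q ≤ p) (k : ℕ) :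
    0 ≤ phi (q / Real.log q) p k := by
  rcases Nat.eq_zero_or_pos k with rfl | hk
  · rw [phi_zero]
  rw [phi_pos _ _ hk.ne']
  have hq3 : (3 : ℝ) ≤ q := by exact_mod_cast hq
  have hpq' : (q : ℝ) ≤ p := by exact_mod_cast hpq
  have he : Real.exp 1 ≤ q := by have := Real.exp_one_lt_d9; linarith
  have h1 := Real.log_div_self_antitoneOn (show (q : ℝ) ∈ Set.Ici (Real.exp 1) from he)
    (show (p : ℝ) ∈ Set.Ici (Real.exp 1) from he.trans hpq') hpq'
  have hlq : 0 < Real.log q := Real.log_pos (by linarith)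
  simp only at h1
  rw [div_le_div_iff₀ (by linarith) (by linarith)] at h1
  have h2 : q / Real.log q * Real.log p ≤ p := by
    rw [div_mul_eq_mul_div, div_le_iff₀ hlq]; linarith
  have h3 : (k : ℝ) * p ≤ (p : ℝ) ^ k := by
    obtain ⟨j, rfl⟩ := Nat.exists_eq_succ_of_ne_zero hk.ne'
    have h4 : j + 1 ≤ p ^ j := by
      have h5 : j < 2 ^ j := Nat.lt_two_pow_self
      have h6 : 2 ^ j ≤ p ^ j := Nat.pow_le_pow_left (by omega) j
      omega
    have h7 : ((j + 1 : ℕ) : ℝ) ≤ (p : ℝ) ^ j := by exact_mod_cast h4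
    rw [Nat.succ_eq_add_one, pow_succ]
    gcongr
  have h8 : (k : ℝ) * (q / Real.log q * Real.log p) ≤ k * p := by gcongr
  linarith

lemma champion {q : ℕ} (hq : q.Prime) (hq3 : 3 ≤ q) : ∃ N : ℕ, N ≠ 0 ∧ landau (ell N) = N ∧
    N.factorization q = 1 ∧ (∀ p, q < p → N.factorization p = 0) ∧
    (∀ p, p.Prime → p < q → 2 ≤ N.factorization p →
      (p : ℝ) ^ (N.factorization p - 1) * (p - 1) ≤ q / Real.log q * Real.log p) := by
  classical
  set ρ : ℝ := q / Real.log q with hρ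
  have hq3' : (3 : ℝ) ≤ q := by exact_mod_cast hq3
  have hlq : 0 < Real.log q := Real.log_pos (by linarith)
  have hρ0 : 0 < ρ := by positivity
  choose! a ha using fun (p : ℕ) (hp : p.Prime) => exists_argmin ρ hp
  set α : ℕ → ℕ := fun p => if p = q then 1 else if p.Prime ∧ p < q then a p else 0 with hα
  have hlt : ∀ p, p.Prime → p < q → α p = a p := by
    intro p hp h
    simp [hα, h.ne, hp, h]
  have hgt : ∀ p, q < p → α p = 0 := by
    intro p h
    simp [hα, h.ne', h.not_gt]
  have hqq : α q = 1 := by simp [hα]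
  let f : ℕ →₀ ℕ := Finsupp.onFinset (Finset.range (q + 1)) α (by
    intro p hp
    rw [Finset.mem_range]
    by_contra h
    exact hp (hgt p (by omega)))
  have hf : ∀ p ∈ f.support, p.Prime := by
    intro p hp
    have h1 : α p ≠ 0 := by simpa [f] using hp
    by_contra h
    apply h1
    have : p ≠ q := by rintro rfl; exact h hq
    simp [hα, this, h]
  have hfac := Nat.prod_pow_factorization_eq_self hf
  set N := f.prod (fun x1 x2 => x1 ^ x2) with hNdef
  have hfa : ∀ p, N.factorization p = α p := fun p => by rw [hfac]; rfl
  have hN : N ≠ 0 := by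
    intro h
    have := hfa q
    rw [h, hqq] at this
    simp at this
  refine ⟨N, hN, landau_eq hρ0 hN ?_, by rw [hfa, hqq], fun p h => by rw [hfa, hgt p h], ?_⟩
  · intro p k hp
    rw [hfa]
    rcases lt_trichotomy p q with h | h | h
    · rw [hlt p hp h]; exact ha p hp k
    · subst h
      rw [hqq]
      refine le_trans (le_of_eq ?_) (phi_nonneg_of_ge hq3 le_rfl k)
      rw [phi_pos _ _ one_ne_zero, hρ]
      field_simp
      simp
    · rw [hgt p h, phi_zero]
      exact phi_nonneg_of_ge hq3 h.le k
  · intro p hp h h2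
    rw [hfa, hlt p hp h] at h2 ⊢
    have h3 := ha p hp (a p - 1)
    rw [phi_pos _ _ (by omega), phi_pos _ _ (by omega)] at h3
    obtain ⟨j, hj⟩ : ∃ j, a p = j + 1 := ⟨a p - 1, by omega⟩
    rw [hj] at h3 ⊢
    simp only [Nat.add_sub_cancel] at h3 ⊢
    push_cast at h3
    rw [pow_succ] at h3
    linarith

lemma champ_max {q N : ℕ} (hq : q.Prime) (h1 : N.factorization q = 1)
    (h2 : ∀ p, q < p → N.factorization p = 0) : maxPrimeFac N = q ∧ q ≤ ell N := by
  have hmem : q ∈ N.primeFactors := by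
    rw [← Nat.support_factorization, Finsupp.mem_support_iff, h1]; exact one_ne_zero
  constructor
  · unfold maxPrimeFac
    apply le_antisymm
    · refine Finset.sup_le fun p hp => ?_
      by_contra h
      rw [← Nat.support_factorization, Finsupp.mem_support_iff] at hp
      exact hp (h2 p (by simpa using h))
    · exact Finset.le_sup (f := id) hmem
  · rw [ell_eq]
    have := Finset.single_le_sum (f := fun p => p ^ N.factorization p) (fun _ _ => Nat.zero_le _) hmem
    simpa [h1] using this

lemma log_bound {q N : ℕ} (hq3 : 3 ≤ q) (hbig : 100 * Real.log 2 ≤ Real.log q)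
    (h1 : N.factorization q = 1) (h2 : ∀ p, q < p → N.factorization p = 0)
    (h3 : ∀ p, p.Prime → p < q → 2 ≤ N.factorization p →
      (p : ℝ) ^ (N.factorization p - 1) * (p - 1) ≤ q / Real.log q * Real.log p) :
    Real.log N ≤ Chebyshev.theta q + Real.log 4 * (1 + 0.7107 * √q) +
      (2 * q : ℝ) ^ (1 / 3 : ℝ) * Real.log (2 * q) := by
  classical
  have hq3' : (3 : ℝ) ≤ q := by exact_mod_cast hq3
  have hlq : 0 < Real.log q := Real.log_pos (by linarith)
  set v := N.factorization with hv
  set T := (Finset.Ioc 0 q).filter Nat.Prime with hT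
  have hth : Chebyshev.theta q = ∑ p ∈ T, Real.log p := by
    rw [Chebyshev.theta, Nat.floor_natCast]
  have hlogp : ∀ p ∈ T, 0 < Real.log p := fun p hp => Real.log_pos (by
    exact_mod_cast (Finset.mem_filter.mp hp).2.one_lt)
  have hsum : Real.log N = ∑ p ∈ T, (v p : ℝ) * Real.log p := by
    rw [Real.log_nat_eq_sum_factorization]
    refine Finsupp.sum_of_support_subset _ ?_ _ (fun i _ => by simp)
    intro p hp
    have hpp := Nat.prime_of_mem_primeFactors (Nat.support_factorization N ▸ hp)
    rw [hT, Finset.mem_filter, Finset.mem_Ioc]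
    refine ⟨⟨hpp.pos, ?_⟩, hpp⟩
    by_contra h
    exact (Finsupp.mem_support_iff.mp hp) (h2 p (by omega))
  -- basic consequences of having exponent at least two
  have hbasic : ∀ p ∈ T, 2 ≤ v p → (p : ℝ) ^ (v p) ≤ 2 * q ∧
      (p : ℝ) ≤ 1 + 0.7107 * √q := by
    intro p hp hvp
    have hpp := (Finset.mem_filter.mp hp).2
    have hple := (Finset.mem_Ioc.mp (Finset.mem_filter.mp hp).1).2
    have hpq : p < q := by
      rcases lt_or_eq_of_le hple with h | h
      · exact h
      · rw [h, h1] at hvp; omega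
    have hp2 : (2 : ℝ) ≤ p := by exact_mod_cast hpp.two_le
    have hlp := hlogp p hp
    have h4 := h3 p hpp hpq hvp
    have h5 : q / Real.log q * Real.log p ≤ q := by
      rw [div_mul_eq_mul_div, div_le_iff₀ hlq]
      have : Real.log p ≤ Real.log q :=
        Real.log_le_log (by linarith) (by exact_mod_cast hple)
      gcongr
    obtain ⟨j, hj⟩ : ∃ j, v p = j + 2 := ⟨v p - 2, by omega⟩
    rw [hj] at h4 ⊢
    simp only [show j + 2 - 1 = j + 1 by omega] at h4
    have hpj : (0 : ℝ) < (p : ℝ) ^ (j + 1) := by positivity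
    have hpj1 : (p : ℝ) ≤ (p : ℝ) ^ (j + 1) := le_self_pow₀ (by linarith) (by omega)
    constructor
    · rw [show j + 2 = (j + 1) + 1 by ring, pow_succ]
      nlinarith
    · have h6 : (p : ℝ) * (p - 1) ≤ q / Real.log q * Real.log p :=
        le_trans (by gcongr; linarith) h4
      have h7 : (p : ℝ) ^ 2 ≤ 2 * q := by nlinarith
      have h8 : 2 * Real.log p ≤ Real.log 2 + Real.log q := by
        rw [← Real.log_mul (by norm_num) (by linarith)]
        have := Real.log_le_log (by positivity) h7
        rwa [Real.log_pow] at this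
      have h9 : q / Real.log q * Real.log p ≤ 0.505 * q := by
        rw [div_mul_eq_mul_div, div_le_iff₀ hlq]
        have : Real.log p ≤ 0.505 * Real.log q := by linarith
        nlinarith
      have h10 : ((p : ℝ) - 1) ^ 2 ≤ (0.7107 * √q) ^ 2 := by
        rw [mul_pow, Real.sq_sqrt (by linarith)]
        nlinarith
      have := abs_le_of_sq_le_sq' h10 (by positivity)
      linarith [this.2]
  have hpt : ∀ p ∈ T, (v p : ℝ) * Real.log p ≤ Real.log p + (if 2 ≤ v p then Real.log p else 0) +
      (if 3 ≤ v p then Real.log (2 * q) else 0) := by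
    intro p hp
    have hlp := hlogp p hp
    have hpp := (Finset.mem_filter.mp hp).2
    by_cases c3 : 3 ≤ v p
    · rw [if_pos c3, if_pos (by omega)]
      have := Real.log_le_log (by have := hpp.pos; positivity) (hbasic p hp (by omega)).1
      rw [Real.log_pow] at this
      linarith
    · rw [if_neg c3]
      by_cases c2 : 2 ≤ v p
      · rw [if_pos c2]
        have : v p = 2 := by omega
        rw [this]; push_cast; linarith
      · rw [if_neg c2]
        have : (v p : ℝ) ≤ 1 := by exact_mod_cast (by omega : v p ≤ 1)
        nlinarith
  have hS2 : ∑ p ∈ T, (if 2 ≤ v p then Real.log p else 0) ≤ Real.log 4 * (1 + 0.7107 * √q) := by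
    refine le_trans ?_ (Chebyshev.theta_le_log4_mul_x (by positivity))
    rw [← Finset.sum_filter, Chebyshev.theta]
    refine Finset.sum_le_sum_of_subset_of_nonneg ?_ ?_
    · intro p hp
      obtain ⟨hp, h2p⟩ := Finset.mem_filter.mp hp
      have hpp := (Finset.mem_filter.mp hp).2
      rw [Finset.mem_filter, Finset.mem_Ioc]
      exact ⟨⟨hpp.pos, Nat.le_floor (hbasic p hp h2p).2⟩, hpp⟩
    · intro p hp _
      exact Real.log_nonneg (by exact_mod_cast (Finset.mem_filter.mp hp).2.one_le)
  have hS3 : ∑ p ∈ T, (if 3 ≤ v p then Real.log (2 * q) else 0) ≤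
      (2 * q : ℝ) ^ (1 / 3 : ℝ) * Real.log (2 * q) := by
    rw [← Finset.sum_filter, Finset.sum_const, nsmul_eq_mul]
    have hl : 0 ≤ Real.log (2 * q) := Real.log_nonneg (by linarith)
    refine mul_le_mul_of_nonneg_right ?_ hl
    have hsub : T.filter (fun p => 3 ≤ v p) ⊆ Finset.Ioc 0 ⌊(2 * q : ℝ) ^ (1 / 3 : ℝ)⌋₊ := by
      intro p hp
      obtain ⟨hp, h3p⟩ := Finset.mem_filter.mp hp
      have hpp := (Finset.mem_filter.mp hp).2
      have hp1 : (1 : ℝ) ≤ p := by exact_mod_cast hpp.one_le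
      rw [Finset.mem_Ioc]
      refine ⟨hpp.pos, Nat.le_floor ?_⟩
      have h4 : (p : ℝ) ^ 3 ≤ 2 * q :=
        (pow_le_pow_right₀ hp1 h3p).trans (hbasic p hp (by omega)).1
      rw [one_div, Real.le_rpow_inv_iff_of_pos (by positivity) (by positivity) (by norm_num)]
      exact_mod_cast h4
    have hc := Finset.card_le_card hsub
    rw [Nat.card_Ioc, Nat.sub_zero] at hc
    calc ((T.filter (fun p => 3 ≤ v p)).card : ℝ) ≤ (⌊(2 * q : ℝ) ^ (1 / 3 : ℝ)⌋₊ : ℝ) := by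
          exact_mod_cast hc
      _ ≤ _ := Nat.floor_le (by positivity)
  rw [hsum, hth]
  have := Finset.sum_le_sum hpt
  rw [Finset.sum_add_distrib, Finset.sum_add_distrib] at this
  linarith

lemma eventually_err : ∀ᶠ x : ℝ in atTop, Real.log 4 * (1 + 0.7107 * √x) +
      (2 * x : ℝ) ^ (1 / 3 : ℝ) * Real.log (2 * x) + Real.log x ≤ 0.995 * √x := by
  have hl4 : Real.log 4 ≤ 1.3863 := by
    rw [show (4 : ℝ) = 2 ^ 2 by norm_num, Real.log_pow]
    have := Real.log_two_lt_d9
    push_cast; linarith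
  have hl4' : 0 ≤ Real.log 4 := Real.log_nonneg (by norm_num)
  have e1 : (fun x : ℝ => Real.log x) =o[atTop] fun x => x ^ (1 / 2 : ℝ) :=
    isLittleO_log_rpow_atTop (by norm_num)
  have h2x : Tendsto (fun x : ℝ => 2 * x) atTop atTop := tendsto_id.const_mul_atTop (by norm_num)
  have e2 : (fun x : ℝ => Real.log (2 * x)) =o[atTop] fun x => (2 * x) ^ (1 / 6 : ℝ) :=
    (isLittleO_log_rpow_atTop (by norm_num : (0 : ℝ) < 1 / 6)).comp_tendsto h2x
  have e3 : Tendsto (fun x : ℝ => √x) atTop atTop := Real.tendsto_sqrt_atTop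
  filter_upwards [e1.bound (by norm_num : (0 : ℝ) < 0.001), e2.bound (by norm_num : (0 : ℝ) < 0.001),
    e3.eventually_ge_atTop 10000, eventually_ge_atTop 1] with x h1 h2 h3 h4
  rw [← Real.sqrt_eq_rpow, Real.norm_of_nonneg (Real.log_nonneg h4),
    Real.norm_of_nonneg (by positivity)] at h1
  rw [Real.norm_of_nonneg (Real.log_nonneg (by linarith)),
    Real.norm_of_nonneg (by positivity)] at h2
  have h5 : (2 * x : ℝ) ^ (1 / 3 : ℝ) * Real.log (2 * x) ≤ 0.001 * (2 * √x) := by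
    calc _ ≤ (2 * x : ℝ) ^ (1 / 3 : ℝ) * (0.001 * (2 * x) ^ (1 / 6 : ℝ)) := by gcongr
      _ = 0.001 * ((2 * x : ℝ) ^ (1 / 3 : ℝ) * (2 * x) ^ (1 / 6 : ℝ)) := by ring
      _ = 0.001 * √(2 * x) := by
        rw [← Real.rpow_add (by linarith), Real.sqrt_eq_rpow]; norm_num
      _ ≤ 0.001 * (2 * √x) := by
        gcongr
        rw [Real.sqrt_le_left (by positivity), mul_pow, Real.sq_sqrt (by linarith)]
        linarith
  have h6 : Real.log 4 * (1 + 0.7107 * √x) ≤ 1.3863 * (1 + 0.7107 * √x) := by gcongr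
  nlinarith

lemma theta_next {x : ℝ} {q : ℕ} (hx : 0 ≤ x) (hxq : x < q) (hmin : ∀ p : ℕ, p.Prime → x < p → q ≤ p)
    (hq : q.Prime) : Chebyshev.theta q ≤ Chebyshev.theta x + Real.log q := by
  classical
  rw [Chebyshev.theta, Chebyshev.theta, Nat.floor_natCast, add_comm]
  have hnot : q ∉ (Finset.Ioc 0 ⌊x⌋₊).filter Nat.Prime := by
    intro h
    have h1 := (Finset.mem_Ioc.mp (Finset.mem_filter.mp h).1).2
    have h2 := (Nat.le_floor_iff hx).mp h1
    linarith
  rw [← Finset.sum_insert (f := fun p : ℕ => Real.log p) hnot]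
  refine Finset.sum_le_sum_of_subset_of_nonneg ?_ ?_
  · intro p hp
    obtain ⟨hp1, hpp⟩ := Finset.mem_filter.mp hp
    have hple := (Finset.mem_Ioc.mp hp1).2
    rw [Finset.mem_insert]
    rcases lt_or_ge x p with h | h
    · exact Or.inl (le_antisymm hple (hmin p hpp h))
    · right
      rw [Finset.mem_filter, Finset.mem_Ioc]
      exact ⟨⟨hpp.pos, Nat.le_floor h⟩, hpp⟩
  · intro p hp _
    rcases Finset.mem_insert.mp hp with h | h
    · rw [h]; exact Real.log_nonneg (by exact_mod_cast hq.one_le)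
    · exact Real.log_nonneg (by exact_mod_cast (Finset.mem_filter.mp h).2.one_le)

/-- There are infinitely many positive integers n with P⁺(g(n)) > log g(n). -/
theorem stmt4 :
    {n : ℕ | 0 < n ∧ Real.log (landau n) < (maxPrimeFac (landau n) : ℝ)}.Infinite := by
  intro hfin
  obtain ⟨b, hb⟩ := hfin.bddAbove
  obtain ⟨X, hX⟩ := eventually_atTop.mp (eventually_err.and
    (Real.tendsto_log_atTop.eventually_ge_atTop (100 * Real.log 2)))
  set X0 : ℝ := max X (max b 3) with hX0
  have hX1 : X ≤ X0 := le_max_left _ _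
  have hX2 : (b : ℝ) ≤ X0 := (le_max_left _ _).trans (le_max_right _ _)
  have hX3 : 3 ≤ X0 := (le_max_right _ _).trans (le_max_right _ _)
  have main : ∀ x : ℝ, X0 ≤ x → x - 0.995 * √x ≤ Chebyshev.theta x := by
    intro x hx
    have hex : ∃ p : ℕ, p.Prime ∧ x < p := by
      obtain ⟨p, hp1, hp2⟩ := Nat.exists_infinite_primes (⌊x⌋₊ + 1)
      exact ⟨p, hp2, (Nat.lt_floor_add_one x).trans_le (by exact_mod_cast hp1)⟩
    classical
    set q := Nat.find hex
    obtain ⟨hq, hxq⟩ : q.Prime ∧ x < q := Nat.find_spec hex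
    have hmin : ∀ p : ℕ, p.Prime → x < p → q ≤ p := fun p hp hxp => Nat.find_min' hex ⟨hp, hxp⟩
    have hq3 : 3 ≤ q := by
      have : (3 : ℝ) ≤ q := by linarith
      exact_mod_cast this
    obtain ⟨herr, hlog⟩ := hX q (by linarith)
    obtain ⟨N, -, hland, hNq, hNgt, hNb⟩ := champion hq hq3
    obtain ⟨hmax, hqn⟩ := champ_max hq hNq hNgt
    have hlb := log_bound hq3 hlog hNq hNgt hNb
    have hle : (q : ℝ) ≤ Real.log N := by
      by_contra hcon
      have hmem : ell N ∈ {n : ℕ | 0 < n ∧ Real.log (landau n) < (maxPrimeFac (landau n) : ℝ)} := by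
        refine ⟨by omega, ?_⟩
        rw [hland, hmax]
        exact not_le.mp hcon
      have h1 : ell N ≤ b := hb hmem
      have h2 : (q : ℝ) ≤ b := by exact_mod_cast hqn.trans h1
      linarith
    have hth := theta_next (by linarith) hxq hmin hq
    have hs : 0.995 * √q - 0.995 * √x ≤ q - x := by
      have a1 : 1 ≤ √x := Real.one_le_sqrt.mpr (by linarith)
      have a2 : √x ≤ √q := Real.sqrt_le_sqrt hxq.le
      have a3 := Real.sq_sqrt (show 0 ≤ x by linarith)
      have a4 := Real.sq_sqrt (show (0 : ℝ) ≤ q by linarith)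
      nlinarith
    linarith
  refine theta_oscillation (c := 0.995) (K := X0) (by norm_num) ?_
  intro t ht
  rw [← Real.sqrt_eq_rpow]
  rcases le_or_gt X0 t with h | h
  · have := main t h
    linarith
  · have h1 := Chebyshev.theta_nonneg t
    have h2 := Real.sqrt_nonneg t
    linarith
end

section
/- There exist infinitely many positive integers n such that P⁺(g(n)) < log g(n). -/
namespace LandauAux

/-- The minimal degree of a permutation of order `M`. -/
def ell (M : ℕ) : ℕ := ∑ p ∈ M.primeFactors, p ^ M.factorization p

lemma ell_mul {a b : ℕ} (h : a.Coprime b) : ell (a * b) = ell a + ell b := by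
  unfold ell
  rw [h.primeFactors_mul, Finset.sum_union h.disjoint_primeFactors]
  congr 1
  · apply Finset.sum_congr rfl
    intro p hp
    rw [Nat.factorization_eq_of_coprime_left h (by simpa using hp)]
  · apply Finset.sum_congr rfl
    intro p hp
    rw [Nat.factorization_eq_of_coprime_right h (by simpa using hp)]

lemma ell_one : ell 1 = 0 := by simp [ell]

lemma ell_prime_pow {p k : ℕ} (hp : p.Prime) (hk : 0 < k) : ell (p ^ k) = p ^ k := by
  unfold ell
  rw [Nat.primeFactors_prime_pow hk.ne' hp]
  simp [hp.factorization_pow]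

lemma ell_le (a : ℕ) : ell a ≤ a := by
  induction a using Nat.recOnPosPrimePosCoprime with
  | zero => simp [ell]
  | one => simp [ell_one]
  | prime_pow p n hp hn => rw [ell_prime_pow hp hn]
  | coprime a b ha hb hab iha ihb =>
    rw [ell_mul hab]
    nlinarith

lemma ell_lcm_le {a b : ℕ} (ha : a ≠ 0) (hb : b ≠ 0) : ell (a.lcm b) ≤ ell a + ell b := by
  unfold ell
  have h1 : (a.lcm b).primeFactors = a.primeFactors ∪ b.primeFactors := by
    ext p
    simp only [Finset.mem_union, Nat.mem_primeFactors, Nat.lcm_ne_zero ha hb, ha, hb, ne_eq,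
      not_false_eq_true, and_true]
    constructor
    · rintro ⟨hp, hd⟩
      have h := hd.trans (Nat.lcm_dvd_mul a b)
      rcases (Nat.Prime.dvd_mul hp).1 h with h | h
      · exact Or.inl ⟨hp, h⟩
      · exact Or.inr ⟨hp, h⟩
    · rintro (⟨hp, hd⟩ | ⟨hp, hd⟩)
      · exact ⟨hp, hd.trans (Nat.dvd_lcm_left a b)⟩
      · exact ⟨hp, hd.trans (Nat.dvd_lcm_right a b)⟩
  have h2 : ∀ c : ℕ, c ≠ 0 → c.primeFactors ⊆ a.primeFactors ∪ b.primeFactors →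
      ∑ p ∈ c.primeFactors, p ^ c.factorization p = ∑ p ∈ a.primeFactors ∪ b.primeFactors,
        if p ∈ c.primeFactors then p ^ c.factorization p else 0 := by
    intro c hc hs
    rw [← Finset.sum_filter]
    congr 1
    ext p; simp only [Finset.mem_filter]; constructor
    · intro h; exact ⟨hs h, h⟩
    · intro h; exact h.2
  rw [h2 a ha Finset.subset_union_left, h2 b hb Finset.subset_union_right, h1,
    ← Finset.sum_add_distrib]
  apply Finset.sum_le_sum
  intro p hp
  rw [Nat.factorization_lcm ha hb, Finsupp.sup_apply]
  rcases le_total (a.factorization p) (b.factorization p) with h | h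
  · rw [sup_of_le_right h]
    by_cases hpb : p ∈ b.primeFactors
    · simp [hpb]
    · have hpa : p ∈ a.primeFactors := by
        rcases Finset.mem_union.1 hp with h | h
        · exact h
        · exact absurd h hpb
      have : b.factorization p = 0 := by rwa [← Finsupp.notMem_support_iff]
      have : a.factorization p ≠ 0 := by rwa [← Finsupp.mem_support_iff]
      omega
  · rw [sup_of_le_left h]
    by_cases hpa : p ∈ a.primeFactors
    · simp [hpa]
    · have hpb : p ∈ b.primeFactors := by
        rcases Finset.mem_union.1 hp with h | h
        · exact absurd h hpa
        · exact h
      have : a.factorization p = 0 := by rwa [← Finsupp.notMem_support_iff]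
      have : b.factorization p ≠ 0 := by rwa [← Finsupp.mem_support_iff]
      omega

lemma ell_lcm_multiset (S : Multiset ℕ) (h : ∀ a ∈ S, 2 ≤ a) : S.lcm ≠ 0 ∧ ell S.lcm ≤ S.sum := by
  induction S using Multiset.induction_on with
  | empty => simp [ell_one]
  | cons a S ih =>
    obtain ⟨h1, h2⟩ := ih (fun b hb => h b (Multiset.mem_cons_of_mem hb))
    have ha : 2 ≤ a := h a (Multiset.mem_cons_self a S)
    rw [Multiset.lcm_cons, Multiset.sum_cons]
    refine ⟨Nat.lcm_ne_zero (by omega) h1, ?_⟩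
    have := ell_lcm_le (a := a) (by omega) h1
    have h3 := ell_le a
    exact this.trans (by omega)

lemma landau_spec (n : ℕ) : landau n ≠ 0 ∧ ell (landau n) ≤ n := by
  obtain ⟨σ, -, hσ⟩ := Finset.exists_mem_eq_sup (Finset.univ : Finset (Equiv.Perm (Fin n)))
    ⟨1, Finset.mem_univ _⟩ (fun σ => orderOf σ)
  have : landau n = orderOf σ := hσ
  rw [this, ← Equiv.Perm.lcm_cycleType]
  have := ell_lcm_multiset σ.cycleType (fun a ha => Equiv.Perm.two_le_of_mem_cycleType ha)
  refine ⟨this.1, this.2.trans ?_⟩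
  have := σ.sum_cycleType_le
  simpa using this

lemma le_landau {M n : ℕ} (hM : M ≠ 0) (h : ell M ≤ n) : M ≤ landau n := by
  obtain ⟨σ, hσ⟩ := (Equiv.Perm.exists_with_cycleType_iff (α := Fin n)
    (m := M.primeFactors.val.map (fun p => p ^ M.factorization p))).2 (by
      refine ⟨?_, ?_⟩
      · rw [Fintype.card_fin]
        exact h
      · intro a ha
        obtain ⟨p, hp, rfl⟩ := Multiset.mem_map.1 ha
        have hp' : p ∈ M.primeFactors := hp
        have hk : M.factorization p ≠ 0 := by rwa [← Finsupp.mem_support_iff]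
        exact (Nat.prime_of_mem_primeFactors hp').two_le.trans (Nat.le_self_pow hk p))
  have h1 : orderOf σ ≤ landau n := Finset.le_sup (f := fun σ : Equiv.Perm (Fin n) => orderOf σ) (Finset.mem_univ σ)
  rw [← Equiv.Perm.lcm_cycleType, hσ] at h1
  have h0 : M.primeFactors.lcm (fun p => p ^ M.factorization p) = M := by
    rw [Finset.lcm_eq_prod]
    · exact (Nat.prod_factorization_pow_eq_self hM)
    · intro p hp q hq hpq
      exact Nat.coprime_pow_primes _ _ (Nat.prime_of_mem_primeFactors hp)
        (Nat.prime_of_mem_primeFactors hq) hpq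
  exact (h0.ge).trans h1

/-- The penalised functional. -/
noncomputable def Phi (ρ : ℝ) (M : ℕ) : ℝ := ell M - ρ * Real.log M

lemma Phi_mul (ρ : ℝ) {a b : ℕ} (ha : a ≠ 0) (hb : b ≠ 0) (h : a.Coprime b) :
    Phi ρ (a * b) = Phi ρ a + Phi ρ b := by
  unfold Phi
  rw [ell_mul h]; push_cast
  rw [Real.log_mul (by exact_mod_cast ha) (by exact_mod_cast hb)]; ring

lemma log_eq_sum {M : ℕ} (hM : M ≠ 0) :
    Real.log M = ∑ p ∈ M.primeFactors, Real.log ((p ^ M.factorization p : ℕ) : ℝ) := by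
  conv_lhs => rw [← Nat.prod_factorization_pow_eq_self hM]
  rw [Finsupp.prod, Nat.cast_prod, Real.log_prod]
  · rfl
  · intro p hp
    have := (Nat.prime_of_mem_primeFactors hp).pos
    positivity

lemma log_le_ell {M : ℕ} (hM : M ≠ 0) : Real.log M ≤ ell M := by
  rw [log_eq_sum hM, ell, Nat.cast_sum]
  apply Finset.sum_le_sum
  intro p hp
  exact Real.log_le_self (Nat.cast_nonneg _)

lemma coercive (c : ℝ) (hc : 0 ≤ c) : ∃ c0 : ℝ, ∀ M : ℕ, M ≠ 0 → c * Real.log M ≤ ell M + c0 := by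
  have h := (Real.isLittleO_log_id_atTop.const_mul_left c).bound (one_pos)
  obtain ⟨B, hB⟩ := Filter.eventually_atTop.1 h
  obtain ⟨N, hN⟩ := exists_nat_ge (max B 1)
  refine ⟨N * (c * Real.log N), fun M hM => ?_⟩
  rw [log_eq_sum hM, ell, Nat.cast_sum, Finset.mul_sum]
  have hN1 : (1:ℝ) ≤ N := le_trans (le_max_right _ _) hN
  have hlog : 0 ≤ Real.log N := Real.log_nonneg hN1
  have key : ∀ p ∈ M.primeFactors, c * Real.log ((p ^ M.factorization p : ℕ) : ℝ) ≤
      ((p ^ M.factorization p : ℕ) : ℝ) + if p ∈ Finset.range N then c * Real.log N else 0 := by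
    intro p hp
    have hpp := (Nat.prime_of_mem_primeFactors hp)
    have hk : M.factorization p ≠ 0 := by rwa [← Finsupp.mem_support_iff]
    have hpos : 0 < p ^ M.factorization p := pow_pos hpp.pos _
    by_cases hlt : p ^ M.factorization p < N
    · have : p < N := (Nat.le_self_pow hk p).trans_lt hlt
      simp only [Finset.mem_range, this, if_true]
      have h1 : Real.log ((p ^ M.factorization p : ℕ) : ℝ) ≤ Real.log N :=
        Real.log_le_log (by exact_mod_cast hpos) (by exact_mod_cast hlt.le)
      have h2 := mul_le_mul_of_nonneg_left h1 hc
      have : (0:ℝ) ≤ ((p ^ M.factorization p : ℕ) : ℝ) := Nat.cast_nonneg _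
      linarith
    · have h1 : (N:ℝ) ≤ ((p ^ M.factorization p : ℕ) : ℝ) := by exact_mod_cast not_lt.1 hlt
      have h2 := hB _ ((le_max_left B 1).trans (hN.trans h1))
      have h5 : |((p ^ M.factorization p : ℕ) : ℝ)| = ((p ^ M.factorization p : ℕ) : ℝ) :=
        abs_of_nonneg (Nat.cast_nonneg _)
      rw [one_mul, Real.norm_eq_abs, Real.norm_eq_abs, id, h5] at h2
      have h3 := (le_abs_self _).trans h2
      split_ifs
      · have := mul_nonneg hc hlog
        linarith
      · linarith
  refine (Finset.sum_le_sum key).trans ?_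
  rw [Finset.sum_add_distrib]
  gcongr
  rw [← Finset.sum_filter, Finset.sum_const, nsmul_eq_mul]
  have : ((M.primeFactors.filter (fun p => p ∈ Finset.range N)).card : ℝ) ≤ N := by
    have h : M.primeFactors.filter (fun p => p ∈ Finset.range N) ⊆ Finset.range N := by
      intro p hp; exact (Finset.mem_filter.1 hp).2
    have := Finset.card_le_card h
    rw [Finset.card_range] at this
    exact_mod_cast this
  have := mul_nonneg hc hlog
  gcongr

lemma exists_max_minimizer (ρ : ℝ) (hρ : 0 ≤ ρ) : ∃ N : ℕ, N ≠ 0 ∧ (∀ M, M ≠ 0 → Phi ρ N ≤ Phi ρ M) ∧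
    (∀ M, M ≠ 0 → Phi ρ M ≤ Phi ρ N → M ≤ N) := by
  have hfin : {M : ℕ | M ≠ 0 ∧ Phi ρ M ≤ 0}.Finite := by
    obtain ⟨c0, h0⟩ := coercive (ρ + 1) (by linarith)
    obtain ⟨K, hK⟩ := exists_nat_ge (Real.exp c0)
    refine (Set.finite_Iic K).subset ?_
    rintro M ⟨hM, hP⟩
    have := h0 M hM
    unfold Phi at hP
    have h1 : Real.log M ≤ c0 := by linarith
    have hMpos : (0:ℝ) < M := by exact_mod_cast Nat.pos_of_ne_zero hM
    rw [Real.log_le_iff_le_exp hMpos] at h1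
    have : (M:ℝ) ≤ K := h1.trans hK
    exact_mod_cast this
  have hne : {M : ℕ | M ≠ 0 ∧ Phi ρ M ≤ 0}.Nonempty := ⟨1, by simp [Phi, ell_one]⟩
  obtain ⟨N0, hN0, hmin⟩ := Set.exists_min_image _ (Phi ρ) hfin hne
  have hfin2 : {M : ℕ | M ≠ 0 ∧ Phi ρ M ≤ Phi ρ N0}.Finite :=
    hfin.subset (fun M hM => ⟨hM.1, hM.2.trans hN0.2⟩)
  obtain ⟨N, hN, hmax⟩ := Set.exists_max_image _ id hfin2 ⟨N0, hN0.1, le_rfl⟩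
  have hmin' : ∀ M, M ≠ 0 → Phi ρ N0 ≤ Phi ρ M := by
    intro M hM
    by_cases h : Phi ρ M ≤ 0
    · exact hmin M ⟨hM, h⟩
    · exact hN0.2.trans (not_le.1 h).le
  exact ⟨N, hN.1, fun M hM => hN.2.trans (hmin' M hM), fun M hM h => hmax M ⟨hM, h.trans hN.2⟩⟩

lemma mul_log_lt {x y : ℝ} (hx : 3 ≤ x) (hxy : x < y) : x * Real.log y < y * Real.log x := by
  have h := Real.log_div_self_antitoneOn
  have he : Real.exp 1 < 3 := Real.exp_one_lt_d9.trans (by norm_num)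
  have h1 : Real.log (y / x) < y / x - 1 := by
    apply Real.log_lt_sub_one_of_pos (div_pos (by linarith) (by linarith))
    rw [ne_eq, div_eq_one_iff_eq (by linarith)]; linarith
  rw [Real.log_div (by linarith) (by linarith)] at h1
  have h2 : 1 < Real.log x := by
    rw [Real.lt_log_iff_exp_lt (by linarith)]; linarith
  have h3 : x * (Real.log y - Real.log x) < y - x := by
    have := mul_lt_mul_of_pos_left h1 (show 0 < x by linarith)
    have e : x * (y / x - 1) = y - x := by field_simp
    linarith
  nlinarith

lemma exists_n {x : ℝ} (hx : 4 ≤ x) (hθ : x < Chebyshev.theta x) :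
    ∃ n : ℕ, x < n ∧ (maxPrimeFac (landau n) : ℝ) < Real.log (landau n) := by
  have hlx : 0 < Real.log x := Real.log_pos (by linarith)
  set ρ := x / Real.log x with hρ
  have hρ0 : 0 ≤ ρ := by positivity
  obtain ⟨N, hN0, hmin, hmax⟩ := exists_max_minimizer ρ hρ0
  -- all primes up to x divide N
  have hdiv : ∀ q : ℕ, q.Prime → (q:ℝ) ≤ x → q ∣ N := by
    intro q hq hqx
    by_contra hnd
    have hc : N.Coprime q := ((Nat.Prime.coprime_iff_not_dvd hq).2 hnd).symm
    have h1 := Phi_mul ρ hN0 hq.ne_zero hc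
    have h2 : Phi ρ q ≤ 0 := by
      have e := ell_prime_pow hq one_pos
      rw [pow_one] at e
      unfold Phi
      rw [e, hρ]
      have : (q:ℝ) * Real.log x ≤ x * Real.log q := by
        rcases hqx.eq_or_lt with h | h
        · rw [h]
        · rcases hq.two_le.eq_or_lt with h2 | h2
          · subst h2
            have e4 : Real.log 4 = 2 * Real.log 2 := by
              rw [show (4:ℝ) = 2 ^ 2 by norm_num, Real.log_pow]; norm_num
            rcases hx.eq_or_lt with h4 | h4
            · rw [← h4, e4]; push_cast; linarith
            · have := mul_log_lt (x := 4) (by norm_num) h4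
              rw [e4] at this
              push_cast; linarith
          · exact (mul_log_lt (by exact_mod_cast h2) h).le
      rw [sub_nonpos, div_mul_eq_mul_div, le_div_iff₀ hlx]
      exact this
    have h3 := hmax (N * q) (mul_ne_zero hN0 hq.ne_zero) (by linarith)
    have := hq.two_le
    have := Nat.pos_of_ne_zero hN0
    nlinarith
  have hlogN : Chebyshev.theta x ≤ Real.log N := by
    rw [Chebyshev.theta_eq_log_primorial]
    apply Real.log_le_log (by exact_mod_cast primorial_pos _)
    have : primorial ⌊x⌋₊ ∣ N := by
      unfold primorial
      apply Finset.prod_primes_dvd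
      · intro p hp; exact (Finset.mem_filter.1 hp).2.prime
      · intro p hp
        obtain ⟨h1, h2⟩ := Finset.mem_filter.1 hp
        apply hdiv p h2
        have : p ≤ ⌊x⌋₊ := by simpa [Nat.lt_succ_iff] using h1
        exact (Nat.le_floor_iff (by linarith)).1 this
    exact_mod_cast Nat.le_of_dvd (Nat.pos_of_ne_zero hN0) this
  refine ⟨ell N, ?_, ?_⟩
  · have := log_le_ell hN0
    linarith
  obtain ⟨hM0, hMl⟩ := landau_spec (ell N)
  have hNM : N ≤ landau (ell N) := le_landau hN0 le_rfl
  set M := landau (ell N) with hM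
  have hlogM : Real.log N ≤ Real.log M :=
    Real.log_le_log (by exact_mod_cast Nat.pos_of_ne_zero hN0) (by exact_mod_cast hNM)
  have hPhiM : Phi ρ M ≤ Phi ρ N := by
    unfold Phi
    have h1 : (ell M : ℝ) ≤ ell N := by exact_mod_cast hMl
    have := mul_le_mul_of_nonneg_left hlogM hρ0
    linarith
  refine lt_of_le_of_lt ?_ (hθ.trans_le (hlogN.trans hlogM))
  have : maxPrimeFac M ≤ ⌊x⌋₊ := by
    unfold maxPrimeFac
    apply Finset.sup_le
    intro q hq
    simp only [id]
    rw [Nat.le_floor_iff (by linarith)]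
    by_contra hlt
    push Not at hlt
    have hqp := Nat.prime_of_mem_primeFactors hq
    have hk : M.factorization q ≠ 0 := by rwa [← Finsupp.mem_support_iff]
    set k := M.factorization q with hkdef
    set M' := M / q ^ k with hM'
    have hMe : q ^ k * M' = M := Nat.ordProj_mul_ordCompl_eq_self M q
    have hM'0 : M' ≠ 0 := by
      intro h; rw [h] at hMe; simp at hMe; exact hM0 hMe.symm
    have hcop : (q ^ k).Coprime M' := Nat.Coprime.pow_left _ (Nat.coprime_ordCompl hqp hM0)
    have h1 := Phi_mul ρ (pow_pos hqp.pos k).ne' hM'0 hcop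
    rw [hMe] at h1
    have h2 := hmin M' hM'0
    have h3 : 0 < Phi ρ (q ^ k) := by
      unfold Phi
      rw [ell_prime_pow hqp (Nat.pos_of_ne_zero hk), hρ, sub_pos, div_mul_eq_mul_div, div_lt_iff₀ hlx,
        mul_comm (((q ^ k : ℕ)):ℝ), mul_comm x]
      have hqk : (q:ℝ) ≤ ((q ^ k : ℕ):ℝ) := by exact_mod_cast Nat.le_self_pow hk q
      have := mul_log_lt (x := x) (by linarith) (hlt.trans_le hqk)
      linarith
    linarith
  have h5 : (maxPrimeFac M : ℝ) ≤ (⌊x⌋₊ : ℝ) := by exact_mod_cast this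
  exact h5.trans (Nat.floor_le (by linarith))

theorem infinite_of_theta (h : ∀ x0 : ℝ, ∃ x ≥ x0, x < Chebyshev.theta x) :
    {n : ℕ | 0 < n ∧ (maxPrimeFac (landau n) : ℝ) < Real.log (landau n)}.Infinite := by
  rw [Set.infinite_iff_exists_gt]
  intro a
  obtain ⟨x, hx, hθ⟩ := h (max 4 a)
  obtain ⟨n, hn, h2⟩ := exists_n ((le_max_left _ _).trans hx) hθ
  have h3 : (a:ℝ) < n := ((le_max_right _ _).trans hx).trans_lt hn
  have h4 : a < n := by exact_mod_cast h3
  exact ⟨n, ⟨by omega, h2⟩, h4⟩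

end LandauAux

section
open MeasureTheory ProbabilityTheory Complex Set

namespace LandauAux

/-- The measure `h(x) dx / x` on `(1, ∞)`. -/
noncomputable def mu (h : ℝ → ℝ) : Measure ℝ :=
  (volume.restrict (Ioi (1:ℝ))).withDensity (fun x => ENNReal.ofReal (h x / x))

lemma integral_mu (h : ℝ → ℝ) (hm : Measurable h) (h0 : ∀ x, 1 < x → 0 ≤ h x) (g : ℝ → ℂ) :
    ∫ x, g x ∂(mu h) = ∫ x in Ioi (1:ℝ), ((h x / x : ℝ) : ℂ) * g x := by
  unfold mu
  rw [integral_withDensity_eq_integral_toReal_smul (by fun_prop) (by simp)]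
  apply setIntegral_congr_fun measurableSet_Ioi
  intro x hx
  have : 0 ≤ h x / x := div_nonneg (h0 x hx) (le_trans zero_le_one (le_of_lt hx))
  simp only [ENNReal.toReal_ofReal this]
  rfl

lemma integrable_mu_iff (h : ℝ → ℝ) (hm : Measurable h) (h0 : ∀ x, 1 < x → 0 ≤ h x) (g : ℝ → ℝ) :
    Integrable g (mu h) ↔ IntegrableOn (fun x => (h x / x) * g x) (Ioi (1:ℝ)) := by
  unfold mu
  rw [integrable_withDensity_iff_integrable_smul' (by fun_prop) (by simp)]
  apply integrable_congr
  filter_upwards [ae_restrict_mem measurableSet_Ioi] with x hx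
  have : 0 ≤ h x / x := div_nonneg (h0 x hx) (le_trans zero_le_one (le_of_lt hx))
  simp only [ENNReal.toReal_ofReal this]
  rfl

lemma mem_expSet (h : ℝ → ℝ) (hm : Measurable h) (h0 : ∀ x, 1 < x → 0 ≤ h x)
    {K r : ℝ} (hK : ∀ x, 1 < x → h x ≤ K * x ^ r) {t : ℝ} (ht : t < -r) :
    t ∈ integrableExpSet Real.log (mu h) := by
  change Integrable _ _
  rw [integrable_mu_iff h hm h0]
  have hi : IntegrableOn (fun x : ℝ => K * x ^ (r - 1 + t)) (Ioi (1:ℝ)) :=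
    (integrableOn_Ioi_rpow_of_lt (by linarith) one_pos).const_mul K
  refine hi.mono' (by fun_prop) ?_
  filter_upwards [ae_restrict_mem measurableSet_Ioi] with x hx
  have hx0 : 0 < x := lt_trans one_pos hx
  have h1 : 0 ≤ h x / x := div_nonneg (h0 x hx) hx0.le
  have e : Real.exp (t * Real.log x) = x ^ t := by
    rw [Real.rpow_def_of_pos hx0, mul_comm]
  rw [e, Real.norm_eq_abs, abs_of_nonneg (by positivity)]
  have h2 : h x / x ≤ K * x ^ r / x := by gcongr; exact hK x hx
  have e2 : K * x ^ (r - 1 + t) = K * x ^ r / x * x ^ t := by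
    rw [Real.rpow_add hx0, Real.rpow_sub hx0, Real.rpow_one]; ring
  rw [e2]
  gcongr

lemma mem_interior_expSet (h : ℝ → ℝ) (hm : Measurable h) (h0 : ∀ x, 1 < x → 0 ≤ h x)
    {K r : ℝ} (hK : ∀ x, 1 < x → h x ≤ K * x ^ r) {t : ℝ} (ht : t < -r) :
    t ∈ interior (integrableExpSet Real.log (mu h)) := by
  rw [mem_interior]
  exact ⟨Iio (-r), fun u hu => mem_expSet h hm h0 hK hu, isOpen_Iio, ht⟩

lemma complexMGF_mu (h : ℝ → ℝ) (hm : Measurable h) (h0 : ∀ x, 1 < x → 0 ≤ h x) (s : ℂ) :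
    complexMGF Real.log (mu h) (-s) = ∫ x in Ioi (1:ℝ), (h x : ℂ) * (x:ℂ) ^ (-(s + 1)) := by
  unfold complexMGF
  rw [integral_mu h hm h0]
  apply setIntegral_congr_fun measurableSet_Ioi
  intro x hx
  have hx0 : 0 < x := lt_trans one_pos hx
  have hx0' : (x:ℂ) ≠ 0 := by exact_mod_cast hx0.ne'
  simp only
  have e1 : cexp (-s * (Real.log x : ℂ)) = (x:ℂ) ^ (-s) := by
    rw [Complex.cpow_def_of_ne_zero hx0', Complex.ofReal_log hx0.le, mul_comm]
  rw [e1, neg_add, Complex.cpow_add _ _ hx0', Complex.cpow_neg_one]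
  push_cast
  ring

/-- The entire xi function (up to a factor). -/
noncomputable def xi (s : ℂ) : ℂ := s * (s - 1) * completedRiemannZeta₀ s + 1

lemma differentiable_xi : Differentiable ℂ xi := by
  unfold xi
  have := differentiable_completedZeta₀
  fun_prop

lemma xi_one_sub (s : ℂ) : xi (1 - s) = xi s := by
  unfold xi; rw [completedRiemannZeta₀_one_sub]; ring

lemma xi_eq {s : ℂ} (h0 : s ≠ 0) (h1 : s ≠ 1) : xi s = s * (s - 1) * completedRiemannZeta s := by
  unfold xi; rw [completedRiemannZeta_eq]
  have : 1 - s ≠ 0 := sub_ne_zero.2 h1.symm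
  field_simp
  ring

/-- the Gamma factor. -/
noncomputable def Ef (s : ℂ) : ℂ := (s * Gammaℝ s)⁻¹

lemma Ef_ne_zero {s : ℂ} (hs : 0 < s.re) : Ef s ≠ 0 := by
  have h0 : s ≠ 0 := by rintro rfl; simp at hs
  exact inv_ne_zero (mul_ne_zero h0 (Gammaℝ_ne_zero_of_re_pos hs))

lemma differentiableAt_Ef {s : ℂ} (hs : 0 < s.re) : DifferentiableAt ℂ Ef s := by
  have h0 : s ≠ 0 := by rintro rfl; simp at hs
  have : Ef = fun s => s⁻¹ * (Gammaℝ s)⁻¹ := by ext s; simp [Ef, mul_comm]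
  rw [this]
  exact (differentiableAt_inv h0).mul (differentiable_Gammaℝ_inv s)

/-- `(s-1) ζ(s)` on `Re s > 0`. -/
noncomputable def zeta1 (s : ℂ) : ℂ := xi s * Ef s

lemma zeta1_eq {s : ℂ} (hs : 0 < s.re) (h1 : s ≠ 1) : zeta1 s = (s - 1) * riemannZeta s := by
  have h0 : s ≠ 0 := by rintro rfl; simp at hs
  have := Gammaℝ_ne_zero_of_re_pos hs
  unfold zeta1 Ef
  rw [xi_eq h0 h1, riemannZeta_def_of_ne_zero h0]
  field_simp

lemma isOpen_halfplane (a : ℝ) : IsOpen {s : ℂ | a < s.re} := isOpen_lt continuous_const Complex.continuous_re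

lemma isPreconnected_halfplane (a : ℝ) : IsPreconnected {s : ℂ | a < s.re} :=
  (convex_halfSpace_re_gt a).isPreconnected

lemma analyticOnNhd_zeta1 : AnalyticOnNhd ℂ zeta1 {s : ℂ | 0 < s.re} := by
  apply DifferentiableOn.analyticOnNhd _ (isOpen_halfplane 0)
  intro s hs
  exact ((differentiable_xi s).mul (differentiableAt_Ef hs)).differentiableWithinAt

lemma analyticOnNhd_mgf_neg (h : ℝ → ℝ) (a : ℝ)
    (hi : ∀ t, t < -a → t ∈ integrableExpSet Real.log (mu h)) :
    AnalyticOnNhd ℂ (fun s => complexMGF Real.log (mu h) (-s)) {s : ℂ | a < s.re} := by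
  intro s hs
  have : AnalyticAt ℂ (complexMGF Real.log (mu h)) (-s) := by
    apply analyticAt_complexMGF
    rw [mem_interior]
    refine ⟨Iio (-a), fun u hu => hi u hu, isOpen_Iio, ?_⟩
    simpa using hs
  exact this.comp (by fun_prop : AnalyticAt ℂ (fun s : ℂ => -s) s)

lemma integral_cpow_aux {s : ℂ} (a : ℝ) (hs : a < s.re) :
    IntegrableOn (fun x : ℝ => (x:ℂ) ^ (a:ℂ) * (x:ℂ) ^ (-(s + 1))) (Ioi (1:ℝ)) ∧
    ∫ x in Ioi (1:ℝ), (x:ℂ) ^ (a:ℂ) * (x:ℂ) ^ (-(s + 1)) = 1 / (s - a) := by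
  have e : ∀ x ∈ Ioi (1:ℝ), (x:ℂ) ^ (a:ℂ) * (x:ℂ) ^ (-(s + 1)) = (x:ℂ) ^ (a - s - 1) := by
    intro x hx
    have hx0' : (x:ℂ) ≠ 0 := by exact_mod_cast (lt_trans one_pos hx).ne'
    rw [← Complex.cpow_add _ _ hx0']; congr 1; ring
  have hre : ((a:ℂ) - s - 1).re < -1 := by simp; linarith
  constructor
  · rw [integrableOn_congr_fun e measurableSet_Ioi]
    exact integrableOn_Ioi_cpow_of_lt hre one_pos
  · rw [setIntegral_congr_fun measurableSet_Ioi e, integral_Ioi_cpow_of_lt hre one_pos]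
    simp only [ofReal_one, one_cpow]
    have : s - a ≠ 0 := by
      intro h; have := congrArg re h; simp at this; linarith
    have h2 : (a:ℂ) - s ≠ 0 := by rw [← neg_sub]; exact neg_ne_zero.2 this
    have h3 : (a:ℂ) - s - 1 + 1 = a - s := by ring
    rw [h3]; rw [← neg_sub s]; rw [div_neg, neg_div, neg_neg]

lemma zeta_floor {s : ℂ} (hs : 1 < s.re) :
    riemannZeta s = s * ∫ x in Ioi (1:ℝ), ((⌊x⌋₊:ℝ) : ℂ) * (x:ℂ) ^ (-(s + 1)) := by
  have := LSeries_eq_mul_integral_of_nonneg (fun _ => 1) (r := 1) zero_le_one (s := s) hs (by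
    simp only [Finset.sum_const, Nat.card_Icc, nsmul_eq_mul, mul_one, Real.rpow_one]
    exact Asymptotics.isBigO_refl _ _) (by simp)
  simp only [ofReal_one, Finset.sum_const, Nat.card_Icc, nsmul_eq_mul, mul_one] at this
  rw [← LSeries_one_eq_riemannZeta hs]
  rw [show (1 : ℕ → ℂ) = fun _ => 1 from rfl, this]
  simp

lemma fract_rep {s : ℂ} (hs : 0 < s.re) :
    zeta1 s = s - s * (s - 1) * complexMGF Real.log (mu Int.fract) (-s) := by
  have hm : Measurable (Int.fract : ℝ → ℝ) := measurable_fract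
  have h0 : ∀ x : ℝ, 1 < x → 0 ≤ Int.fract x := fun x _ => Int.fract_nonneg x
  have hK : ∀ x : ℝ, 1 < x → Int.fract x ≤ 1 * x ^ (0:ℝ) := fun x _ => by
    simpa using (Int.fract_lt_one x).le
  have han : AnalyticOnNhd ℂ (fun s => complexMGF Real.log (mu Int.fract) (-s)) {s : ℂ | 0 < s.re} := by
    apply analyticOnNhd_mgf_neg
    intro t ht
    exact mem_expSet _ hm h0 hK ht
  have hR : AnalyticOnNhd ℂ (fun s => s - s * (s - 1) * complexMGF Real.log (mu Int.fract) (-s)) {s : ℂ | 0 < s.re} := by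
    intro z hz
    have := han z hz
    fun_prop
  have key := analyticOnNhd_zeta1.eqOn_of_preconnected_of_eventuallyEq hR (isPreconnected_halfplane 0)
    (z₀ := 2) (by simp) ?_
  · exact key hs
  filter_upwards [(isOpen_halfplane 1).mem_nhds (by simp : (2:ℂ) ∈ {s : ℂ | 1 < s.re})] with s hs
  have hs' : 1 < s.re := hs
  have hs1 : s ≠ 1 := by rintro rfl; simp at hs'
  rw [zeta1_eq (by linarith) hs1, complexMGF_mu _ hm h0, zeta_floor hs']
  have e : ∀ x ∈ Ioi (1:ℝ), ((⌊x⌋₊:ℝ) : ℂ) * (x:ℂ) ^ (-(s + 1)) =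
      (x:ℂ) ^ ((1:ℝ):ℂ) * (x:ℂ) ^ (-(s + 1)) - ((Int.fract x : ℝ) : ℂ) * (x:ℂ) ^ (-(s + 1)) := by
    intro x hx
    have hx0 : (0:ℝ) ≤ x := (lt_trans one_pos hx).le
    have : (⌊x⌋₊ : ℝ) = x - Int.fract x := by
      rw [Int.fract, natCast_floor_eq_intCast_floor hx0]; ring
    rw [this]; push_cast; rw [Complex.cpow_one]; ring
  rw [setIntegral_congr_fun measurableSet_Ioi e]
  obtain ⟨i1, i2⟩ := integral_cpow_aux (s := s) 1 hs'
  rw [integral_sub i1, i2]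
  · have : s - 1 ≠ 0 := sub_ne_zero.2 hs1
    push_cast
    field_simp
  · have hi : IntegrableOn (fun x : ℝ => x ^ (-s.re - 1)) (Ioi (1:ℝ)) :=
      integrableOn_Ioi_rpow_of_lt (by linarith) one_pos
    refine hi.mono' ?_ ?_
    · apply Measurable.aestronglyMeasurable
      fun_prop
    · filter_upwards [ae_restrict_mem measurableSet_Ioi] with x hx
      have hx0 : (0:ℝ) < x := (lt_trans one_pos hx)
      rw [norm_mul, norm_real, Real.norm_eq_abs, abs_of_nonneg (Int.fract_nonneg x),
        Complex.norm_cpow_eq_rpow_re_of_pos hx0]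
      have : (-(s + 1)).re = -s.re - 1 := by simp; ring
      rw [this]
      have h1 := (Int.fract_lt_one x).le
      have h2 : 0 ≤ x ^ (-s.re - 1) := by positivity
      nlinarith

lemma zeta1_real_ne {σ : ℝ} (h0 : 0 < σ) (h1 : σ ≤ 1) : zeta1 σ ≠ 0 := by
  rw [fract_rep (by simpa using h0)]
  have e : complexMGF Real.log (mu Int.fract) (-(σ:ℂ)) = (mgf Real.log (mu Int.fract) (-σ) : ℝ) := by
    rw [← complexMGF_ofReal]; push_cast; rfl
  rw [e]
  have h2 : 0 ≤ mgf Real.log (mu Int.fract) (-σ) := mgf_nonneg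
  have : (0:ℝ) < σ - σ * (σ - 1) * mgf Real.log (mu Int.fract) (-σ) := by
    have : 0 ≤ σ * (1 - σ) * mgf Real.log (mu Int.fract) (-σ) := by
      apply mul_nonneg _ h2; apply mul_nonneg h0.le; linarith
    nlinarith
  intro h
  have h3 : ((σ - σ * (σ - 1) * mgf Real.log (mu Int.fract) (-σ) : ℝ) : ℂ) = 0 := by
    push_cast; exact h
  rw [ofReal_eq_zero] at h3
  linarith

end LandauAux

end

section
open MeasureTheory ProbabilityTheory Complex Set

namespace LandauAux

lemma landau_ext {Ω : Type*} {m : MeasurableSpace Ω} {X : Ω → ℝ} {μ : Measure Ω}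
    (hX : Measurable X) (hX0 : ∀ᵐ ω ∂μ, 0 ≤ X ω) {t1 r δ : ℝ}
    (ht1 : t1 ∈ interior (integrableExpSet X μ)) {G : ℂ → ℂ}
    (hG : DifferentiableOn ℂ G (Metric.ball (t1:ℂ) r))
    (hGe : G =ᶠ[nhds (t1:ℂ)] complexMGF X μ) (h0 : 0 ≤ δ) (hr : δ < r) :
    t1 + δ ∈ integrableExpSet X μ := by
  have hi := integrable_pow_mul_exp_of_mem_interior_integrableExpSet ht1
  have hs := Complex.hasSum_taylorSeries_on_ball hG (z := ((t1 + δ : ℝ) : ℂ)) (by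
    rw [Metric.mem_ball, dist_eq]; push_cast
    rw [add_sub_cancel_left, norm_real, Real.norm_eq_abs, abs_of_nonneg h0]; exact hr)
  have hd : ∀ n, iteratedDeriv n G (t1:ℂ) = ((∫ ω, X ω ^ n * Real.exp (t1 * X ω) ∂μ : ℝ) : ℂ) := by
    intro n
    rw [hGe.iteratedDeriv_eq n, iteratedDeriv_complexMGF (by simpa using ht1), ← integral_complex_ofReal]
    congr 1; ext ω; push_cast; rfl
  have hs' : Summable (fun n : ℕ => ∫ ω, δ ^ n / n.factorial * (X ω ^ n * Real.exp (t1 * X ω)) ∂μ) := by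
    rw [← Complex.summable_ofReal]
    refine hs.summable.congr fun n => ?_
    rw [hd, integral_const_mul]
    push_cast
    simp only [smul_eq_mul]
    rw [add_sub_cancel_left]
    ring
  change Integrable _ _
  refine ⟨by fun_prop, ?_⟩
  rw [hasFiniteIntegral_iff_ofReal (Filter.Eventually.of_forall fun ω => (Real.exp_pos _).le)]
  have e : ∫⁻ ω, ENNReal.ofReal (Real.exp ((t1 + δ) * X ω)) ∂μ =
      ∫⁻ ω, ∑' n : ℕ, ENNReal.ofReal (δ ^ n / n.factorial * (X ω ^ n * Real.exp (t1 * X ω))) ∂μ := by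
    apply lintegral_congr_ae
    filter_upwards [hX0] with ω hω
    have h1 : HasSum (fun n : ℕ => δ ^ n / n.factorial * (X ω ^ n * Real.exp (t1 * X ω)))
        (Real.exp ((t1 + δ) * X ω)) := by
      have := (by simpa [Real.exp_eq_exp_ℝ] using NormedSpace.expSeries_div_hasSum_exp (𝔸 := ℝ) (δ * X ω) : HasSum (fun n : ℕ => (δ * X ω) ^ n / n.factorial) (Real.exp (δ * X ω))).mul_right (Real.exp (t1 * X ω))
      rw [← Real.exp_add] at this
      rw [show (t1 + δ) * X ω = δ * X ω + t1 * X ω by ring]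
      refine this.congr_fun fun n => ?_
      rw [mul_pow]; ring
    rw [← h1.tsum_eq, ENNReal.ofReal_tsum_of_nonneg _ h1.summable]
    intro n; positivity
  rw [e, lintegral_tsum (by intro n; fun_prop)]
  have e2 : ∀ n : ℕ, ∫⁻ ω, ENNReal.ofReal (δ ^ n / n.factorial * (X ω ^ n * Real.exp (t1 * X ω))) ∂μ =
      ENNReal.ofReal (∫ ω, δ ^ n / n.factorial * (X ω ^ n * Real.exp (t1 * X ω)) ∂μ) := by
    intro n
    rw [ofReal_integral_eq_lintegral_ofReal ((hi n).const_mul _)]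
    filter_upwards [hX0] with ω hω
    simp only [Pi.zero_apply]
    positivity
  simp_rw [e2]
  rw [← ENNReal.ofReal_tsum_of_nonneg _ hs']
  · exact ENNReal.ofReal_lt_top
  · intro n
    apply integral_nonneg_of_ae
    filter_upwards [hX0] with ω hω
    simp only [Pi.zero_apply]
    positivity

/-- The nonnegative function `x + C √x - ψ(x)`. -/
noncomputable def hh (C x : ℝ) : ℝ := x + C * x ^ (1/2 : ℝ) - Chebyshev.psi x

lemma measurable_hh (C : ℝ) : Measurable (hh C) := by
  unfold hh
  have := Chebyshev.psi_mono.measurable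
  fun_prop

lemma hh_le {C : ℝ} (hC : 0 ≤ C) (x : ℝ) (hx : 1 < x) : hh C x ≤ (1 + C) * x ^ (1:ℝ) := by
  unfold hh
  have h1 : x ^ (1/2:ℝ) ≤ x ^ (1:ℝ) := Real.rpow_le_rpow_of_exponent_le hx.le (by norm_num)
  have := Chebyshev.psi_nonneg x
  rw [Real.rpow_one] at *
  nlinarith

lemma deriv_zeta1 {s : ℂ} (hs : 1 < s.re) : deriv zeta1 s = riemannZeta s + (s - 1) * deriv riemannZeta s := by
  have hs1 : s ≠ 1 := by rintro rfl; simp at hs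
  have e : zeta1 =ᶠ[nhds s] fun s => (s - 1) * riemannZeta s := by
    filter_upwards [(isOpen_halfplane 1).mem_nhds hs] with z hz
    have hz' : 1 < z.re := hz
    exact zeta1_eq (by linarith) (by rintro rfl; simp at hz')
  rw [e.deriv_eq]
  have h1 : HasDerivAt (fun s : ℂ => s - 1) 1 s := (hasDerivAt_id s).sub_const 1
  have := (h1.mul (differentiableAt_riemannZeta hs1).hasDerivAt).deriv
  rw [show (fun s : ℂ => (s - 1) * riemannZeta s) = (fun s => s - 1) * riemannZeta from rfl, this]
  ring

lemma psi_laplace {s : ℂ} (hs : 1 < s.re) :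
    -deriv riemannZeta s / riemannZeta s =
      s * ∫ x in Ioi (1:ℝ), ((Chebyshev.psi x : ℝ) : ℂ) * (x:ℂ) ^ (-(s + 1)) := by
  have e0 : ∀ n : ℕ, ∑ k ∈ Finset.Icc 1 n, ArithmeticFunction.vonMangoldt k = Chebyshev.psi n := by
    intro n
    rw [Chebyshev.psi_eq_sum_Icc, Nat.floor_natCast, ← Finset.add_sum_Ioc_eq_sum_Icc (Nat.zero_le n)]
    simp
    rfl
  rw [← ArithmeticFunction.LSeries_vonMangoldt_eq_deriv_riemannZeta_div hs,
    LSeries_eq_mul_integral_of_nonneg (fun n => ArithmeticFunction.vonMangoldt n) (r := 1) zero_le_one hs]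
  · congr 1
    apply setIntegral_congr_fun measurableSet_Ioi
    intro x hx
    simp only
    rw [← Complex.ofReal_sum, e0]
    congr 2
    rw [Chebyshev.psi_eq_sum_Icc, Chebyshev.psi_eq_sum_Icc, Nat.floor_natCast]
  · apply Asymptotics.IsBigO.of_bound (Real.log 4 + 4)
    filter_upwards with n
    rw [e0, Real.rpow_one, Real.norm_eq_abs, abs_of_nonneg (Chebyshev.psi_nonneg _), Real.norm_natCast]
    exact Chebyshev.psi_le_const_mul_self (Nat.cast_nonneg n)
  · intro n; exact ArithmeticFunction.vonMangoldt_nonneg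

variable {C : ℝ}

/-- The Mellin transform of `hh C`. -/
noncomputable def FF (C : ℝ) (s : ℂ) : ℂ := complexMGF Real.log (mu (hh C)) (-s)

lemma FF_right (hC : 0 ≤ C) (hh0 : ∀ x, 1 < x → 0 ≤ hh C x) {s : ℂ} (hs : 1 < s.re) :
    zeta1 s * (s * (s - 1/2) * FF C s - (s - 1/2) - C * s) = (s - 1/2) * deriv zeta1 s := by
  unfold FF
  have hs1 : s ≠ 1 := by rintro rfl; simp at hs
  have hs0 : s ≠ 0 := by rintro rfl; simp at hs; linarith
  have hs2 : s - 1/2 ≠ 0 := by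
    intro h; have := congrArg re h; simp at this; linarith
  have hs1' : s - 1 ≠ 0 := sub_ne_zero.2 hs1
  obtain ⟨i1, j1⟩ := integral_cpow_aux (s := s) 1 hs
  obtain ⟨i2, j2⟩ := integral_cpow_aux (s := s) (1/2) (by linarith)
  have i3 : IntegrableOn (fun x : ℝ => ((Chebyshev.psi x : ℝ) : ℂ) * (x:ℂ) ^ (-(s + 1))) (Ioi (1:ℝ)) := by
    have hi : IntegrableOn (fun x : ℝ => (Real.log 4 + 4) * x ^ (-s.re)) (Ioi (1:ℝ)) :=
      (integrableOn_Ioi_rpow_of_lt (by linarith) one_pos).const_mul _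
    refine hi.mono' ?_ ?_
    · apply Measurable.aestronglyMeasurable
      have := Chebyshev.psi_mono.measurable
      fun_prop
    · filter_upwards [ae_restrict_mem measurableSet_Ioi] with x hx
      have hx0 : (0:ℝ) < x := (lt_trans one_pos hx)
      rw [norm_mul, norm_real, Real.norm_eq_abs, abs_of_nonneg (Chebyshev.psi_nonneg x),
        Complex.norm_cpow_eq_rpow_re_of_pos hx0]
      have : (-(s + 1)).re = -s.re - 1 := by simp; ring
      rw [this]
      have h1 := Chebyshev.psi_le_const_mul_self hx0.le
      have h2 : x ^ (-s.re) = x * x ^ (-s.re - 1) := by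
        rw [Real.rpow_sub hx0, Real.rpow_one]; field_simp
      rw [h2, ← mul_assoc]
      gcongr
  rw [complexMGF_mu _ (measurable_hh C) hh0]
  have e : ∀ x ∈ Ioi (1:ℝ), ((hh C x : ℝ) : ℂ) * (x:ℂ) ^ (-(s + 1)) =
      (x:ℂ) ^ ((1:ℝ):ℂ) * (x:ℂ) ^ (-(s + 1)) + C * ((x:ℂ) ^ ((1/2:ℝ):ℂ) * (x:ℂ) ^ (-(s + 1)))
        - ((Chebyshev.psi x : ℝ) : ℂ) * (x:ℂ) ^ (-(s + 1)) := by
    intro x hx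
    have hx0 : (0:ℝ) ≤ x := (lt_trans one_pos hx).le
    unfold hh
    push_cast
    rw [Complex.ofReal_cpow hx0]
    push_cast
    rw [Complex.cpow_one]; ring
  rw [setIntegral_congr_fun measurableSet_Ioi e, integral_sub _ i3, integral_add i1 (i2.const_mul _),
    integral_const_mul, j1, j2]
  · have h := psi_laplace hs
    have hz : riemannZeta s ≠ 0 := riemannZeta_ne_zero_of_one_le_re hs.le
    have h' : ∫ x in Ioi (1:ℝ), ((Chebyshev.psi x : ℝ) : ℂ) * (x:ℂ) ^ (-(s + 1)) =
        -deriv riemannZeta s / riemannZeta s / s := by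
      rw [h]; field_simp
    rw [h', zeta1_eq (by linarith) hs1, deriv_zeta1 hs]
    push_cast
    have hs2' : s * 2 - 1 ≠ 0 := by
      intro h; apply hs2; linear_combination h / 2
    field_simp
    ring
  · exact i1.add (i2.const_mul _)

lemma FF_identity (hC : 0 ≤ C) (hh0 : ∀ x, 1 < x → 0 ≤ hh C x) {a : ℝ} (ha : 1/2 ≤ a)
    (hi : ∀ t, t < -a → t ∈ integrableExpSet Real.log (mu (hh C))) {s : ℂ} (hs : a < s.re) :
    zeta1 s * (s * (s - 1/2) * FF C s - (s - 1/2) - C * s) = (s - 1/2) * deriv zeta1 s := by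
  have hz : AnalyticOnNhd ℂ zeta1 {s : ℂ | a < s.re} :=
    analyticOnNhd_zeta1.mono (fun s hs => by have : a < s.re := hs; simp; linarith)
  have hF : AnalyticOnNhd ℂ (FF C) {s : ℂ | a < s.re} := analyticOnNhd_mgf_neg _ _ hi
  have hL : AnalyticOnNhd ℂ (fun s => zeta1 s * (s * (s - 1/2) * FF C s - (s - 1/2) - C * s)) {s : ℂ | a < s.re} := by
    intro z hzz
    have := hz z hzz
    have := hF z hzz
    fun_prop
  have hR : AnalyticOnNhd ℂ (fun s => (s - 1/2) * deriv zeta1 s) {s : ℂ | a < s.re} := by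
    intro z hzz
    have := (hz z hzz).deriv
    fun_prop
  have key := hL.eqOn_of_preconnected_of_eventuallyEq hR (isPreconnected_halfplane a)
    (z₀ := ((a + 1 : ℝ) : ℂ)) (by simp) ?_
  · exact key hs
  filter_upwards [(isOpen_halfplane 1).mem_nhds (by simp; linarith : ((a + 1 : ℝ) : ℂ) ∈ {s : ℂ | 1 < s.re})] with s hs
  exact FF_right hC hh0 hs

lemma zeta1_real_ne' {σ : ℝ} (h0 : 0 < σ) : zeta1 σ ≠ 0 := by
  rcases le_or_gt σ 1 with h | h
  · exact zeta1_real_ne h0 h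
  · rw [zeta1_eq (by simpa using h0) (by exact_mod_cast h.ne')]
    refine mul_ne_zero ?_ (riemannZeta_ne_zero_of_one_le_re (by simpa using h.le))
    rw [sub_ne_zero]; exact_mod_cast h.ne'

lemma log_nonneg_mu (h : ℝ → ℝ) : ∀ᵐ x ∂(mu h), 0 ≤ Real.log x := by
  unfold mu
  apply (withDensity_absolutelyContinuous _ _).ae_le
  filter_upwards [ae_restrict_mem measurableSet_Ioi] with x hx
  exact Real.log_nonneg (le_of_lt hx)

lemma expSet_half (hC : 0 ≤ C) (hh0 : ∀ x, 1 < x → 0 ≤ hh C x) {t : ℝ} (ht : t < -(1/2)) :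
    t ∈ integrableExpSet Real.log (mu (hh C)) := by
  by_contra hcon
  set E := integrableExpSet Real.log (mu (hh C)) with hE
  have hE1 : ∀ u, u < -1 → u ∈ E := fun u hu => mem_expSet _ (measurable_hh C) hh0 (hh_le hC) hu
  have hoc : OrdConnected E := (convex_integrableExpSet).ordConnected
  have hub : ∀ u ∈ E, u ≤ t := by
    intro u hu
    by_contra hlt
    push Not at hlt
    have h2 : -2 ∈ E := hE1 _ (by norm_num)
    have ht1 : -1 ≤ t := by
      by_contra h; push Not at h; exact hcon (hE1 t h)
    exact hcon (hoc.out h2 hu ⟨by linarith, hlt.le⟩)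
  have hbdd : BddAbove E := ⟨t, hub⟩
  have hne : E.Nonempty := ⟨-2, hE1 _ (by norm_num)⟩
  set τ := sSup E with hτ
  have hτt : τ ≤ t := csSup_le hne hub
  have hE2 : ∀ u, u < τ → u ∈ E := by
    intro u hu
    obtain ⟨v, hv, huv⟩ := exists_lt_of_lt_csSup hne hu
    rcases lt_or_ge u (-1) with h | h
    · exact hE1 u h
    · exact hoc.out (hE1 (-2) (by norm_num)) hv ⟨by linarith, huv.le⟩
  have hid : ∀ s : ℂ, -τ < s.re → zeta1 s * (s * (s - 1/2) * FF C s - (s - 1/2) - C * s) = (s - 1/2) * deriv zeta1 s :=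
    fun s hs => FF_identity hC hh0 (a := -τ) (by linarith) (by simpa using hE2) hs
  have hz : zeta1 ((-τ : ℝ) : ℂ) ≠ 0 := zeta1_real_ne' (by linarith)
  have hre : (1/2:ℝ) < ((-τ : ℝ) : ℂ).re := by simp only [ofReal_re]; linarith
  have han := analyticOnNhd_zeta1 ((-τ : ℝ) : ℂ) (by simp only [mem_ofPred_eq]; linarith)
  have hev : ∀ᶠ s in nhds ((-τ : ℝ) : ℂ), zeta1 s ≠ 0 ∧ 1/2 < s.re :=
    (han.continuousAt.eventually_ne hz).and ((isOpen_halfplane (1/2)).mem_nhds hre)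
  obtain ⟨ε, hε, hball⟩ := Metric.eventually_nhds_iff.1 hev
  let H : ℂ → ℂ := fun s => (deriv zeta1 s / zeta1 s * (s - 1/2) + (s - 1/2) + C * s) / (s * (s - 1/2))
  have hball' : ∀ w : ℂ, dist w (τ:ℂ) < ε → zeta1 (-w) ≠ 0 ∧ 1/2 < (-w).re := by
    intro w hw
    apply hball
    rw [show (((-τ:ℝ)):ℂ) = -(τ:ℂ) by push_cast; rfl, dist_neg_neg]; exact hw
  have hfin := landau_ext (X := Real.log) (μ := mu (hh C)) (t1 := τ - ε/3) (r := 2 * ε / 3) (δ := ε / 2)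
    (G := fun w => H (-w)) Real.measurable_log (log_nonneg_mu _) ?_ ?_ ?_ (by linarith) (by linarith)
  · have := le_csSup hbdd hfin
    linarith
  · rw [mem_interior]
    exact ⟨Iio τ, fun u hu => hE2 u hu, isOpen_Iio, by simp; linarith⟩
  · intro w hw
    have hw' : dist w (τ:ℂ) < ε := by
      have h1 := Metric.mem_ball.1 hw
      have h2 : dist ((τ - ε/3 : ℝ) : ℂ) (τ : ℂ) = ε / 3 := by
        rw [dist_eq]; push_cast
        rw [sub_sub_cancel_left, norm_neg, show (ε:ℂ)/3 = ((ε/3:ℝ):ℂ) by push_cast; rfl, norm_real, Real.norm_eq_abs, abs_of_pos (by linarith)]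
      have := dist_triangle w ((τ - ε/3 : ℝ) : ℂ) (τ:ℂ)
      linarith
    obtain ⟨hw1, hw2⟩ := hball' w hw'
    have ha : AnalyticAt ℂ zeta1 (-w) := analyticOnNhd_zeta1 _ (by simp only [mem_ofPred_eq]; linarith)
    have hb : -w ≠ 0 := by intro h; rw [h] at hw2; simp at hw2; linarith
    have hc : -w - 1/2 ≠ 0 := by
      intro h; have := congrArg re h; simp at this; simp at hw2; linarith
    have hd : AnalyticAt ℂ H (-w) := by
      have := ha.deriv
      apply AnalyticAt.div
      · apply AnalyticAt.add
        · apply AnalyticAt.add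
          · exact (this.div ha hw1).mul (by fun_prop)
          · fun_prop
        · fun_prop
      · fun_prop
      · exact mul_ne_zero hb hc
    have := hd.differentiableAt
    exact (this.comp w (by fun_prop : DifferentiableAt ℂ (fun w : ℂ => -w) w)).differentiableWithinAt
  · have h1 : ∀ᶠ w in nhds ((τ - ε/3 : ℝ) : ℂ), dist w (τ:ℂ) < ε := by
      apply (Metric.isOpen_ball (x := (τ:ℂ)) (ε := ε)).mem_nhds
      rw [Metric.mem_ball, dist_eq]; push_cast
      rw [sub_sub_cancel_left, norm_neg, show (ε:ℂ)/3 = ((ε/3:ℝ):ℂ) by push_cast; rfl, norm_real, Real.norm_eq_abs, abs_of_pos (by linarith)]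
      linarith
    have h2 : ∀ᶠ w in nhds ((τ - ε/3 : ℝ) : ℂ), w.re < τ := by
      apply (isOpen_lt continuous_re continuous_const).mem_nhds
      simp only [mem_ofPred_eq, ofReal_re]; linarith
    filter_upwards [h1, h2] with w hw hw3
    obtain ⟨hw1, hw2⟩ := hball' w hw
    have hb : -w ≠ 0 := by intro h; rw [h] at hw2; simp at hw2; linarith
    have hc : -w - 1/2 ≠ 0 := by
      intro h; have := congrArg re h; simp at this; simp at hw2; linarith
    have h := hid (-w) (by simp; linarith)
    have : complexMGF Real.log (mu (hh C)) w = FF C (-w) := by simp [FF]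
    rw [this]
    simp only [H]
    rw [div_eq_iff (mul_ne_zero hb hc)]
    generalize -w = s at *
    have h' : deriv zeta1 s / zeta1 s * (s - 1/2) = (s * (s - 1/2) * FF C s - (s - 1/2) - C * s) := by
      rw [div_mul_eq_mul_div, div_eq_iff hw1]; linear_combination -h
    rw [h']; ring

lemma logDeriv_tendsto {f : ℂ → ℂ} {ρ : ℂ} (hf : AnalyticAt ℂ f ρ) (hne : analyticOrderAt f ρ ≠ ⊤) :
    Filter.Tendsto (fun s => (s - ρ) * (deriv f s / f s)) (nhdsWithin ρ {ρ}ᶜ)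
      (nhds (analyticOrderNatAt f ρ : ℂ)) := by
  obtain ⟨g, hg, hg0, hfg⟩ := (hf.analyticOrderAt_ne_top).1 hne
  set m := analyticOrderNatAt f ρ with hm
  have e : ∀ᶠ s in nhdsWithin ρ {ρ}ᶜ, m + (s - ρ) * (deriv g s / g s) = (s - ρ) * (deriv f s / f s) := by
    have h1 : ∀ᶠ s in nhds ρ, f =ᶠ[nhds s] fun z => (z - ρ) ^ m • g z := hfg.eventually_nhds
    have h2 : ∀ᶠ s in nhds ρ, AnalyticAt ℂ g s := hg.eventually_analyticAt
    have h3 : ∀ᶠ s in nhds ρ, g s ≠ 0 := hg.continuousAt.eventually_ne hg0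
    filter_upwards [nhdsWithin_le_nhds h1, nhdsWithin_le_nhds h2, nhdsWithin_le_nhds h3, self_mem_nhdsWithin] with s k1 k2 k3 k4
    have k4' : s - ρ ≠ 0 := sub_ne_zero.2 k4
    have d1 : HasDerivAt (fun z => (z - ρ) ^ m) (m * (s - ρ) ^ (m - 1) * 1) s :=
      ((hasDerivAt_id s).sub_const ρ).pow m
    have d2 := (d1.mul k2.differentiableAt.hasDerivAt)
    have d3 : deriv f s = _ := (k1.deriv_eq).trans d2.deriv
    rw [d3, k1.eq_of_nhds]
    simp only [smul_eq_mul, mul_one]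
    rcases Nat.eq_zero_or_pos m with h | h
    · simp [h]
    · obtain ⟨k, hk⟩ := Nat.exists_eq_succ_of_ne_zero h.ne'
      rw [hk]
      simp only [Nat.succ_eq_add_one, Nat.add_sub_cancel, pow_succ]
      field_simp
  refine Filter.Tendsto.congr' e ?_
  have hc : ContinuousAt (fun s => (m:ℂ) + (s - ρ) * (deriv g s / g s)) ρ := by
    have := hg.deriv.continuousAt
    have := hg.continuousAt
    fun_prop (disch := assumption)
  have := hc.tendsto
  simp only [sub_self, zero_mul, add_zero] at this
  exact this.mono_left nhdsWithin_le_nhds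

lemma zeta1_order_ne_top {s : ℂ} (hs : 0 < s.re) : analyticOrderAt zeta1 s ≠ ⊤ := by
  intro h
  rw [analyticOrderAt_eq_top] at h
  have := analyticOnNhd_zeta1.eqOn_zero_of_preconnected_of_eventuallyEq_zero (isPreconnected_halfplane 0) hs h
  have h1 : zeta1 ((1:ℝ):ℂ) = 0 := this (by simp)
  exact zeta1_real_ne one_pos le_rfl h1

lemma FF_analytic (hC : 0 ≤ C) (hh0 : ∀ x, 1 < x → 0 ≤ hh C x) :
    AnalyticOnNhd ℂ (FF C) {s : ℂ | 1/2 < s.re} :=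
  analyticOnNhd_mgf_neg _ _ (fun _ ht => expSet_half hC hh0 ht)

lemma zeta1_ne_zero (hC : 0 ≤ C) (hh0 : ∀ x, 1 < x → 0 ≤ hh C x) {ρ : ℂ} (hρ : 1/2 < ρ.re) : zeta1 ρ ≠ 0 := by
  have han := analyticOnNhd_zeta1 ρ (by simp only [mem_ofPred_eq]; linarith)
  have hot := zeta1_order_ne_top (s := ρ) (by linarith)
  have h1 := logDeriv_tendsto han hot
  have hF := FF_analytic hC hh0 ρ hρ
  have hc : ρ - 1/2 ≠ 0 := by
    intro h; have := congrArg re h; simp at this; linarith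
  have hK : ContinuousAt (fun s => (s - ρ) * ((s * (s - 1/2) * FF C s - (s - 1/2) - C * s) / (s - 1/2))) ρ := by
    have := hF.continuousAt
    fun_prop (disch := assumption)
  have hK' := hK.tendsto
  simp only [sub_self, zero_mul] at hK'
  have e : (fun s => (s - ρ) * ((s * (s - 1/2) * FF C s - (s - 1/2) - C * s) / (s - 1/2))) =ᶠ[nhdsWithin ρ {ρ}ᶜ]
      (fun s => (s - ρ) * (deriv zeta1 s / zeta1 s)) := by
    have g1 : ∀ᶠ s in nhdsWithin ρ {ρ}ᶜ, zeta1 s ≠ 0 := by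
      rcases han.eventually_eq_zero_or_eventually_ne_zero with h | h
      · exact absurd (analyticOrderAt_eq_top.2 h) hot
      · exact h
    have g2 : ∀ᶠ s in nhdsWithin ρ {ρ}ᶜ, 1/2 < s.re :=
      nhdsWithin_le_nhds ((isOpen_halfplane (1/2)).mem_nhds hρ)
    filter_upwards [g1, g2] with s k1 k2
    have hc : s - 1/2 ≠ 0 := by
      intro h; have := congrArg re h; simp at this; linarith
    have := FF_identity hC hh0 le_rfl (fun _ ht => expSet_half hC hh0 ht) k2
    congr 1
    rw [div_eq_div_iff hc k1]
    linear_combination this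
  have h2 := (hK'.mono_left nhdsWithin_le_nhds).congr' e
  have h3 := tendsto_nhds_unique h1 h2
  have h4 : analyticOrderNatAt zeta1 ρ = 0 := by exact_mod_cast h3
  have h5 : analyticOrderAt zeta1 ρ = 0 := by
    rw [← Nat.cast_analyticOrderNatAt hot, h4]; rfl
  exact han.analyticOrderAt_eq_zero.1 h5

lemma zeta1_eq_zero_iff {s : ℂ} (hs : 0 < s.re) : zeta1 s = 0 ↔ xi s = 0 := by
  unfold zeta1
  simp [Ef_ne_zero hs]

lemma xi_zero_re (hC : 0 ≤ C) (hh0 : ∀ x, 1 < x → 0 ≤ hh C x) {ρ : ℂ} (hρ : xi ρ = 0) : ρ.re = 1/2 := by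
  rcases lt_trichotomy ρ.re (1/2) with h | h | h
  · exfalso
    have h1 : (1/2:ℝ) < (1 - ρ).re := by simp only [sub_re, one_re]; linarith
    refine zeta1_ne_zero hC hh0 h1 ?_
    rw [zeta1_eq_zero_iff (by linarith), xi_one_sub, hρ]
  · exact h
  · exact absurd ((zeta1_eq_zero_iff (by linarith)).2 hρ) (zeta1_ne_zero hC hh0 h)

/-- Multiplicity of the zero of `xi` at `1/2 + i λ`. -/
noncomputable def mult (l : ℝ) : ℕ := analyticOrderNatAt xi (1/2 + l * I)

lemma mult_eq (l : ℝ) : analyticOrderNatAt zeta1 (1/2 + l * I) = mult l := by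
  have hre : 0 < (1/2 + l * I : ℂ).re := by simp
  have h1 : AnalyticAt ℂ xi (1/2 + l * I) := differentiable_xi.analyticAt _
  have h2 : AnalyticAt ℂ Ef (1/2 + l * I) := by
    have : AnalyticOnNhd ℂ Ef {s : ℂ | 0 < s.re} :=
      DifferentiableOn.analyticOnNhd (fun s hs => (differentiableAt_Ef hs).differentiableWithinAt) (isOpen_halfplane 0)
    exact this _ hre
  unfold mult analyticOrderNatAt
  congr 1
  have h3 : analyticOrderAt Ef (1/2 + l * I) = 0 := h2.analyticOrderAt_eq_zero.2 (Ef_ne_zero hre)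
  rw [show zeta1 = xi * Ef from rfl, analyticOrderAt_mul h1 h2, h3, add_zero]

/-- boundary residue. -/
noncomputable def bb (C l : ℝ) : ℂ := (if l = 0 then (C:ℂ) else 0) + mult l / (1/2 + l * I)

lemma FF_boundary (hC : 0 ≤ C) (hh0 : ∀ x, 1 < x → 0 ≤ hh C x) (l : ℝ) :
    Filter.Tendsto (fun σ : ℝ => (σ:ℂ) * FF C (1/2 + σ + l * I)) (nhdsWithin 0 (Ioi 0)) (nhds (bb C l)) := by
  have hre : 0 < (1/2 + l * I : ℂ).re := by simp
  have h1 := logDeriv_tendsto (analyticOnNhd_zeta1 _ hre) (zeta1_order_ne_top hre)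
  rw [mult_eq] at h1
  have hρ : (1/2 + l * I : ℂ) ≠ 0 := by intro h; rw [h] at hre; simp at hre
  have hmap : Filter.Tendsto (fun σ : ℝ => (1/2 + σ + l * I : ℂ)) (nhdsWithin 0 (Ioi 0))
      (nhdsWithin (1/2 + l * I) {(1/2 + l * I : ℂ)}ᶜ) := by
    apply tendsto_nhdsWithin_of_tendsto_nhds_of_eventually_within
    · have : Continuous (fun σ : ℝ => (1/2 + σ + l * I : ℂ)) := by fun_prop
      have := this.tendsto 0
      simp only [ofReal_zero, add_zero] at this
      exact this.mono_left nhdsWithin_le_nhds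
    · filter_upwards [self_mem_nhdsWithin] with σ hσ
      simp only [mem_compl_iff, mem_singleton_iff]
      intro h
      have := congrArg re h
      simp at this
      exact (ne_of_gt (mem_Ioi.1 hσ)) this
  have h2 := h1.comp hmap
  have h3 : Filter.Tendsto (fun σ : ℝ => (1/2 + σ + l * I : ℂ)) (nhdsWithin 0 (Ioi 0)) (nhds (1/2 + l * I)) :=
    hmap.mono_right nhdsWithin_le_nhds
  have h4 : Filter.Tendsto (fun σ : ℝ => (σ : ℂ)) (nhdsWithin 0 (Ioi 0)) (nhds 0) := by
    have := Complex.continuous_ofReal.tendsto 0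
    rw [ofReal_zero] at this
    exact this.mono_left nhdsWithin_le_nhds
  have h5 : Filter.Tendsto (fun σ : ℝ => (C:ℂ) * (σ / (σ + l * I))) (nhdsWithin 0 (Ioi 0))
      (nhds (if l = 0 then (C:ℂ) else 0)) := by
    split_ifs with hl
    · refine Filter.Tendsto.congr' ?_ tendsto_const_nhds
      filter_upwards [self_mem_nhdsWithin] with σ hσ
      have : (σ:ℂ) ≠ 0 := by exact_mod_cast (ne_of_gt (mem_Ioi.1 hσ))
      simp [hl, this]
    · have hl' : (0 + l * I : ℂ) ≠ 0 := by simp [hl]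
      have := ((h4.div (h4.add_const (l * I : ℂ)) hl').const_mul (C:ℂ))
      simpa using this
  have h6 := ((h2.div h3 hρ).add (h4.div h3 hρ)).add h5
  have e : bb C l = mult l / (1/2 + l * I) + 0 / (1/2 + l * I) + (if l = 0 then (C:ℂ) else 0) := by
    unfold bb; ring
  rw [e]
  refine h6.congr' ?_
  filter_upwards [self_mem_nhdsWithin] with σ hσ
  have hσ' : 0 < σ := hσ
  set s : ℂ := 1/2 + σ + l * I with hs
  have hsre : 1/2 < s.re := by simp [hs]; linarith
  have k := FF_identity hC hh0 le_rfl (fun _ ht => expSet_half hC hh0 ht) hsre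
  have kz := zeta1_ne_zero hC hh0 hsre
  have hs0 : s ≠ 0 := by intro h; rw [h] at hsre; simp at hsre; linarith
  have hc : s - 1/2 ≠ 0 := by
    intro h; have := congrArg re h; simp at this; linarith
  have e1 : (σ + l * I : ℂ) = s - 1/2 := by rw [hs]; ring
  have e2 : s - (1/2 + l * I) = σ := by rw [hs]; ring
  simp only [Function.comp, ← hs, Pi.div_apply]
  rw [e1, e2]
  have k' : FF C s = (deriv zeta1 s / zeta1 s * (s - 1/2) + (s - 1/2) + C * s) / (s * (s - 1/2)) := by
    rw [eq_div_iff (mul_ne_zero hs0 hc)]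
    have h' : deriv zeta1 s / zeta1 s * (s - 1/2) = (s * (s - 1/2) * FF C s - (s - 1/2) - C * s) := by
      rw [div_mul_eq_mul_div, div_eq_iff kz]; linear_combination -k
    rw [h']; ring
  rw [k']
  generalize deriv zeta1 s / zeta1 s = L
  generalize s - 1/2 = u at *
  field_simp

end LandauAux

end

section
open MeasureTheory ProbabilityTheory Complex Set

namespace LandauAux
variable {C : ℝ}

lemma FF_posdef (hC : 0 ≤ C) (hh0 : ∀ x, 1 < x → 0 ≤ hh C x) (A : Finset ℝ) (v : ℝ) {σ : ℝ} (hσ : 0 < σ) :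
    0 ≤ (∑ j ∈ A, ∑ k ∈ A, (σ * FF C (1/2 + σ + (j - k : ℝ) * I)) * cexp (-((j - k : ℝ) * I * v))).re := by
  have hi : ∀ l : ℝ, Integrable (fun x => cexp (-(1/2 + σ + l * I) * (Real.log x : ℂ))) (mu (hh C)) := by
    intro l
    apply integrable_cexp_mul_of_re_mem_integrableExpSet Real.measurable_log.aemeasurable
    apply expSet_half hC hh0
    simp
    linarith
  have e : ∑ j ∈ A, ∑ k ∈ A, (σ * FF C (1/2 + σ + (j - k : ℝ) * I)) * cexp (-((j - k : ℝ) * I * v)) =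
      ∫ x, ((σ * Real.exp (-(1/2 + σ) * Real.log x) * normSq (∑ j ∈ A, cexp (-(j * I * (Real.log x + v)))) : ℝ) : ℂ) ∂(mu (hh C)) := by
    have : ∀ x : ℝ, ((σ * Real.exp (-(1/2 + σ) * Real.log x) * normSq (∑ j ∈ A, cexp (-(j * I * (Real.log x + v)))) : ℝ) : ℂ)
        = ∑ j ∈ A, ∑ k ∈ A, (σ * cexp (-((j - k : ℝ) * I * v))) * cexp (-(1/2 + σ + (j - k : ℝ) * I) * (Real.log x : ℂ)) := by
      intro x
      push_cast
      rw [normSq_eq_conj_mul_self, map_sum, mul_comm (∑ j ∈ A, _), Finset.sum_mul_sum, Finset.mul_sum]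
      refine Finset.sum_congr rfl fun j _ => ?_
      rw [Finset.mul_sum]
      refine Finset.sum_congr rfl fun k _ => ?_
      rw [← Complex.exp_conj]
      rw [mul_assoc, mul_assoc (σ:ℂ)]
      congr 1
      rw [← Complex.exp_add, ← Complex.exp_add, ← Complex.exp_add]
      congr 1
      simp only [map_neg, map_mul, map_add, conj_ofReal, conj_I]
      ring
    simp_rw [this]
    rw [integral_finsetSum]
    · refine Finset.sum_congr rfl fun j _ => ?_
      rw [integral_finsetSum]
      · refine Finset.sum_congr rfl fun k _ => ?_
        rw [integral_const_mul]
        unfold FF complexMGF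
        ring
      · intro k _
        exact (hi _).const_mul _
    · intro j _
      apply integrable_finsetSum
      intro k _
      exact (hi _).const_mul _
  rw [e, integral_complex_ofReal, ofReal_re]
  apply integral_nonneg
  intro x
  have := normSq_nonneg (∑ j ∈ A, cexp (-(j * I * (Real.log x + v))))
  simp only [Pi.zero_apply]
  positivity

lemma bb_posdef (hC : 0 ≤ C) (hh0 : ∀ x, 1 < x → 0 ≤ hh C x) (A : Finset ℝ) (v : ℝ) :
    0 ≤ (∑ j ∈ A, ∑ k ∈ A, bb C (j - k) * cexp (-((j - k : ℝ) * I * v))).re := by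
  have h : Filter.Tendsto (fun σ : ℝ => ∑ j ∈ A, ∑ k ∈ A, (σ * FF C (1/2 + σ + (j - k : ℝ) * I)) * cexp (-((j - k : ℝ) * I * v)))
     (nhdsWithin 0 (Ioi 0)) (nhds (∑ j ∈ A, ∑ k ∈ A, bb C (j - k) * cexp (-((j - k : ℝ) * I * v)))) := by
    apply tendsto_finsetSum; intro j _
    apply tendsto_finsetSum; intro k _
    exact (FF_boundary hC hh0 (j - k)).mul_const _
  have h2 := (Complex.continuous_re.tendsto _).comp h
  refine ge_of_tendsto h2 ?_
  filter_upwards [self_mem_nhdsWithin] with σ hσ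
  exact FF_posdef hC hh0 A v hσ

/-- smoothed kernel. -/
noncomputable def beta (C a l : ℝ) : ℝ :=
  (if l = 0 then C else 0) + mult l * (a * (a / 2 - l ^ 2) / ((1/4 + l ^ 2) * (a ^ 2 + l ^ 2)))

lemma beta_eq (C : ℝ) {a : ℝ} (ha : 0 < a) (l : ℝ) : (bb C l * (a / (a + l * I))).re = beta C a l := by
  have h1 : (1/2 + l * I : ℂ) ≠ 0 := by
    intro h; have := congrArg re h; simp at this
  have h2 : (a + l * I : ℂ) ≠ 0 := by
    intro h; have := congrArg re h; simp at this; linarith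
  have h1' : (1/2 - l * I : ℂ) ≠ 0 := by
    intro h; have := congrArg re h; simp at this
  have h2' : (a - l * I : ℂ) ≠ 0 := by
    intro h; have := congrArg re h; simp at this; linarith
  have p1 : (0:ℝ) < 1/4 + l^2 := by positivity
  have p2 : (0:ℝ) < a^2 + l^2 := by positivity
  have e1 : ((1/4 + l^2 : ℝ) : ℂ) = (1/2 + l * I) * (1/2 - l * I) := by
    push_cast; ring_nf; rw [I_sq]; ring
  have e2 : ((a^2 + l^2 : ℝ) : ℂ) = (a + l * I) * (a - l * I) := by
    push_cast; ring_nf; rw [I_sq]; ring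
  have e3 : (a / ((1/2 + l * I) * (a + l * I)) : ℂ) =
      ((a / ((1/4 + l ^ 2) * (a ^ 2 + l ^ 2)) : ℝ) : ℂ) * (((a/2 - l^2 : ℝ) : ℂ) - ((l * (a + 1/2) : ℝ) : ℂ) * I) := by
    rw [ofReal_div, ofReal_mul, e1, e2]
    rw [div_mul_eq_mul_div, div_eq_div_iff (mul_ne_zero h1 h2) (mul_ne_zero (mul_ne_zero h1 h1') (mul_ne_zero h2 h2'))]
    have : (((a/2 - l^2 : ℝ) : ℂ) - ((l * (a + 1/2) : ℝ) : ℂ) * I) = (1/2 - l * I) * (a - l * I) := by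
      push_cast; ring_nf; rw [I_sq]; ring
    rw [this]; ring
  have e4 : bb C l * (a / (a + l * I)) = ((if l = 0 then C else 0 : ℝ) : ℂ) + ((mult l : ℝ) : ℂ) * (a / ((1/2 + l * I) * (a + l * I))) := by
    unfold bb
    rw [add_mul]
    congr 1
    · split_ifs with h
      · have : (a:ℂ) ≠ 0 := by exact_mod_cast ha.ne'
        simp [h, this]
      · simp
    · push_cast; field_simp
  rw [e4, e3, add_re, ofReal_re, re_ofReal_mul, re_ofReal_mul]
  simp only [sub_re, ofReal_re, re_ofReal_mul, I_re, mul_zero, sub_zero]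
  unfold beta
  ring

lemma beta_posdef (hC : 0 ≤ C) (hh0 : ∀ x, 1 < x → 0 ≤ hh C x) (A : Finset ℝ) {a : ℝ} (ha : 0 < a) :
    0 ≤ ∑ j ∈ A, ∑ k ∈ A, beta C a (j - k) := by
  have hi : ∀ l : ℝ, IntegrableOn (fun v : ℝ => cexp (-(a + l * I) * v)) (Ioi 0) := by
    intro l
    exact integrableOn_exp_mul_complex_Ioi (by simp; linarith) 0
  have hI : ∀ l : ℝ, ∫ v : ℝ in Ioi 0, cexp (-(a + l * I) * v) = 1 / (a + l * I) := by
    intro l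
    rw [integral_exp_mul_complex_Ioi (by simp; linarith)]
    simp
    rw [← neg_add_rev, neg_div_neg_eq, one_div, add_comm]
  have e : ∫ v : ℝ in Ioi 0, ∑ j ∈ A, ∑ k ∈ A, (a * bb C (j - k)) * cexp (-(a + (j - k : ℝ) * I) * v) =
      ∑ j ∈ A, ∑ k ∈ A, bb C (j - k) * (a / (a + (j - k : ℝ) * I)) := by
    rw [integral_finsetSum]
    · refine Finset.sum_congr rfl fun j _ => ?_
      rw [integral_finsetSum]
      · refine Finset.sum_congr rfl fun k _ => ?_
        rw [integral_const_mul, hI]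
        ring
      · intro k _
        exact (hi _).const_mul _
    · intro j _
      apply integrable_finsetSum
      intro k _
      exact (hi _).const_mul _
  have e2 : ∑ j ∈ A, ∑ k ∈ A, beta C a (j - k) = (∑ j ∈ A, ∑ k ∈ A, bb C (j - k) * (a / (a + (j - k : ℝ) * I))).re := by
    simp only [re_sum, beta_eq C ha]
  rw [e2, ← e]
  have hintg : Integrable (fun v : ℝ => ∑ j ∈ A, ∑ k ∈ A, (a * bb C (j - k)) * cexp (-(a + (j - k : ℝ) * I) * v)) (volume.restrict (Ioi 0)) := by
    apply integrable_finsetSum; intro j _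
    apply integrable_finsetSum; intro k _
    exact (hi _).const_mul _
  have e3 := integral_re hintg
  simp only [RCLike.re_eq_complex_re] at e3
  rw [← e3]
  apply integral_nonneg
  intro v
  have h := bb_posdef hC hh0 A v
  have e4 : ∑ j ∈ A, ∑ k ∈ A, (a * bb C (j - k)) * cexp (-(a + (j - k : ℝ) * I) * v) =
     ((a * Real.exp (-a * v) : ℝ) : ℂ) * ∑ j ∈ A, ∑ k ∈ A, bb C (j - k) * cexp (-((j - k : ℝ) * I * v)) := by
    rw [Finset.mul_sum]
    refine Finset.sum_congr rfl fun j _ => ?_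
    rw [Finset.mul_sum]
    refine Finset.sum_congr rfl fun k _ => ?_
    have : cexp (-(a + (j - k : ℝ) * I) * v) = cexp (-a * v) * cexp (-((j - k : ℝ) * I * v)) := by
      rw [← Complex.exp_add]; congr 1; ring
    rw [this]; push_cast; ring
  simp only [Pi.zero_apply]
  rw [e4, re_ofReal_mul]
  positivity

lemma folner (S : Finset ℝ) {ε : ℝ} (hε : 0 < ε) :
    ∃ A : Finset ℝ, A.Nonempty ∧ ∀ s ∈ S, (1 - ε) * A.card ≤ ((A.filter (fun j => j - s ∈ A)).card : ℝ) := by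
  classical
  let B : ℕ → Finset ℝ := fun N => (S.pi (fun _ => Finset.range N)).image (fun f => ∑ s ∈ S.attach, (f s.1 s.2 : ℝ) * s.1)
  have hcard : ∀ N, (B N).card ≤ N ^ S.card := by
    intro N
    refine Finset.card_image_le.trans ?_
    rw [Finset.card_pi]; simp
  have hmono : ∀ N, B N ⊆ B (N+1) := by
    intro N
    apply Finset.image_subset_image
    intro f hf
    rw [Finset.mem_pi] at *
    intro s hs
    have := Finset.mem_range.1 (hf s hs)
    exact Finset.mem_range.2 (by omega)
  have hshift : ∀ N, ∀ s ∈ S, (B N).image (fun x => x + s) ⊆ B (N+1) := by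
    intro N s hs x hx
    obtain ⟨y, hy, rfl⟩ := Finset.mem_image.1 hx
    obtain ⟨f, hf, rfl⟩ := Finset.mem_image.1 hy
    rw [Finset.mem_pi] at hf
    refine Finset.mem_image.2 ⟨fun t ht => f t ht + if t = s then 1 else 0, ?_, ?_⟩
    · rw [Finset.mem_pi]
      intro t ht
      have := Finset.mem_range.1 (hf t ht)
      refine Finset.mem_range.2 ?_
      split_ifs <;> omega
    · push_cast
      simp only [add_mul, Finset.sum_add_distrib]
      congr 1
      rw [Finset.sum_eq_single ⟨s, hs⟩]
      · simp
      · intro b _ hb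
        have : b.1 ≠ s := fun h => hb (Subtype.ext h)
        simp [this]
      · intro h; exact absurd (Finset.mem_attach _ _) h
  have hne : (B 1).Nonempty := by
    refine ⟨_, Finset.mem_image_of_mem _ (a := fun _ _ => 0) ?_⟩
    rw [Finset.mem_pi]; intro s hs; simp
  have hne' : ∀ N, (B (N+1)).Nonempty := by
    intro N
    induction N with
    | zero => exact hne
    | succ n ih => exact ih.mono (hmono _)
  have hex : ∃ N, ((B (N+2)).card : ℝ) ≤ (1 + ε) * (B (N+1)).card := by
    by_contra hcon
    push Not at hcon
    have hgrow : ∀ N, (1 + ε) ^ N ≤ ((B (N+1)).card : ℝ) := by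
      intro N
      induction N with
      | zero => simpa using hne.card_pos
      | succ n ih =>
        rw [pow_succ]
        have := hcon n
        nlinarith
    have hlim : Filter.Tendsto (fun n : ℕ => (n:ℝ) ^ S.card / (1 + ε) ^ n) Filter.atTop (nhds 0) :=
      tendsto_pow_const_div_const_pow_of_one_lt _ (by linarith)
    have hlim2 := hlim.comp (Filter.tendsto_add_atTop_nat 1)
    have hpos : 0 < 1 / (1 + ε) := by positivity
    obtain ⟨n, hn⟩ := ((tendsto_order.1 hlim2).2 _ hpos).exists
    have h1 := hgrow n
    have h2 : ((B (n+1)).card : ℝ) ≤ ((n+1 : ℕ) : ℝ) ^ S.card := by exact_mod_cast hcard (n+1)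
    simp only [Function.comp] at hn
    rw [div_lt_div_iff₀ (by positivity) (by positivity), one_mul, pow_succ] at hn
    nlinarith
  obtain ⟨N, hN⟩ := hex
  refine ⟨B (N+1), hne' N, fun s hs => ?_⟩
  have h1 : (B (N+1) ∪ (B (N+1)).image (fun x => x + s)).card ≤ (B (N+2)).card :=
    Finset.card_le_card (Finset.union_subset (hmono _) (hshift _ s hs))
  have h2 := Finset.card_union_add_card_inter (B (N+1)) ((B (N+1)).image (fun x => x + s))
  have h3 : ((B (N+1)).image (fun x => x + s)).card = (B (N+1)).card :=
    Finset.card_image_of_injective _ (add_left_injective s)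
  have h4 : B (N+1) ∩ (B (N+1)).image (fun x => x + s) = (B (N+1)).filter (fun j => j - s ∈ B (N+1)) := by
    ext j
    simp only [Finset.mem_inter, Finset.mem_filter, Finset.mem_image]
    constructor
    · rintro ⟨h, y, hy, rfl⟩
      exact ⟨h, by simpa using hy⟩
    · rintro ⟨h, h'⟩
      exact ⟨h, _, h', by ring⟩
  rw [h4, h3] at h2
  have h5 : ((B (N+1) ∪ (B (N+1)).image (fun x => x + s)).card : ℝ) + ((B (N+1)).filter (fun j => j - s ∈ B (N+1))).card
     = (B (N+1)).card + (B (N+1)).card := by exact_mod_cast h2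
  have h6 : ((B (N+1) ∪ (B (N+1)).image (fun x => x + s)).card : ℝ) ≤ (B (N+2)).card := by exact_mod_cast h1
  nlinarith

lemma sum_nonneg_of_posdef (β : ℝ → ℝ) (hβ : ∀ A : Finset ℝ, 0 ≤ ∑ j ∈ A, ∑ k ∈ A, β (j - k))
    (S : Finset ℝ) (hS : ∀ s, s ∉ S → β s ≤ 0) : 0 ≤ ∑ s ∈ S, β s := by
  classical
  by_contra hcon
  push Not at hcon
  set T := ∑ s ∈ S, |β s| with hT
  have hT0 : 0 ≤ T := Finset.sum_nonneg fun _ _ => abs_nonneg _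
  set ε := -(∑ s ∈ S, β s) / (2 * (T + 1)) with hε
  have hε0 : 0 < ε := by apply div_pos <;> linarith
  obtain ⟨A, hA, hA2⟩ := folner S hε0
  have h1 : ∑ j ∈ A, ∑ k ∈ A, β (j - k) ≤ ∑ j ∈ A, ∑ k ∈ A, ∑ s ∈ S, if j - s = k then β s else 0 := by
    refine Finset.sum_le_sum fun j _ => Finset.sum_le_sum fun k _ => ?_
    by_cases h : j - k ∈ S
    · rw [Finset.sum_eq_single (j - k)]
      · simp
      · intro b _ hb
        rw [if_neg]
        intro h'; apply hb; rw [← h']; ring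
      · intro h'; exact absurd h h'
    · rw [Finset.sum_eq_zero]
      · exact hS _ h
      · intro s hs
        rw [if_neg]
        intro h'; apply h; rw [← h']; simpa using hs
  have h2 : ∑ j ∈ A, ∑ k ∈ A, ∑ s ∈ S, (if j - s = k then β s else 0) =
      ∑ s ∈ S, ((A.filter (fun j => j - s ∈ A)).card : ℝ) * β s := by
    have : ∀ j ∈ A, ∑ k ∈ A, ∑ s ∈ S, (if j - s = k then β s else 0) = ∑ s ∈ S, if j - s ∈ A then β s else 0 := by
      intro j _
      rw [Finset.sum_comm]
      refine Finset.sum_congr rfl fun s _ => ?_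
      rw [Finset.sum_ite_eq]
    rw [Finset.sum_congr rfl this, Finset.sum_comm]
    refine Finset.sum_congr rfl fun s _ => ?_
    rw [← Finset.sum_filter, Finset.sum_const, nsmul_eq_mul]
  have hc : (0:ℝ) < A.card := by exact_mod_cast hA.card_pos
  have h3 : ∑ s ∈ S, ((A.filter (fun j => j - s ∈ A)).card : ℝ) * β s ≤ ∑ s ∈ S, (A.card * β s + A.card * ε * |β s|) := by
    refine Finset.sum_le_sum fun s hs => ?_
    have k1 := hA2 s hs
    have k2 : ((A.filter (fun j => j - s ∈ A)).card : ℝ) ≤ A.card := by exact_mod_cast Finset.card_filter_le _ _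
    rcases abs_cases (β s) with ⟨h, h'⟩ | ⟨h, h'⟩
    · rw [h]
      have : 0 ≤ (A.card : ℝ) * ε * β s := by positivity
      nlinarith
    · rw [h]; nlinarith
  rw [Finset.sum_add_distrib, ← Finset.mul_sum, ← Finset.mul_sum, ← hT] at h3
  have h4 := hβ A
  have h5 : 0 ≤ (A.card : ℝ) * (∑ s ∈ S, β s + ε * T) := by nlinarith
  have h6 : 0 ≤ ∑ s ∈ S, β s + ε * T := nonneg_of_mul_nonneg_right h5 hc
  have h7 : ε * (2 * (T + 1)) = -(∑ s ∈ S, β s) := by rw [hε]; field_simp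
  nlinarith

lemma xi_half_ne : xi (1/2) ≠ 0 := by
  intro h
  have := (zeta1_eq_zero_iff (s := 1/2) (by simp)).2 h
  exact zeta1_real_ne (σ := 1/2) (by norm_num) (by norm_num) (by push_cast; exact this)

lemma xi_order_ne_top (s : ℂ) : analyticOrderAt xi s ≠ ⊤ := by
  intro h
  rw [analyticOrderAt_eq_top] at h
  have han : AnalyticOnNhd ℂ xi univ := fun z _ => differentiable_xi.analyticAt z
  have := han.eqOn_zero_of_preconnected_of_eventuallyEq_zero isPreconnected_univ (mem_univ s) h
  exact xi_half_ne (this (mem_univ _))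

lemma mult_ne_zero_iff (l : ℝ) : mult l ≠ 0 ↔ xi (1/2 + l * I) = 0 := by
  have han : AnalyticAt ℂ xi (1/2 + l * I) := differentiable_xi.analyticAt _
  rw [← han.analyticOrderAt_ne_zero, ← Nat.cast_analyticOrderNatAt (xi_order_ne_top _)]
  unfold mult
  simp

lemma finite_zeros (R : ℝ) : {l : ℝ | mult l ≠ 0 ∧ |l| ≤ R}.Finite := by
  have han : AnalyticOnNhd ℂ xi univ := fun z _ => differentiable_xi.analyticAt z
  have h1 : (xi ⁻¹' {0}ᶜ) ∈ Filter.codiscreteWithin (univ : Set ℂ) := by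
    apply han.preimage_zero_mem_codiscrete (x := 1/2)
    exact xi_half_ne
  have h2 : ({z : ℂ | xi z = 0} ∩ Metric.closedBall (1/2) R).Finite := by
    by_contra hinf
    obtain ⟨z, hz, hacc⟩ := (show (({z : ℂ | xi z = 0} ∩ Metric.closedBall (1/2) R)).Infinite from hinf).exists_accPt_of_subset_isCompact (isCompact_closedBall (1/2:ℂ) R) inter_subset_right
    have h3 : ∃ᶠ w in nhdsWithin z {z}ᶜ, xi w = 0 := by
      have := accPt_iff_frequently_nhdsNE.1 hacc
      exact this.mono fun w hw => hw.1
    have := han.eqOn_zero_of_preconnected_of_frequently_eq_zero isPreconnected_univ (mem_univ z) h3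
    exact xi_half_ne (this (mem_univ _))
  refine Finite.of_finite_image (f := fun l : ℝ => (1/2 + l * I : ℂ)) (h2.subset ?_) ?_
  · rintro _ ⟨l, ⟨hl, hR⟩, rfl⟩
    refine ⟨(mult_ne_zero_iff l).1 hl, ?_⟩
    simp; exact hR
  · intro x _ y _ h
    have := congrArg im h
    simpa using this

/-- zeros of height at most `R`. -/
noncomputable def ZR (R : ℝ) : Finset ℝ := (finite_zeros R).toFinset

lemma mem_ZR {R l : ℝ} : l ∈ ZR R ↔ mult l ≠ 0 ∧ |l| ≤ R := by simp [ZR]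

lemma mult_zero : mult 0 = 0 := by
  by_contra h
  have := (mult_ne_zero_iff 0).1 h
  simp at this
  exact xi_half_ne (by simpa using this)

lemma sum_bound1 (hC : 0 ≤ C) (hh0 : ∀ x, 1 < x → 0 ≤ hh C x) {a R : ℝ} (ha : 0 < a) (hR0 : 0 ≤ R) (hR : a / 2 ≤ R ^ 2) :
    ∑ l ∈ ZR R, mult l * (a * (l ^ 2 - a / 2) / ((1/4 + l ^ 2) * (a ^ 2 + l ^ 2))) ≤ C := by
  have h0 : (0:ℝ) ∉ ZR R := by rw [mem_ZR]; simp [mult_zero]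
  have h := sum_nonneg_of_posdef (beta C a) (fun A => beta_posdef hC hh0 A ha) (insert 0 (ZR R)) ?_
  · rw [Finset.sum_insert h0] at h
    have e : beta C a 0 = C := by simp [beta, mult_zero]
    have e2 : ∀ l ∈ ZR R, beta C a l = -(mult l * (a * (l ^ 2 - a / 2) / ((1/4 + l ^ 2) * (a ^ 2 + l ^ 2)))) := by
      intro l hl
      have : l ≠ 0 := by rintro rfl; exact h0 hl
      simp only [beta, this, if_false]; ring
    rw [e, Finset.sum_congr rfl e2, Finset.sum_neg_distrib] at h
    linarith
  · intro s hs
    rw [Finset.mem_insert, not_or, mem_ZR] at hs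
    obtain ⟨hs0, hs1⟩ := hs
    simp only [beta, hs0, if_false, zero_add]
    by_cases hm : mult s = 0
    · simp [hm]
    · have hs2 : R < |s| := by
        by_contra h; push Not at h; exact hs1 ⟨hm, h⟩
      have hs3 : R ^ 2 < s ^ 2 := by rw [← sq_abs s]; gcongr
      apply mul_nonpos_of_nonneg_of_nonpos (Nat.cast_nonneg _)
      apply div_nonpos_of_nonpos_of_nonneg
      · apply mul_nonpos_of_nonneg_of_nonpos ha.le; linarith
      · positivity

lemma ZR_mono {R R' : ℝ} (h : R ≤ R') : ZR R ⊆ ZR R' := by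
  intro l; rw [mem_ZR, mem_ZR]; rintro ⟨h1, h2⟩; exact ⟨h1, h2.trans h⟩

lemma sum_bound2 (hC : 0 ≤ C) (hh0 : ∀ x, 1 < x → 0 ≤ hh C x) :
    ∃ K, 0 ≤ K ∧ ∀ R, ∑ l ∈ ZR R, mult l / (1/4 + l ^ 2) ≤ K := by
  set K0 := ∑ l ∈ ZR 2, (mult l : ℝ) / (1/4 + l ^ 2) with hK0
  have hK00 : 0 ≤ K0 := Finset.sum_nonneg fun l _ => by positivity
  refine ⟨2 * (C + K0), by positivity, fun R => ?_⟩
  set R' := max R 2 with hR'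
  have hR2 : 2 ≤ R' := le_max_right _ _
  have h1 : ∑ l ∈ ZR R, (mult l : ℝ) / (1/4 + l ^ 2) ≤ ∑ l ∈ ZR R', (mult l : ℝ) / (1/4 + l ^ 2) :=
    Finset.sum_le_sum_of_subset_of_nonneg (ZR_mono (le_max_left _ _)) fun l _ _ => by positivity
  have h2 := sum_bound1 hC hh0 (a := 1) (R := R') one_pos (by linarith) (by nlinarith)
  have h3 : ∑ l ∈ ZR R', (mult l : ℝ) / (1/4 + l ^ 2) / 2 ≤
      ∑ l ∈ ZR R', ((mult l : ℝ) * (1 * (l ^ 2 - 1 / 2) / ((1/4 + l ^ 2) * (1 ^ 2 + l ^ 2))) + if l ∈ ZR 2 then (mult l : ℝ) / (1/4 + l ^ 2) else 0) := by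
    refine Finset.sum_le_sum fun l hl => ?_
    have hp : (0:ℝ) < 1/4 + l^2 := by positivity
    have hp2 : (0:ℝ) < 1 + l^2 := by positivity
    have e : (mult l : ℝ) * (1 * (l ^ 2 - 1 / 2) / ((1/4 + l ^ 2) * (1 ^ 2 + l ^ 2))) = (mult l : ℝ) / (1/4 + l ^ 2) * ((l^2 - 1/2) / (1 + l^2)) := by
      field_simp
    have hw : (0:ℝ) ≤ (mult l : ℝ) / (1/4 + l ^ 2) := by positivity
    rw [e]
    by_cases h : l ∈ ZR 2
    · rw [if_pos h]
      have : -(1/2) ≤ (l^2 - 1/2) / (1 + l^2) := by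
        rw [le_div_iff₀ hp2]; nlinarith [sq_nonneg l]
      nlinarith
    · rw [if_neg h, mem_ZR] at *
      have h4 : 2 < |l| := by
        by_contra h'; push Not at h'; exact h ⟨hl.1, h'⟩
      have h5 : 4 < l^2 := by rw [← sq_abs]; nlinarith
      have : 1/2 ≤ (l^2 - 1/2) / (1 + l^2) := by
        rw [le_div_iff₀ hp2]; nlinarith
      nlinarith
  rw [Finset.sum_add_distrib, ← Finset.sum_filter, ← Finset.sum_div] at h3
  have h6 : (ZR R').filter (fun l => l ∈ ZR 2) = ZR 2 := by
    ext l
    rw [Finset.mem_filter]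
    exact ⟨fun h => h.2, fun h => ⟨ZR_mono hR2 h, h⟩⟩
  rw [h6, ← hK0] at h3
  linarith

lemma sum_bound3 (hC : 0 ≤ C) (hh0 : ∀ x, 1 < x → 0 ≤ hh C x) :
    ∃ K, 0 ≤ K ∧ ∀ a, 1 ≤ a → ∀ R, ∑ l ∈ ZR R, mult l * (a / (a ^ 2 + l ^ 2)) ≤ K := by
  obtain ⟨K, hK, hK2⟩ := sum_bound2 hC hh0
  refine ⟨C + K, by positivity, fun a ha R => ?_⟩
  set R' := max R a with hR'
  have hR2 : a ≤ R' := le_max_right _ _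
  have h1 : ∑ l ∈ ZR R, (mult l : ℝ) * (a / (a ^ 2 + l ^ 2)) ≤ ∑ l ∈ ZR R', (mult l : ℝ) * (a / (a ^ 2 + l ^ 2)) :=
    Finset.sum_le_sum_of_subset_of_nonneg (ZR_mono (le_max_left _ _)) fun l _ _ => by positivity
  have h2 := sum_bound1 hC hh0 (a := a) (R := R') (by linarith) (by linarith) (by nlinarith)
  have h3 := hK2 R'
  have h4 : ∑ l ∈ ZR R', (mult l : ℝ) * (a / (a ^ 2 + l ^ 2)) ≤
      ∑ l ∈ ZR R', ((mult l : ℝ) * (a * (l ^ 2 - a / 2) / ((1/4 + l ^ 2) * (a ^ 2 + l ^ 2))) + (mult l : ℝ) / (1/4 + l ^ 2)) := by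
    refine Finset.sum_le_sum fun l hl => ?_
    have hp : (0:ℝ) < 1/4 + l^2 := by positivity
    have hp2 : (0:ℝ) < a^2 + l^2 := by positivity
    have e : (mult l : ℝ) * (a / (a ^ 2 + l ^ 2)) = (mult l : ℝ) * (a * (l ^ 2 - a / 2) / ((1/4 + l ^ 2) * (a ^ 2 + l ^ 2)))
       + (mult l : ℝ) / (1/4 + l ^ 2) * (a * (a/2 + 1/4) / (a^2 + l^2)) := by
      field_simp; ring
    rw [e]
    have hw : (0:ℝ) ≤ (mult l : ℝ) / (1/4 + l ^ 2) := by positivity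
    have : a * (a/2 + 1/4) / (a^2 + l^2) ≤ 1 := by
      rw [div_le_one hp2]; nlinarith [sq_nonneg l]
    nlinarith
  rw [Finset.sum_add_distrib] at h4
  linarith

end LandauAux

end

section
open MeasureTheory ProbabilityTheory Complex Set

namespace LandauAux

lemma zeta0_bound : ∃ A B : ℝ, 0 ≤ A ∧ 0 ≤ B ∧ ∀ (n : ℕ) (s : ℂ), 0 ≤ s.re → s.re ≤ 2 * (n + 1) →
    ‖completedRiemannZeta₀ s‖ ≤ A * B ^ (n + 1) * n.factorial := by
  set P := HurwitzZeta.hurwitzEvenFEPair 0 with hP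
  have hconv : ∀ s : ℂ, MellinConvergent P.f_modif s := fun s =>
    (P.isStrongFEPair_toStrongFEPair.hasMellin s).1
  obtain ⟨p, hp, hO⟩ := HurwitzZeta.isBigO_atTop_evenKernel_sub 0
  obtain ⟨c, hc⟩ := hO.bound
  obtain ⟨X1, hX1⟩ := Filter.eventually_atTop.1 hc
  set X0 := max X1 2 with hX0
  have hX02 : 2 ≤ X0 := le_max_right _ _
  have hdec : ∀ x, X0 < x → ‖P.f_modif x‖ ≤ |c| * Real.exp (-p * x) := by
    intro x hx
    have h1 := hX1 x ((le_max_left _ _).trans hx.le)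
    have hx1 : 1 < x := by linarith
    have e : P.f_modif x = ((HurwitzZeta.evenKernel 0 x - 1 : ℝ) : ℂ) := by
      simp [WeakFEPair.f_modif, mem_Ioi.mpr hx1, notMem_Ioo_of_ge hx1.le, hP, HurwitzZeta.hurwitzEvenFEPair]
    rw [e, norm_real]
    simp only [if_true] at h1
    refine h1.trans ?_
    rw [Real.norm_eq_abs (Real.exp _), abs_of_pos (Real.exp_pos _)]
    gcongr
    exact le_abs_self c
  set A := ∫ x in Ioi (0:ℝ), ‖P.f_modif x‖ * x ^ (-1:ℝ) with hA
  have hint0 : ∀ r : ℝ, IntegrableOn (fun x : ℝ => ‖P.f_modif x‖ * x ^ (r - 1)) (Ioi 0) := by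
    intro r
    have := (hconv (r:ℂ)).norm
    refine this.congr ?_
    filter_upwards [ae_restrict_mem measurableSet_Ioi] with x hx
    rw [norm_smul, Complex.norm_cpow_eq_rpow_re_of_pos hx, mul_comm]
    simp
  have hA0 : 0 ≤ A := setIntegral_nonneg measurableSet_Ioi fun x hx => by
    have : (0:ℝ) < x := hx
    positivity
  have hi2 : ∀ n : ℕ, IntegrableOn (fun x : ℝ => x ^ ((n + 1 : ℝ) - 1) * Real.exp (-(p * x))) (Ioi 0) := by
    intro n
    have := integrableOn_rpow_mul_exp_neg_mul_rpow (s := n) (p := 1) (b := p) (by have : (0:ℝ) ≤ n := Nat.cast_nonneg n; linarith) one_pos hp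
    simpa using this
  have hI2 : ∀ n : ℕ, ∫ x in Ioi (0:ℝ), x ^ ((n + 1 : ℝ) - 1) * Real.exp (-(p * x)) = (1 / p) ^ (n + 1) * n.factorial := by
    intro n
    rw [Real.integral_rpow_mul_exp_neg_mul_Ioi (by positivity) hp, Real.Gamma_nat_eq_factorial]
    congr 1
    exact_mod_cast Real.rpow_natCast (1/p) (n+1)
  refine ⟨(A + |c|) / 2, X0 + 1 / p, by positivity, by positivity, fun n s hs0 hs => ?_⟩
  have e : completedRiemannZeta₀ s = mellin P.f_modif (s / 2) / 2 := rfl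
  rw [e, norm_div]
  have h1 : ‖mellin P.f_modif (s/2)‖ ≤ ∫ x in Ioi (0:ℝ), (X0 ^ (n + 1) * (‖P.f_modif x‖ * x ^ (-1:ℝ)) + |c| * (x ^ ((n + 1 : ℝ) - 1) * Real.exp (-(p * x)))) := by
    unfold mellin
    apply norm_integral_le_of_norm_le
    · have := hint0 0
      rw [zero_sub] at this
      exact (this.const_mul _).add ((hi2 n).const_mul _)
    · filter_upwards [ae_restrict_mem measurableSet_Ioi] with x hx
      have hx0 : (0:ℝ) < x := hx
      have hre : (s / 2 - 1).re = s.re / 2 - 1 := by simp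
      rw [norm_smul, Complex.norm_cpow_eq_rpow_re_of_pos hx0, hre]
      rcases le_or_gt x X0 with h | h
      · have k1 : x ^ (s.re / 2 - 1) ≤ X0 ^ (n+1) * x ^ (-1:ℝ) := by
          rw [sub_eq_add_neg, Real.rpow_add hx0]
          gcongr
          calc x ^ (s.re / 2) ≤ X0 ^ (s.re / 2) := by gcongr
            _ ≤ X0 ^ ((n + 1 : ℕ) : ℝ) := by
              apply Real.rpow_le_rpow_of_exponent_le (by linarith)
              push_cast; linarith
            _ = X0 ^ (n+1) := Real.rpow_natCast _ _
        have k2 : 0 ≤ |c| * (x ^ ((n + 1 : ℝ) - 1) * Real.exp (-(p * x))) := by positivity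
        have k3 := mul_le_mul_of_nonneg_right k1 (norm_nonneg (P.f_modif x))
        linarith
      · have k1 : x ^ (s.re / 2 - 1) ≤ x ^ ((n + 1 : ℝ) - 1) := by
          apply Real.rpow_le_rpow_of_exponent_le (by linarith); linarith
        have k2 := hdec x h
        have k3 : 0 ≤ X0 ^ (n + 1) * (‖P.f_modif x‖ * x ^ (-1:ℝ)) := by positivity
        have k4 : x ^ (s.re / 2 - 1) * ‖P.f_modif x‖ ≤ x ^ ((n + 1 : ℝ) - 1) * (|c| * Real.exp (-p * x)) := by gcongr
        rw [neg_mul] at k4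
        linarith
  rw [integral_add, integral_const_mul, integral_const_mul, hI2, ← hA] at h1
  · have hq : 0 < 1 / p := by positivity
    have k1 : X0 ^ (n+1) ≤ (X0 + 1/p) ^ (n+1) := by gcongr; linarith
    have k2 : (1/p) ^ (n+1) ≤ (X0 + 1/p) ^ (n+1) := by gcongr; linarith
    have k3 : (1:ℝ) ≤ n.factorial := by exact_mod_cast n.factorial_pos
    have k4 : X0 ^ (n+1) * A ≤ (X0 + 1/p) ^ (n+1) * n.factorial * A := by
      gcongr
      calc X0 ^ (n+1) ≤ (X0 + 1/p) ^ (n+1) * 1 := by linarith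
        _ ≤ _ := by gcongr
    have k5 : |c| * ((1 / p) ^ (n + 1) * n.factorial) ≤ |c| * ((X0 + 1/p) ^ (n+1) * n.factorial) := by gcongr
    rw [Complex.norm_ofNat]
    linarith
  · have := hint0 0
    rw [zero_sub] at this
    exact this.const_mul _
  · exact (hi2 n).const_mul _

/-- xi centered at `1/2`. -/
noncomputable def XX (z : ℂ) : ℂ := xi (1/2 + z)

lemma XX_neg (z : ℂ) : XX (-z) = XX z := by
  unfold XX; rw [← xi_one_sub]; congr 1; ring

lemma differentiable_XX : Differentiable ℂ XX := by
  unfold XX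
  have := differentiable_xi
  fun_prop

lemma XX_bound : ∃ a b : ℝ, ∀ (n : ℕ), 1 ≤ n → ∀ z : ℂ, ‖z‖ ≤ n → ‖XX z‖ ≤ Real.exp (a + b * n + n * Real.log n) := by
  obtain ⟨A, B, hA, hB, h⟩ := zeta0_bound
  have hexp : ∀ x : ℝ, x ≤ Real.exp x := fun x => by linarith [Real.add_one_le_exp x]
  refine ⟨A + B + 3, B + 2, fun n hn => ?_⟩
  have hn0 : (0:ℝ) < n := by exact_mod_cast hn
  have hn1 : (1:ℝ) ≤ n := by exact_mod_cast hn
  have hlog : 0 ≤ Real.log n := Real.log_nonneg hn1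
  have key : ∀ z : ℂ, 0 ≤ z.re → ‖z‖ ≤ n → ‖XX z‖ ≤ Real.exp (A + B + 3 + (B + 2) * n + n * Real.log n) := by
    intro z hz hzn
    have hzre : z.re ≤ n := (re_le_norm z).trans hzn
    have h1 := h n (1/2 + z) (by simp; linarith) (by simp; linarith)
    have h2 : ‖1/2 + z‖ ≤ n + 1 := by
      refine (norm_add_le _ _).trans ?_
      have : ‖(1/2:ℂ)‖ = 1/2 := by simp
      linarith
    have h3 : ‖1/2 + z - 1‖ ≤ n + 1 := by
      rw [show 1/2 + z - 1 = -(1/2) + z by ring]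
      refine (norm_add_le _ _).trans ?_
      have : ‖(-(1/2):ℂ)‖ = 1/2 := by simp
      linarith
    have hE : (n + 1 : ℝ) ≤ Real.exp n := Real.add_one_le_exp _
    have hf : (n.factorial : ℝ) ≤ Real.exp (n * Real.log n) := by
      have : (n.factorial : ℝ) ≤ (n:ℝ) ^ n := by exact_mod_cast Nat.factorial_le_pow n
      refine this.trans (le_of_eq ?_)
      rw [mul_comm, Real.exp_mul, Real.exp_log hn0, Real.rpow_natCast]
    have hBn : B ^ (n+1) ≤ Real.exp (B * (n + 1)) := by
      have : Real.exp (B * (n+1)) = (Real.exp B) ^ (n+1) := by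
        rw [← Real.exp_nat_mul]; congr 1; push_cast; ring
      rw [this]; gcongr; exact hexp B
    have h4 : ‖XX z‖ ≤ Real.exp n * Real.exp n * (Real.exp A * Real.exp (B * (n+1)) * Real.exp (n * Real.log n)) + 1 := by
      unfold XX xi
      refine (norm_add_le _ _).trans ?_
      rw [norm_mul, norm_mul, norm_one]
      gcongr
      · linarith
      · linarith
      · refine h1.trans ?_
        gcongr
        exact hexp A
    refine h4.trans ?_
    rw [← Real.exp_add, ← Real.exp_add, ← Real.exp_add, ← Real.exp_add]
    set u := (n:ℝ) + n + (A + B * (n + 1) + n * Real.log n) with hu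
    have hu0 : 0 ≤ u := by positivity
    have e : A + B + 3 + (B + 2) * n + n * Real.log n = u + 3 := by rw [hu]; ring
    rw [e]
    have h5 : 1 ≤ Real.exp u := Real.one_le_exp hu0
    have h6 : Real.exp (u + 3) = Real.exp u * Real.exp 3 := Real.exp_add _ _
    have h7 : (3:ℝ) + 1 ≤ Real.exp 3 := Real.add_one_le_exp 3
    nlinarith
  intro z hz
  rcases le_total 0 z.re with h0 | h0
  · exact key z h0 hz
  · rw [← XX_neg]
    exact key (-z) (by simpa using h0) (by simpa using hz)

lemma XX_lower (k : ℕ) : (k.factorial : ℝ) / Real.pi ^ (k + 1) ≤ ‖XX (2 * k + 3/2)‖ := by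
  unfold XX
  have e : (1/2 + (2 * k + 3/2) : ℂ) = ((2 * k + 2 : ℕ) : ℂ) := by push_cast; ring
  rw [e]
  have hs0 : ((2 * k + 2 : ℕ) : ℂ) ≠ 0 := Nat.cast_ne_zero.2 (by omega)
  have hs1 : ((2 * k + 2 : ℕ) : ℂ) ≠ 1 := Nat.cast_ne_one.2 (by omega)
  rw [xi_eq hs0 hs1]
  have hG : Gammaℝ ((2 * k + 2 : ℕ) : ℂ) ≠ 0 := Gammaℝ_ne_zero_of_re_pos (by simp; positivity)
  have h2 : completedRiemannZeta ((2 * k + 2 : ℕ) : ℂ) = Gammaℝ ((2 * k + 2 : ℕ) : ℂ) * riemannZeta ((2 * k + 2 : ℕ) : ℂ) := by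
    rw [riemannZeta_def_of_ne_zero hs0]; field_simp
  have h3 : ‖Gammaℝ ((2 * k + 2 : ℕ) : ℂ)‖ = (k.factorial : ℝ) / Real.pi ^ (k + 1) := by
    rw [Gammaℝ_def]
    have e1 : ((2 * k + 2 : ℕ) : ℂ) / 2 = (k:ℂ) + 1 := by push_cast; ring
    have e2 : -((2 * k + 2 : ℕ) : ℂ) / 2 = -((k + 1 : ℕ) : ℂ) := by push_cast; ring
    rw [e1, e2, Complex.Gamma_nat_eq_factorial, Complex.cpow_neg, Complex.cpow_natCast]
    rw [norm_mul, norm_inv, norm_pow, norm_real, Real.norm_eq_abs, abs_of_pos Real.pi_pos, Complex.norm_natCast]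
    field_simp
  have h4 : 1 ≤ ‖riemannZeta ((2 * k + 2 : ℕ) : ℂ)‖ := by
    rw [zeta_nat_eq_tsum_of_gt_one (by omega)]
    have hs : Summable (fun n : ℕ => 1 / (n:ℝ) ^ (2 * k + 2)) := Real.summable_one_div_nat_pow.2 (by omega)
    have h5 : (∑' n : ℕ, 1 / (n:ℂ) ^ (2 * k + 2)) = ((∑' n : ℕ, 1 / (n:ℝ) ^ (2 * k + 2) : ℝ) : ℂ) := by
      rw [ofReal_tsum]; push_cast; rfl
    rw [h5, norm_real, Real.norm_eq_abs]
    refine le_trans ?_ (le_abs_self _)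
    have := hs.le_tsum 1 (fun j _ => by positivity)
    simpa using this
  rw [h2, norm_mul, norm_mul, norm_mul, h3]
  have h6 : 1 ≤ ‖((2 * k + 2 : ℕ) : ℂ)‖ := by
    rw [Complex.norm_natCast]; exact Nat.one_le_cast.2 (by omega)
  have h7 : 1 ≤ ‖((2 * k + 2 : ℕ) : ℂ) - 1‖ := by
    have : ((2 * k + 2 : ℕ) : ℂ) - 1 = ((2 * k + 1 : ℕ) : ℂ) := by push_cast; ring
    rw [this, Complex.norm_natCast]; exact Nat.one_le_cast.2 (by omega)
  have h8 : 0 ≤ (k.factorial : ℝ) / Real.pi ^ (k + 1) := by positivity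
  calc (k.factorial : ℝ) / Real.pi ^ (k + 1) = 1 * 1 * ((k.factorial : ℝ) / Real.pi ^ (k + 1) * 1) := by ring
    _ ≤ _ := by gcongr

end LandauAux

end

section
open MeasureTheory ProbabilityTheory Complex Set

namespace LandauAux

lemma factor_one {g : ℂ → ℂ} (hg : Differentiable ℂ g) (w : ℂ) (h : analyticOrderAt g w ≠ ⊤) :
    ∃ g2 : ℂ → ℂ, Differentiable ℂ g2 ∧ (∀ z, g z = (z - w) ^ (analyticOrderNatAt g w) * g2 z) ∧ g2 w ≠ 0 := by
  have ha : AnalyticAt ℂ g w := hg.analyticAt w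
  obtain ⟨q, hq, hq0, hqe⟩ := ha.analyticOrderAt_ne_top.1 h
  set m := analyticOrderNatAt g w with hm
  classical
  set g2 : ℂ → ℂ := fun z => if z = w then q w else g z / (z - w) ^ m with hg2
  refine ⟨g2, ?_, ?_, ?_⟩
  · intro z
    by_cases hz : z = w
    · subst hz
      refine hq.differentiableAt.congr_of_eventuallyEq ?_
      filter_upwards [hqe] with y hy
      by_cases hyz : y = z
      · simp [hg2, hyz]
      · have : (y - z) ^ m ≠ 0 := pow_ne_zero _ (sub_ne_zero.2 hyz)
        simp only [hg2, hyz, if_false]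
        rw [hy, smul_eq_mul]; field_simp
    · have h1 : DifferentiableAt ℂ (fun z => g z / (z - w) ^ m) z :=
        (hg z).div (by fun_prop) (pow_ne_zero _ (sub_ne_zero.2 hz))
      refine h1.congr_of_eventuallyEq ?_
      filter_upwards [isOpen_ne.mem_nhds hz] with y hy
      have hy' : y ≠ w := hy
      simp [hg2, hy']
  · intro z
    by_cases hz : z = w
    · subst hz
      have := hqe.self_of_nhds
      simp only [hg2, if_true]
      simpa using this
    · have : (z - w) ^ m ≠ 0 := pow_ne_zero _ (sub_ne_zero.2 hz)
      simp only [hg2, hz, if_false]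
      field_simp
  · simpa [hg2] using hq0

lemma factor_many {f : ℂ → ℂ} (hf : Differentiable ℂ f) (h : ∀ w, analyticOrderAt f w ≠ ⊤) (S : Finset ℂ) :
    ∃ g : ℂ → ℂ, Differentiable ℂ g ∧ (∀ z, f z = (∏ w ∈ S, (z - w) ^ (analyticOrderNatAt f w)) * g z) ∧
      ∀ w ∈ S, g w ≠ 0 := by
  classical
  induction S using Finset.induction_on with
  | empty => exact ⟨f, hf, by simp, by simp⟩
  | insert w S hw ih =>
    obtain ⟨g, hg, hfg, hg0⟩ := ih
    have hP : AnalyticAt ℂ (fun z => ∏ w ∈ S, (z - w) ^ (analyticOrderNatAt f w)) w := by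
      have : Differentiable ℂ (fun z : ℂ => ∏ w ∈ S, (z - w) ^ (analyticOrderNatAt f w)) := by fun_prop
      exact this.analyticAt w
    have hP0 : analyticOrderAt (fun z => ∏ w ∈ S, (z - w) ^ (analyticOrderNatAt f w)) w = 0 := by
      rw [hP.analyticOrderAt_eq_zero]
      refine Finset.prod_ne_zero_iff.2 fun v hv => pow_ne_zero _ (sub_ne_zero.2 ?_)
      rintro rfl; exact hw hv
    have e : f = (fun z => ∏ w ∈ S, (z - w) ^ (analyticOrderNatAt f w)) * g := funext fun z => hfg z
    have ho : analyticOrderAt f w = analyticOrderAt g w := by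
      conv_lhs => rw [e]
      rw [analyticOrderAt_mul hP (hg.analyticAt w), hP0, zero_add]
    have hon : analyticOrderNatAt g w = analyticOrderNatAt f w := by
      simp [analyticOrderNatAt, ho]
    obtain ⟨g2, hg2, hgg, hg20⟩ := factor_one hg w (ho ▸ h w)
    refine ⟨g2, hg2, ?_, ?_⟩
    · intro z
      rw [hfg z, Finset.prod_insert hw, hgg z, hon]; ring
    · intro v hv
      rcases Finset.mem_insert.1 hv with rfl | hv
      · exact hg20
      · have := hg0 v hv
        rw [hgg v] at this
        exact right_ne_zero_of_mul this

lemma XX_fact (R : ℝ) : ∃ g : ℂ → ℂ, Differentiable ℂ g ∧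
    (∀ z, XX z = (∏ l ∈ ZR R, (z - l * I) ^ (mult l)) * g z) ∧ ∀ l ∈ ZR R, g (l * I) ≠ 0 := by
  classical
  have hinj : Function.Injective (fun l : ℝ => (1/2 + l * I : ℂ)) := by
    intro a b hab
    have := congrArg Complex.im hab
    simpa using this
  obtain ⟨g, hg, hfg, hg0⟩ := factor_many differentiable_xi xi_order_ne_top ((ZR R).image (fun l : ℝ => (1/2 + l * I : ℂ)))
  refine ⟨fun z => g (1/2 + z), by fun_prop, ?_, ?_⟩
  · intro z
    unfold XX
    rw [hfg, Finset.prod_image (fun a _ b _ h => hinj h)]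
    congr 1
    refine Finset.prod_congr rfl fun l _ => ?_
    unfold mult
    congr 1
    ring
  · intro l hl
    exact hg0 _ (Finset.mem_image_of_mem _ hl)

lemma ZR_ne_zero {R l : ℝ} (hl : l ∈ ZR R) : l ≠ 0 := by
  rintro rfl
  exact (mem_ZR.1 hl).1 mult_zero

lemma XX_fact2 {C : ℝ} (hC : 0 ≤ C) (hh0 : ∀ x, 1 < x → 0 ≤ hh C x) {R : ℝ} (hR : 0 < R) :
    ∃ G : ℂ → ℂ, Differentiable ℂ G ∧
    (∀ z, XX z = (∏ l ∈ ZR R, (1 - z / (l * I)) ^ (mult l)) * G z) ∧ G 0 = XX 0 ∧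
    (∀ z, ‖z‖ < R → G z ≠ 0) ∧
    ∀ M, (∀ z, ‖z‖ ≤ 2 * R → ‖XX z‖ ≤ M) → ∀ z, ‖z‖ ≤ 2 * R → ‖G z‖ ≤ M := by
  obtain ⟨g, hg, hfg, hg0⟩ := XX_fact R
  set c : ℂ := ∏ l ∈ ZR R, (-(l * I : ℂ)) ^ (mult l) with hc
  have hcne : c ≠ 0 := by
    refine Finset.prod_ne_zero_iff.2 fun l hl => pow_ne_zero _ ?_
    have := ZR_ne_zero hl
    simpa using this
  have hfG : ∀ z, XX z = (∏ l ∈ ZR R, (1 - z / (l * I)) ^ (mult l)) * (c * g z) := by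
    intro z
    rw [hfg z, ← mul_assoc, hc, ← Finset.prod_mul_distrib]
    congr 1
    refine Finset.prod_congr rfl fun l hl => ?_
    rw [← mul_pow]
    congr 1
    have : (l:ℂ) ≠ 0 := by exact_mod_cast ZR_ne_zero hl
    field_simp
    ring
  refine ⟨fun z => c * g z, by fun_prop, hfG, ?_, ?_, ?_⟩
  · rw [hfG 0]; simp
  · intro z hz h0
    have hX : XX z = 0 := by rw [hfG z]; simp only at h0; rw [h0, mul_zero]
    have hre := xi_zero_re hC hh0 (ρ := 1/2 + z) hX
    have hzre : z.re = 0 := by simpa using hre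
    have hze : z = (z.im : ℂ) * I := by
      apply Complex.ext <;> simp [hzre]
    have hm : z.im ∈ ZR R := by
      refine mem_ZR.2 ⟨(mult_ne_zero_iff _).2 ?_, (abs_im_le_norm z).trans hz.le⟩
      rw [← hze]; exact hX
    have := hg0 _ hm
    rw [← hze] at this
    exact (mul_ne_zero hcne this) h0
  · intro M hM z hz
    have hbd : ∀ y ∈ frontier (Metric.ball (0:ℂ) (2 * R)), ‖c * g y‖ ≤ M := by
      intro y hy
      rw [frontier_ball _ (by positivity), mem_sphere_zero_iff_norm] at hy
      refine le_trans ?_ (hM y hy.le)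
      rw [hfG y, norm_mul (∏ l ∈ ZR R, (1 - y / (l * I)) ^ (mult l)), norm_prod]
      refine le_mul_of_one_le_left (norm_nonneg _) ?_
      refine Finset.one_le_prod ?_
      intro l hl
      rw [norm_pow]
      refine one_le_pow₀ ?_
      have hl0 : (l:ℂ) ≠ 0 := by exact_mod_cast ZR_ne_zero hl
      have hlR := (mem_ZR.1 hl).2
      have hlp : 0 < |l| := abs_pos.2 (ZR_ne_zero hl)
      have h1 : ‖y / (l * I)‖ = 2 * R / |l| := by
        rw [norm_div, norm_mul, norm_I, mul_one, norm_real, Real.norm_eq_abs, hy]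
      have h2 : 2 ≤ ‖y / (l * I)‖ := by
        rw [h1, le_div_iff₀ hlp]; linarith
      have h3 := norm_sub_norm_le (y / (l * I)) 1
      rw [norm_one, norm_sub_rev] at h3
      linarith
    have hd : DiffContOnCl ℂ (fun z => c * g z) (Metric.ball (0:ℂ) (2 * R)) :=
      (show Differentiable ℂ (fun z => c * g z) by fun_prop).diffContOnCl
    refine Complex.norm_le_of_forall_mem_frontier_norm_le Metric.isBounded_ball hd hbd ?_
    rw [closure_ball _ (by positivity)]
    simpa using hz

lemma W_bound {W : ℂ → ℂ} (hW : Differentiable ℂ W) (hev : ∀ z, W (-z) = W z) (hW0 : W 0 = 1) {R L : ℝ}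
    (hR : 0 < R) (hL : 0 < L) (hne : ∀ z, ‖z‖ < R → W z ≠ 0) (hb : ∀ z, ‖z‖ < R → ‖W z‖ ≤ Real.exp L)
    (z : ℂ) (hz : ‖z‖ < R / 2) : ‖W z‖ ≤ Real.exp (2 * L * (‖z‖ / (R / 2)) ^ 2) := by
  have hd : DifferentiableOn ℂ (fun z => deriv W z / W z) (Metric.ball 0 R) := by
    intro y hy
    have hy' : ‖y‖ < R := by simpa using hy
    exact ((hW.deriv y).div (hW y) (hne y hy')).differentiableWithinAt
  obtain ⟨k, hk0, hk⟩ := hd.isExactOn_ball.with_val_at 0 0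
  have hkd : DifferentiableOn ℂ k (Metric.ball 0 R) := fun y hy => (hk y hy).differentiableAt.differentiableWithinAt
  have hexp : ∀ y ∈ Metric.ball (0:ℂ) R, W y = Complex.exp (k y) := by
    intro y hy
    have hq : ∀ u ∈ Metric.ball (0:ℂ) R, HasDerivAt (fun u => W u * Complex.exp (-k u)) 0 u := by
      intro u hu
      have hu' : ‖u‖ < R := by simpa using hu
      have := ((hW u).hasDerivAt).mul ((hk u hu).neg.cexp)
      refine this.congr_deriv ?_
      have := hne u hu'
      field_simp
      ring
    have hconst := (convex_ball (0:ℂ) R).is_const_of_fderivWithin_eq_zero (𝕜 := ℂ) (f := fun u => W u * Complex.exp (-k u))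
      (fun u hu => (hq u hu).differentiableAt.differentiableWithinAt) (fun u hu => by
        rw [fderivWithin_of_isOpen Metric.isOpen_ball hu]
        have := (hq u hu).hasFDerivAt.fderiv
        rw [this]; ext; simp) hy (Metric.mem_ball_self hR)
    simp only [hW0, hk0, neg_zero, Complex.exp_zero, mul_one] at hconst
    rw [Complex.exp_neg] at hconst
    have := Complex.exp_ne_zero (k y)
    field_simp at hconst
    exact hconst
  have hre : MapsTo k (Metric.ball 0 R) {z | z.re ≤ L} := by
    intro y hy
    have h1 := hb y (by simpa using hy)
    rw [hexp y hy, Complex.norm_exp, Real.exp_le_exp] at h1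
    exact h1
  have hBC : ∀ y ∈ Metric.ball (0:ℂ) (R/2), ‖k y‖ ≤ 2 * L := by
    intro y hy
    have hy' : ‖y‖ < R / 2 := by simpa using hy
    have h1 := Complex.borelCaratheodory_zero hL hkd hre hR (z := y) (by simp; linarith) hk0
    refine h1.trans ?_
    rw [div_le_iff₀ (by linarith)]
    nlinarith
  have hdW : deriv W 0 = 0 := by
    have h1 : deriv (fun z => W (-z)) 0 = - deriv W 0 := by
      rw [deriv_comp_neg]; simp
    have h2 : (fun z => W (-z)) = W := funext hev
    rw [h2] at h1
    linear_combination h1 / 2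
  have hlo : (fun y => k y - k 0) =o[nhds 0] (fun w : ℂ => ‖w - 0‖ ^ 1) := by
    have h1 := hk 0 (Metric.mem_ball_self hR)
    simp only [hdW, zero_div] at h1
    have h2 := hasDerivAt_iff_isLittleO.1 h1
    simp only [smul_zero, sub_zero] at h2
    simpa using h2.norm_right
  have hfin := Complex.dist_le_mul_div_pow_of_mapsTo_ball_of_isLittleO (R₁ := R / 2) (R₂ := 2 * L) (z := z)
    (hkd.mono (Metric.ball_subset_ball (by linarith))) (fun y hy => by
      rw [hk0]; simpa using hBC y hy) hlo (by simpa using hz)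
  rw [hk0, dist_zero_right, dist_zero_right] at hfin
  rw [hexp z (by simp; linarith), Complex.norm_exp]
  exact Real.exp_le_exp.2 ((Complex.re_le_norm _).trans hfin)

end LandauAux

end

section
open MeasureTheory ProbabilityTheory Complex Set

namespace LandauAux

lemma L_tendsto (c1 c2 : ℝ) :
    Filter.Tendsto (fun n : ℕ => (c1 + c2 * n + 4 * n * Real.log (2 * n)) / (n:ℝ) ^ 2) Filter.atTop (nhds 0) := by
  have h1 : Filter.Tendsto (fun n : ℕ => ((n:ℝ))⁻¹) Filter.atTop (nhds 0) := tendsto_inv_atTop_nhds_zero_nat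
  have h2 : Filter.Tendsto (fun n : ℕ => Real.log n / (n:ℝ)) Filter.atTop (nhds 0) := by
    have := Real.isLittleO_log_id_atTop.tendsto_div_nhds_zero
    exact this.comp tendsto_natCast_atTop_atTop
  have h3 := (((h1.mul h1).const_mul c1).add (h1.const_mul (c2 + 4 * Real.log 2))).add (h2.const_mul 4)
  simp only [mul_zero, add_zero] at h3
  refine h3.congr' ?_
  filter_upwards [Filter.eventually_ge_atTop 1] with n hn
  have hn' : (0:ℝ) < n := by exact_mod_cast hn
  rw [Real.log_mul two_ne_zero hn'.ne']
  field_simp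
  ring

lemma XX_prod_bound {C : ℝ} (hC : 0 ≤ C) (hh0 : ∀ x, 1 < x → 0 ≤ hh C x) {r : ℝ} (hr : 0 ≤ r) :
    ∃ n : ℕ, ‖XX r‖ ^ 2 ≤ Real.exp 1 * ‖XX 0‖ ^ 2 * ∏ l ∈ ZR n, (1 + r ^ 2 / l ^ 2) ^ (mult l) := by
  obtain ⟨a, b, hab⟩ := XX_bound
  have hX0 : XX 0 ≠ 0 := by
    have := xi_half_ne
    simpa [XX] using this
  have hX0p : 0 < ‖XX 0‖ := norm_pos_iff.2 hX0
  set c1 := 2 * |a| + 2 * |Real.log ‖XX 0‖| + 1 with hc1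
  set c2 := 4 * |b| with hc2
  have hlim := (L_tendsto c1 c2).const_mul (8 * r ^ 2)
  rw [mul_zero] at hlim
  have hev := (hlim.eventually (gt_mem_nhds one_pos)).and
    ((Filter.eventually_ge_atTop 1).and (Filter.eventually_gt_atTop ⌈2 * r⌉₊))
  obtain ⟨n, hn1, hn2, hn3⟩ := hev.exists
  refine ⟨n, ?_⟩
  have hnp : (0:ℝ) < n := by exact_mod_cast hn2
  have hn1' : (1:ℝ) ≤ n := by exact_mod_cast hn2
  have hrn : r < (n:ℝ) / 2 := by
    have h1 : 2 * r ≤ (⌈2 * r⌉₊ : ℝ) := Nat.le_ceil _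
    have h2 : (⌈2 * r⌉₊ : ℝ) < n := by exact_mod_cast hn3
    linarith
  obtain ⟨G, hG, hfG, hG0, hGne, hGb⟩ := XX_fact2 hC hh0 hnp
  set E := a + b * (2 * n) + (2 * n) * Real.log (2 * n) with hE
  have hM : ∀ z, ‖z‖ ≤ 2 * n → ‖XX z‖ ≤ Real.exp E := by
    intro z hz
    have := hab (2 * n) (by omega) z (by push_cast; exact hz)
    push_cast at this
    exact this
  have hGb' := hGb _ hM
  set L := c1 + c2 * n + 4 * n * Real.log (2 * n) with hL
  have hlog : 0 ≤ Real.log (2 * n) := Real.log_nonneg (by linarith)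
  have hLp : 0 < L := by rw [hL, hc1, hc2]; positivity
  have hEL : 2 * E - 2 * Real.log ‖XX 0‖ ≤ L := by
    rw [hE, hL, hc1, hc2]
    have h1 := le_abs_self a
    have h2 := le_abs_self b
    have h3 := neg_abs_le (Real.log ‖XX 0‖)
    nlinarith
  set W : ℂ → ℂ := fun z => G z * G (-z) / (XX 0) ^ 2 with hW
  have hWd : Differentiable ℂ W := by
    intro z
    have h1 : DifferentiableAt ℂ (fun z => G (-z)) z := by fun_prop
    exact ((hG z).mul h1).div_const _
  have hWb := W_bound (W := W) hWd (fun z => by simp only [hW, neg_neg]; ring)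
    (by simp only [hW, neg_zero, hG0]; field_simp) hnp hLp
    (fun z hz => by
      refine div_ne_zero (mul_ne_zero (hGne z hz) (hGne _ (by simpa using hz))) (pow_ne_zero _ hX0))
    (fun z hz => by
      have h1 := hGb' z (by linarith)
      have h2 := hGb' (-z) (by rw [norm_neg]; linarith)
      simp only [hW]
      rw [norm_div, norm_mul, norm_pow, div_le_iff₀ (by positivity)]
      have e1 : ‖XX 0‖ ^ 2 = Real.exp (2 * Real.log ‖XX 0‖) := by
        rw [two_mul, Real.exp_add, Real.exp_log hX0p]; ring
      calc ‖G z‖ * ‖G (-z)‖ ≤ Real.exp E * Real.exp E := by gcongr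
        _ = Real.exp (2 * E) := by rw [← Real.exp_add]; ring_nf
        _ ≤ Real.exp (L + 2 * Real.log ‖XX 0‖) := Real.exp_le_exp.2 (by linarith)
        _ = _ := by rw [Real.exp_add, e1])
    (r : ℂ) (by rw [norm_real, Real.norm_eq_abs, abs_of_nonneg hr]; exact hrn)
  rw [norm_real, Real.norm_eq_abs, abs_of_nonneg hr] at hWb
  have hexp1 : 2 * L * (r / ((n:ℝ) / 2)) ^ 2 ≤ 1 := by
    refine le_trans (le_of_eq ?_) hn1.le
    field_simp
    ring
  have hW1 : ‖W r‖ ≤ Real.exp 1 := hWb.trans (Real.exp_le_exp.2 hexp1)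
  have hkey : XX r * XX r = ((∏ l ∈ ZR n, (1 + r ^ 2 / l ^ 2) ^ (mult l) : ℝ) : ℂ) * (XX 0 ^ 2 * W r) := by
    have e1 : XX r * XX r = XX r * XX (-r) := by rw [XX_neg]
    rw [e1, hfG r, hfG (-r)]
    have e2 : ((∏ l ∈ ZR n, (1 + r ^ 2 / l ^ 2) ^ (mult l) : ℝ) : ℂ) =
        (∏ l ∈ ZR n, (1 - r / (l * I)) ^ (mult l)) * (∏ l ∈ ZR n, (1 - -r / (l * I)) ^ (mult l)) := by
      rw [← Finset.prod_mul_distrib]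
      push_cast
      refine Finset.prod_congr rfl fun l hl => ?_
      rw [← mul_pow]
      congr 1
      have : (l:ℂ) ≠ 0 := by exact_mod_cast ZR_ne_zero hl
      have hI := I_ne_zero
      have hI2 := I_sq
      field_simp
      linear_combination (r:ℂ)^2 * I_sq
    rw [e2]
    simp only [hW]
    field_simp
  have hn := congrArg norm hkey
  have hPp : 0 ≤ ∏ l ∈ ZR n, (1 + r ^ 2 / l ^ 2) ^ (mult l) := Finset.prod_nonneg fun l _ => by positivity
  rw [norm_mul, norm_mul, norm_mul, norm_pow, norm_real, Real.norm_eq_abs, abs_of_nonneg hPp] at hn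
  rw [sq ‖XX r‖, hn]
  calc _ ≤ (∏ l ∈ ZR n, (1 + r ^ 2 / l ^ 2) ^ (mult l)) * (‖XX 0‖ ^ 2 * Real.exp 1) := by gcongr
    _ = _ := by ring

lemma zeros_away : ∃ δ : ℝ, 0 < δ ∧ ∀ R, ∀ l ∈ ZR R, δ ≤ l ^ 2 := by
  by_cases hne : (ZR 1).Nonempty
  · obtain ⟨m, hm, hmin⟩ := (ZR 1).exists_min_image (fun l => l ^ 2) hne
    have hm0 := ZR_ne_zero hm
    refine ⟨min 1 (m ^ 2), by positivity, fun R l hl => ?_⟩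
    by_cases h : |l| ≤ 1
    · exact (min_le_right _ _).trans (hmin l (mem_ZR.2 ⟨(mem_ZR.1 hl).1, h⟩))
    · refine (min_le_left _ _).trans ?_
      rw [← sq_abs]; nlinarith
  · refine ⟨1, one_pos, fun R l hl => ?_⟩
    by_contra h
    refine hne ⟨l, mem_ZR.2 ⟨(mem_ZR.1 hl).1, ?_⟩⟩
    rw [← sq_abs] at h
    nlinarith [abs_nonneg l]

lemma prod_bound {C : ℝ} (hC : 0 ≤ C) (hh0 : ∀ x, 1 < x → 0 ≤ hh C x) :
    ∃ A B : ℝ, ∀ (n : ℕ) (R : ℝ),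
      ∏ l ∈ ZR R, (1 + ((n:ℝ) + 3/2) ^ 2 / l ^ 2) ^ (mult l) ≤ Real.exp (A + B * n) := by
  obtain ⟨K, hK0, hK⟩ := sum_bound3 hC hh0
  obtain ⟨δ, hδ, hδl⟩ := zeros_away
  refine ⟨9/4 * (1 + 1/δ) * K, 3 * K, fun n R => ?_⟩
  induction n with
  | zero =>
    have h1 : ∀ l ∈ ZR R, (1 + (((0:ℕ):ℝ) + 3/2) ^ 2 / l ^ 2) ^ (mult l) ≤
        Real.exp (9/4 * (1 + 1/δ) * (mult l * (1 / (1 ^ 2 + l ^ 2)))) := by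
      intro l hl
      have hl2 := hδl R l hl
      have hlp : 0 < l ^ 2 := by linarith
      have e : 9/4 * (1 + 1/δ) * (mult l * (1 / (1 ^ 2 + l ^ 2))) = mult l * (9/4 * (1 + 1/δ) * (1 / (1 ^ 2 + l ^ 2))) := by ring
      rw [e, Real.exp_nat_mul]
      refine pow_le_pow_left₀ (by positivity) ?_ _
      have h2 : (((0:ℕ):ℝ) + 3/2) ^ 2 / l ^ 2 ≤ 9/4 * (1 + 1/δ) * (1 / (1 ^ 2 + l ^ 2)) := by
        have h3 : 1 / l ^ 2 ≤ (1 + 1/δ) * (1 / (1 ^ 2 + l ^ 2)) := by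
          rw [mul_one_div, div_le_div_iff₀ hlp (by positivity)]
          have : 1 ≤ 1 / δ * l ^ 2 := by rw [one_div, ← div_eq_inv_mul, le_div_iff₀ hδ]; linarith
          linarith
        calc (((0:ℕ):ℝ) + 3/2) ^ 2 / l ^ 2 = 9/4 * (1 / l ^ 2) := by push_cast; ring
          _ ≤ 9/4 * ((1 + 1/δ) * (1 / (1 ^ 2 + l ^ 2))) := by gcongr
          _ = _ := by ring
      have := Real.add_one_le_exp (9/4 * (1 + 1/δ) * (1 / (1 ^ 2 + l ^ 2)))
      linarith
    refine (Finset.prod_le_prod (fun l _ => by positivity) h1).trans ?_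
    rw [← Real.exp_sum, ← Finset.mul_sum, Real.exp_le_exp]
    have := hK 1 le_rfl R
    push_cast
    rw [mul_zero, add_zero]
    gcongr
  | succ n ih =>
    set r : ℝ := n + 3/2 with hr
    have hn0 : (0:ℝ) ≤ n := Nat.cast_nonneg n
    have hr1 : 1 ≤ r := by linarith
    have h1 : ∀ l ∈ ZR R, (1 + (((n+1:ℕ):ℝ) + 3/2) ^ 2 / l ^ 2) ^ (mult l) ≤
        (1 + r ^ 2 / l ^ 2) ^ (mult l) * Real.exp (3 * (mult l * (r / (r ^ 2 + l ^ 2)))) := by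
      intro l hl
      have hl2 := hδl R l hl
      have hlp : 0 < l ^ 2 := by linarith
      have e : 3 * (mult l * (r / (r ^ 2 + l ^ 2))) = mult l * (3 * (r / (r ^ 2 + l ^ 2))) := by ring
      rw [e, Real.exp_nat_mul, ← mul_pow]
      refine pow_le_pow_left₀ (by positivity) ?_ _
      have h2 := Real.add_one_le_exp (3 * (r / (r ^ 2 + l ^ 2)))
      have e3 : (((n+1:ℕ):ℝ) + 3/2) = r + 1 := by rw [hr]; push_cast; ring
      rw [e3]
      calc 1 + (r + 1) ^ 2 / l ^ 2 ≤ (1 + r ^ 2 / l ^ 2) * (3 * (r / (r ^ 2 + l ^ 2)) + 1) := by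
            have : (1 + r ^ 2 / l ^ 2) * (3 * (r / (r ^ 2 + l ^ 2)) + 1) = 1 + (r ^ 2 + 3 * r) / l ^ 2 := by
              have : l ≠ 0 := ZR_ne_zero hl
              field_simp
              ring
            rw [this]
            gcongr
            nlinarith
        _ ≤ _ := by gcongr
    refine (Finset.prod_le_prod (fun l _ => by positivity) h1).trans ?_
    rw [Finset.prod_mul_distrib, ← Real.exp_sum, ← Finset.mul_sum]
    have hKr := hK r hr1 R
    calc _ ≤ Real.exp (9/4 * (1 + 1/δ) * K + 3 * K * n) * Real.exp (3 * K) := by gcongr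
      _ = _ := by rw [← Real.exp_add]; push_cast; ring_nf

theorem hh_contra {C : ℝ} (hC : 0 ≤ C) (hh0 : ∀ x, 1 < x → 0 ≤ hh C x) : False := by
  obtain ⟨A, B, hAB⟩ := prod_bound hC hh0
  set c := Real.exp 1 * ‖XX 0‖ ^ 2 * Real.exp A * Real.pi ^ 2 with hc
  set D := Real.pi ^ 2 * Real.exp (2 * B) with hD
  have hmain : ∀ k : ℕ, (k.factorial : ℝ) ≤ c * D ^ k := by
    intro k
    have h1 := XX_lower k
    obtain ⟨n, hn⟩ := XX_prod_bound hC hh0 (r := ((2 * k : ℕ):ℝ) + 3/2) (by positivity)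
    have h2 := hAB (2 * k) n
    have e : (((((2 * k : ℕ):ℝ) + 3/2 : ℝ)) : ℂ) = 2 * k + 3/2 := by push_cast; ring
    rw [e] at hn
    have h3 : ((k.factorial : ℝ) / Real.pi ^ (k + 1)) ^ 2 ≤ Real.exp 1 * ‖XX 0‖ ^ 2 * Real.exp (A + B * (2 * k : ℕ)) := by
      calc _ ≤ ‖XX (2 * k + 3/2)‖ ^ 2 := by gcongr
        _ ≤ _ := hn
        _ ≤ _ := by gcongr
    have hpi := Real.pi_pos
    rw [div_pow, div_le_iff₀ (by positivity)] at h3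
    have hk1 : (1:ℝ) ≤ k.factorial := by exact_mod_cast Nat.succ_le_of_lt k.factorial_pos
    calc (k.factorial : ℝ) ≤ (k.factorial : ℝ) ^ 2 := by nlinarith
      _ ≤ _ := h3
      _ = c * D ^ k := by
        have e2 : Real.exp (A + B * (2 * k : ℕ)) = Real.exp A * Real.exp (2 * B) ^ k := by
          rw [← Real.exp_nat_mul, ← Real.exp_add]; push_cast; ring_nf
        rw [e2, hc, hD, mul_pow]; ring
  have hlim := (FloorSemiring.tendsto_pow_div_factorial_atTop D).const_mul c
  rw [mul_zero] at hlim
  obtain ⟨k, hk⟩ := (hlim.eventually (gt_mem_nhds one_pos)).exists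
  have := hmain k
  have hkp : (0:ℝ) < k.factorial := by exact_mod_cast k.factorial_pos
  rw [← mul_div_assoc, div_lt_one hkp] at hk
  linarith

theorem theta_large (x0 : ℝ) : ∃ x ≥ x0, x < Chebyshev.theta x := by
  by_contra hcon
  push Not at hcon
  obtain ⟨C, hC⟩ := Chebyshev.psi_sub_theta_le_mul_sqrt
  set y := max x0 1 with hy
  have hpy : 0 ≤ Chebyshev.psi y := Chebyshev.psi_nonneg y
  refine hh_contra (C := |C| + Chebyshev.psi y) (by positivity) (fun x hx => ?_)
  unfold hh
  rw [← Real.sqrt_eq_rpow]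
  have hs : 1 ≤ √x := Real.one_le_sqrt.2 hx.le
  rcases le_total x y with h | h
  · have h1 := Chebyshev.psi_mono h
    have h2 := abs_nonneg C
    nlinarith
  · have h1 := hC x
    have h2 := hcon x ((le_max_left _ _).trans h)
    have h3 := le_abs_self C
    nlinarith

end LandauAux

end

/-- There are infinitely many positive integers n with P⁺(g(n)) < log g(n). -/
theorem stmt5 :
    {n : ℕ | 0 < n ∧ (maxPrimeFac (landau n) : ℝ) < Real.log (landau n)}.Infinite := by
  exact LandauAux.infinite_of_theta LandauAux.theta_large
end
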